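/- arXiv:1602.02961 — 7 statements merged into one kernel-verified Lean document; each statement's English description precedes it below -/
import Mathlib

section
/- Let Ω ⊆ ℝ² be an open set and u : Ω → ℝ² a smooth (C^∞) vector field such that |u(x)| = 1 for every x ∈ Ω and ∂₁u₂ − ∂₂u₁ = 0 in Ω. Then for every ξ = (ξ₁, ξ₂) ∈ S¹ and every φ ∈ C_c^∞(Ω), one has ∫_Ω χ(x, ξ) (ξ^⊥ · ∇φ(x)) dx = 0, where ξ^⊥ = (−ξ₂, ξ₁). -/
open MeasureTheory Metric Set Filter
open scoped RealInnerProductSpace ENNReal Topology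

noncomputable section

/-- `χ(x, ξ) = 1` if `u(x)·ξ > 0` and `0` otherwise. -/
def chi {N : ℕ} (u : EuclideanSpace ℝ (Fin N) → EuclideanSpace ℝ (Fin N))
    (x ξ : EuclideanSpace ℝ (Fin N)) : ℝ :=
  if 0 < ⟪u x, ξ⟫ then 1 else 0

/-- The kinetic formulation: for every unit direction `ξ`, every `v ⊥ ξ` and every
test function `φ ∈ C_c^∞(Ω)`, `∫_Ω χ(x,ξ) (v·∇φ(x)) dx = 0`. -/
def KineticFormulation {N : ℕ} (Ω : Set (EuclideanSpace ℝ (Fin N)))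
    (u : EuclideanSpace ℝ (Fin N) → EuclideanSpace ℝ (Fin N)) : Prop :=
  ∀ ξ : EuclideanSpace ℝ (Fin N), ‖ξ‖ = 1 →
    ∀ v : EuclideanSpace ℝ (Fin N), ⟪v, ξ⟫ = 0 →
      ∀ φ : EuclideanSpace ℝ (Fin N) → ℝ, ContDiff ℝ (⊤ : ℕ∞) φ → HasCompactSupport φ →
        tsupport φ ⊆ Ω →
        ∫ x in Ω, chi u x ξ * ⟪v, gradient φ x⟫ = 0

/-- `x₀` is a Lebesgue point of `f` with value `f₀`. -/
def IsLebesguePoint {E : Type*} [MeasureSpace E] [PseudoMetricSpace E]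
    {F : Type*} [NormedAddCommGroup F]
    (f : E → F) (x₀ : E) (f₀ : F) : Prop :=
  Tendsto (fun r : ℝ => ⨍ x in Metric.ball x₀ r, ‖f x - f₀‖) (𝓝[>] 0) (𝓝 0)


lemma st_deriv_zero_neg {s : ℝ} (hs : s < 0) : deriv Real.smoothTransition s = 0 := by
  have : Real.smoothTransition =ᶠ[𝓝 s] fun _ => (0 : ℝ) := by
    filter_upwards [gt_mem_nhds hs] with t ht
    exact Real.smoothTransition.zero_of_nonpos ht.le
  rw [this.deriv_eq]; simp

lemma st_deriv_zero_pos {s : ℝ} (hs : 1 < s) : deriv Real.smoothTransition s = 0 := by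
  have : Real.smoothTransition =ᶠ[𝓝 s] fun _ => (1 : ℝ) := by
    filter_upwards [lt_mem_nhds hs] with t ht
    exact Real.smoothTransition.one_of_one_le ht.le
  rw [this.deriv_eq]; simp

lemma st_bound : ∃ B : ℝ, ∀ s : ℝ, |deriv Real.smoothTransition s * s| ≤ B := by
  have hc : Continuous (deriv Real.smoothTransition) :=
    (Real.smoothTransition.contDiff (n := 1)).continuous_deriv (by norm_num)
  obtain ⟨B, hB⟩ := (isCompact_Icc (a := (0 : ℝ)) (b := 1)).exists_bound_of_continuousOn
    (f := fun s => deriv Real.smoothTransition s * s) (hc.mul continuous_id).continuousOn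
  have hB0 : 0 ≤ B := le_trans (norm_nonneg _) (hB 0 (by simp))
  refine ⟨B, fun s => ?_⟩
  rcases lt_or_ge s 0 with h | h
  · simp [st_deriv_zero_neg h, hB0]
  rcases lt_or_ge 1 s with h' | h'
  · simp [st_deriv_zero_pos h', hB0]
  · exact hB s ⟨h, h'⟩

/-- The derivative of a compactly supported `C^1` function has integral zero. -/
lemma integral_fderiv_zero (F : EuclideanSpace ℝ (Fin 2) → ℝ) (hF : ContDiff ℝ 1 F)
    (hc : HasCompactSupport F) (v : EuclideanSpace ℝ (Fin 2)) :
    ∫ x, fderiv ℝ F x v = 0 := by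
  have h := integral_mul_fderiv_eq_neg_fderiv_mul_of_integrable (𝕜 := ℝ)
    (μ := (volume : Measure (EuclideanSpace ℝ (Fin 2))))
    (f := F) (g := fun _ => (1 : ℝ)) (v := v) ?_ ?_ ?_
    (fun x _ => hF.differentiable (by norm_num) x) (by fun_prop)
  · simpa using h
  · simp only [mul_one]
    exact ((hF.continuous_fderiv (by norm_num)).clm_apply continuous_const).integrable_of_hasCompactSupport
      (hc.fderiv_apply (𝕜 := ℝ) v)
  · simp
  · simp only [mul_one]
    exact hF.continuous.integrable_of_hasCompactSupport hc

lemma key_algebra (a b p q r x y : ℝ) (h1 : a ^ 2 + b ^ 2 = 1) (hx : x ^ 2 + y ^ 2 = 1)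
    (e0 : a * p + b * q = 0) (e1 : a * q + b * r = 0) :
    (-y * p + x * q) * x + (-y * q + x * r) * y =
      (a * x + b * y) * ((a * x + b * y) * ((-y * p + x * q) * x + (-y * q + x * r) * y)
        - (-a * y + b * x) * ((x * p + y * q) * x + (x * q + y * r) * y)) := by
  have hfg : (a * x + b * y) ^ 2 + (-a * y + b * x) ^ 2 = 1 := by
    linear_combination (x ^ 2 + y ^ 2) * h1 + hx
  have h0 : (a * x + b * y) * ((x * p + y * q) * x + (x * q + y * r) * y)
     + (-a * y + b * x) * ((-y * p + x * q) * x + (-y * q + x * r) * y) = 0 := by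
    linear_combination (x * (x ^ 2 + y ^ 2)) * e0 + (y * (x ^ 2 + y ^ 2)) * e1
  linear_combination (-((-y * p + x * q) * x + (-y * q + x * r) * y)) * hfg
    + (-a * y + b * x) * h0

lemma deriv_factor
    (Ω : Set (EuclideanSpace ℝ (Fin 2))) (hΩ : IsOpen Ω)
    (u : EuclideanSpace ℝ (Fin 2) → EuclideanSpace ℝ (Fin 2))
    (hu : ContDiffOn ℝ (⊤ : ℕ∞) u Ω)
    (hunit : ∀ x ∈ Ω, ‖u x‖ = 1)
    (hcurl : ∀ x ∈ Ω,
      fderiv ℝ (fun y => u y 1) x (EuclideanSpace.single 0 1)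
        - fderiv ℝ (fun y => u y 0) x (EuclideanSpace.single 1 1) = 0)
    (ξ v : EuclideanSpace ℝ (Fin 2)) (hξ : ‖ξ‖ = 1) (hv0 : v 0 = - ξ 1) (hv1 : v 1 = ξ 0)
    (x : EuclideanSpace ℝ (Fin 2)) (hx : x ∈ Ω) :
    ⟪fderiv ℝ u x v, ξ⟫ = ⟪u x, ξ⟫ * (⟪u x, ξ⟫ * ⟪fderiv ℝ u x v, ξ⟫
      - ⟪u x, v⟫ * ⟪fderiv ℝ u x ξ, ξ⟫) := by
  have hd : DifferentiableAt ℝ u x :=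
    (hu.contDiffAt (hΩ.mem_nhds hx)).differentiableAt (by simp)
  have hcomp : ∀ i w, fderiv ℝ (fun y => u y i) x w = (fderiv ℝ u x w) i := by
    intro i w
    have := ((EuclideanSpace.proj i : EuclideanSpace ℝ (Fin 2) →L[ℝ] ℝ).hasFDerivAt.comp x
      hd.hasFDerivAt).fderiv
    have h2 := congrArg (fun T => T w) this
    simpa [Function.comp_def] using h2
  have hdec : ∀ w : EuclideanSpace ℝ (Fin 2), fderiv ℝ u x w =
      w 0 • fderiv ℝ u x (EuclideanSpace.single 0 1)
      + w 1 • fderiv ℝ u x (EuclideanSpace.single 1 1) := by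
    intro w
    rw [← map_smul, ← map_smul, ← map_add]
    congr 1
    ext i; fin_cases i <;> simp
  have horth : ∀ w, ⟪u x, fderiv ℝ u x w⟫ = 0 := by
    intro w
    have h1 := (hd.hasFDerivAt.inner ℝ hd.hasFDerivAt).fderiv
    have h2 : (fun y => ⟪u y, u y⟫) =ᶠ[𝓝 x] fun _ => (1 : ℝ) := by
      filter_upwards [hΩ.mem_nhds hx] with y hy
      rw [real_inner_self_eq_norm_sq, hunit y hy]; norm_num
    rw [h2.fderiv_eq] at h1
    have h3 := congrArg (fun T => T w) h1
    simp [real_inner_comm] at h3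
    linarith
  have hc := hcurl x hx
  rw [hcomp, hcomp] at hc
  have o0 := horth (EuclideanSpace.single 0 1)
  have o1 := horth (EuclideanSpace.single 1 1)
  have hn := hunit x hx
  have hn2 : ⟪u x, u x⟫ = 1 := by rw [real_inner_self_eq_norm_sq, hn]; norm_num
  have hξ2 : ⟪ξ, ξ⟫ = 1 := by rw [real_inner_self_eq_norm_sq, hξ]; norm_num
  rw [hdec v, hdec ξ]
  generalize fderiv ℝ u x (EuclideanSpace.single 0 1) = P at *
  generalize fderiv ℝ u x (EuclideanSpace.single 1 1) = Q at *
  generalize u x = U at *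
  simp only [PiLp.inner_apply, Fin.sum_univ_two, PiLp.add_apply, PiLp.smul_apply, smul_eq_mul,
    RCLike.inner_apply, conj_trivial, hv0, hv1] at *
  have hq : Q 0 = P 1 := by linarith
  rw [hq] at o1 ⊢
  have := key_algebra (U 0) (U 1) (P 0) (P 1) (Q 1) (ξ 0) (ξ 1) (by linarith) (by linarith)
    (by linarith) (by linarith)
  linear_combination this

theorem kinetic_formulation_2d
    (Ω : Set (EuclideanSpace ℝ (Fin 2))) (hΩ : IsOpen Ω)
    (u : EuclideanSpace ℝ (Fin 2) → EuclideanSpace ℝ (Fin 2))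
    (hu : ContDiffOn ℝ (⊤ : ℕ∞) u Ω)
    (hunit : ∀ x ∈ Ω, ‖u x‖ = 1)
    (hcurl : ∀ x ∈ Ω,
      fderiv ℝ (fun y => u y 1) x (EuclideanSpace.single 0 1)
        - fderiv ℝ (fun y => u y 0) x (EuclideanSpace.single 1 1) = 0)
    (ξ : EuclideanSpace ℝ (Fin 2)) (hξ : ‖ξ‖ = 1)
    (φ : EuclideanSpace ℝ (Fin 2) → ℝ) (hφ : ContDiff ℝ (⊤ : ℕ∞) φ)
    (hsupp : HasCompactSupport φ) (hsub : tsupport φ ⊆ Ω) :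
    ∫ x in Ω, chi u x ξ *
      ⟪(WithLp.equiv 2 (Fin 2 → ℝ)).symm ![-ξ 1, ξ 0], gradient φ x⟫ = 0 := by
  set v : EuclideanSpace ℝ (Fin 2) := (WithLp.equiv 2 (Fin 2 → ℝ)).symm ![-ξ 1, ξ 0] with hv
  have hv0 : v 0 = - ξ 1 := by simp [hv]
  have hv1 : v 1 = ξ 0 := by simp [hv]
  clear_value v
  have hfac := deriv_factor Ω hΩ u hu hunit hcurl ξ v hξ hv0 hv1
  have hgrad : ∀ x, ⟪v, gradient φ x⟫ = fderiv ℝ φ x v := by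
    intro x
    rw [real_inner_comm, gradient, InnerProductSpace.toDual_symm_apply]
  simp only [hgrad]
  set E : EuclideanSpace ℝ (Fin 2) → ℝ := fun x => ⟪u x, ξ⟫ * ⟪fderiv ℝ u x v, ξ⟫
      - ⟪u x, v⟫ * ⟪fderiv ℝ u x ξ, ξ⟫ with hE
  have hucont : ContinuousOn u Ω := hu.continuousOn
  have hdcont : ContinuousOn (fderiv ℝ u) Ω := hu.continuousOn_fderiv_of_isOpen hΩ (by simp)
  have hEc : ContinuousOn E Ω := by
    have hw : ∀ w, ContinuousOn (fun x => fderiv ℝ u x w) Ω := fun w =>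
      hdcont.clm_apply continuousOn_const
    have := hw v
    have := hw ξ
    fun_prop
  obtain ⟨B, hB⟩ := st_bound
  obtain ⟨M, hM⟩ := hsupp.isCompact.exists_bound_of_continuousOn
    (f := fun x => φ x * E x) (hφ.continuous.continuousOn.mul (hEc.mono hsub))
  have hφ'c : Continuous (fun x => fderiv ℝ φ x v) :=
    (hφ.continuous_fderiv (by simp)).clm_apply continuous_const
  obtain ⟨A, hA⟩ := hsupp.isCompact.exists_bound_of_continuousOn
    (f := fun x => fderiv ℝ φ x v) hφ'c.continuousOn
  set h := Real.smoothTransition with hh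
  set F : ℕ → EuclideanSpace ℝ (Fin 2) → ℝ := fun n x => φ x * h (n * ⟪u x, ξ⟫) with hF
  have hoff : ∀ n x, x ∉ tsupport φ → F n =ᶠ[𝓝 x] fun _ => (0 : ℝ) := by
    intro n x hx
    filter_upwards [notMem_tsupport_iff_eventuallyEq.mp hx] with y hy
    simp [hF, hy]
  have hFs : ∀ n, ContDiff ℝ 1 (F n) := by
    intro n
    rw [contDiff_iff_contDiffAt]
    intro x
    by_cases hx : x ∈ tsupport φ
    · have hux : ContDiffAt ℝ 1 u x :=
        (hu.contDiffAt (hΩ.mem_nhds (hsub hx))).of_le (by exact_mod_cast le_top)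
      have hφx : ContDiffAt ℝ 1 φ x := hφ.contDiffAt.of_le (by exact_mod_cast le_top)
      refine hφx.mul ?_
      exact (Real.smoothTransition.contDiffAt (n := 1)).comp x
        (contDiffAt_const.mul (hux.inner ℝ contDiffAt_const))
    · exact contDiffAt_const.congr_of_eventuallyEq (hoff n x hx)
  have hFc : ∀ n, HasCompactSupport (F n) := fun n => hsupp.mul_right
  have hzero : ∀ n x, x ∉ tsupport φ → fderiv ℝ (F n) x v = 0 := by
    intro n x hx
    rw [(hoff n x hx).fderiv_eq]; simp
  have hder : ∀ n, ∀ x ∈ Ω, fderiv ℝ (F n) x v =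
      h (n * ⟪u x, ξ⟫) * fderiv ℝ φ x v
        + (deriv h (n * ⟪u x, ξ⟫) * (n * ⟪u x, ξ⟫)) * (φ x * E x) := by
    intro n x hx
    have hd : DifferentiableAt ℝ u x :=
      (hu.contDiffAt (hΩ.mem_nhds hx)).differentiableAt (by simp)
    have hφd : HasFDerivAt φ (fderiv ℝ φ x) x := (hφ.differentiable (by simp) x).hasFDerivAt
    have h1 := (hd.hasFDerivAt.inner ℝ (hasFDerivAt_const ξ x)).const_mul (n : ℝ)
    have h2 : HasDerivAt h (deriv h (n * ⟪u x, ξ⟫)) (n * ⟪u x, ξ⟫) :=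
      ((Real.smoothTransition.contDiff (n := 1)).differentiable (by norm_num) _).hasDerivAt
    have h3 := hφd.mul (h2.comp_hasFDerivAt x h1)
    have h4 : fderiv ℝ (F n) x = _ := h3.fderiv
    rw [h4]
    simp
    rw [hfac x hx]
    simp only [hE]
    ring
  have hintz : ∀ n, ∫ x in Ω, fderiv ℝ (F n) x v = 0 := by
    intro n
    rw [setIntegral_eq_integral_of_forall_compl_eq_zero]
    · exact integral_fderiv_zero _ (hFs n) (hFc n) v
    · exact fun x hx => hzero n x fun hx' => hx (hsub hx')
  have hlim : Tendsto (fun n : ℕ => ∫ x in Ω, fderiv ℝ (F n) x v) atTop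
      (𝓝 (∫ x in Ω, chi u x ξ * fderiv ℝ φ x v)) := by
    apply tendsto_integral_of_dominated_convergence
      (bound := (tsupport φ).indicator fun _ => A + B * M)
    · intro n
      exact (((hFs n).continuous_fderiv (by norm_num)).clm_apply
        continuous_const).aestronglyMeasurable
    · apply Integrable.integrableOn
      rw [integrable_indicator_iff (isClosed_tsupport φ).measurableSet]
      exact continuousOn_const.integrableOn_compact hsupp.isCompact
    · intro n
      refine Eventually.of_forall fun x => ?_
      by_cases hx : x ∈ tsupport φ
      · rw [indicator_of_mem hx, hder n x (hsub hx)]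
        refine (norm_add_le _ _).trans (add_le_add ?_ ?_)
        · rw [norm_mul]
          have e1 : ‖h (n * ⟪u x, ξ⟫)‖ ≤ 1 := by
            rw [Real.norm_eq_abs, abs_of_nonneg (Real.smoothTransition.nonneg _)]
            exact Real.smoothTransition.le_one _
          calc _ ≤ 1 * ‖fderiv ℝ φ x v‖ := by gcongr
            _ ≤ A := by rw [one_mul]; exact hA x hx
        · rw [norm_mul]
          exact mul_le_mul (hB _) (hM x hx) (norm_nonneg _) ((abs_nonneg _).trans (hB 0))
      · rw [indicator_of_notMem hx, hzero n x hx]; simp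
    · rw [ae_restrict_iff' hΩ.measurableSet]
      refine Eventually.of_forall fun x hx => ?_
      apply tendsto_const_nhds.congr'
      rcases lt_trichotomy ⟪u x, ξ⟫ 0 with hf | hf | hf
      · filter_upwards [eventually_gt_atTop 0] with n hn
        have hn' : (0 : ℝ) < n := by exact_mod_cast hn
        have hneg : n * ⟪u x, ξ⟫ < 0 := mul_neg_of_pos_of_neg hn' hf
        rw [hder n x hx, st_deriv_zero_neg hneg, hh,
          Real.smoothTransition.zero_of_nonpos hneg.le, chi, if_neg hf.le.not_gt]
        ring
      · refine Eventually.of_forall fun n => ?_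
        show chi u x ξ * fderiv ℝ φ x v = fderiv ℝ (F n) x v
        rw [hder n x hx, chi, hf]
        simp [hh]
      · have ht : Tendsto (fun n : ℕ => (n : ℝ) * ⟪u x, ξ⟫) atTop atTop :=
          tendsto_natCast_atTop_atTop.atTop_mul_const hf
        filter_upwards [ht.eventually_gt_atTop 1] with n hn
        rw [hder n x hx, st_deriv_zero_pos hn, hh,
          Real.smoothTransition.one_of_one_le hn.le, chi, if_pos hf]
        ring
  simp only [hintz] at hlim
  exact tendsto_nhds_unique hlim tendsto_const_nhds
end
end

section
/- Let Ω = {x = (x₁, x₂, x₃) ∈ ℝ³ : x₂ > 1} and u₀(x) = (x₁, x₂, 0)/√(x₁² + x₂²). Then u₀ is smooth on Ω, |u₀| = 1 on Ω, and u₀ is curl-free on Ω; nevertheless u₀ does not satisfy the kinetic formulation: for ξ = (1, 0, 1)/√2 and v = (−1, 0, 1)/√2 (so that v·ξ = 0), there exists φ ∈ C_c^∞(Ω) with ∫_Ω χ(x, ξ) (v·∇φ(x)) dx ≠ 0, where χ(x, ξ) = 1 if u₀(x)·ξ > 0 and χ(x, ξ) = 0 otherwise. -/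
open MeasureTheory Metric Set Filter
open scoped RealInnerProductSpace ENNReal Topology

noncomputable section

/-- The half-space . -/
def Omega3 : Set (EuclideanSpace ℝ (Fin 3)) := {x | 1 < x 1}

/-- The vortex-line vector field . -/
def u0 (x : EuclideanSpace ℝ (Fin 3)) : EuclideanSpace ℝ (Fin 3) :=
  (WithLp.equiv 2 (Fin 3 → ℝ)).symm
    ![x 0 / Real.sqrt (x 0 ^ 2 + x 1 ^ 2), x 1 / Real.sqrt (x 0 ^ 2 + x 1 ^ 2), 0]

/-- . -/
def xi3 : EuclideanSpace ℝ (Fin 3) :=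
  (WithLp.equiv 2 (Fin 3 → ℝ)).symm ![1 / Real.sqrt 2, 0, 1 / Real.sqrt 2]

/-- . -/
def v3 : EuclideanSpace ℝ (Fin 3) :=
  (WithLp.equiv 2 (Fin 3 → ℝ)).symm ![-(1 / Real.sqrt 2), 0, 1 / Real.sqrt 2]


lemma omega_s_pos {x : EuclideanSpace ℝ (Fin 3)} (hx : x ∈ Omega3) :
    0 < x 0 ^ 2 + x 1 ^ 2 := by
  have : 1 < x 1 := hx
  positivity

lemma u0_zero (x : EuclideanSpace ℝ (Fin 3)) :
    u0 x 0 = x 0 / Real.sqrt (x 0 ^ 2 + x 1 ^ 2) := by simp [u0]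

lemma u0_one (x : EuclideanSpace ℝ (Fin 3)) :
    u0 x 1 = x 1 / Real.sqrt (x 0 ^ 2 + x 1 ^ 2) := by simp [u0]

lemma u0_two (x : EuclideanSpace ℝ (Fin 3)) : u0 x 2 = 0 := by simp [u0]

lemma u0_contDiffOn : ContDiffOn ℝ (⊤ : ℕ∞) u0 Omega3 := by
  rw [contDiffOn_euclidean]
  have h : ∀ j : Fin 3, ContDiffOn ℝ (⊤ : ℕ∞)
      (fun x : EuclideanSpace ℝ (Fin 3) => x j / Real.sqrt (x 0 ^ 2 + x 1 ^ 2)) Omega3 := by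
    intro j
    have hc : ∀ i : Fin 3, ContDiffOn ℝ (⊤ : ℕ∞)
        (fun x : EuclideanSpace ℝ (Fin 3) => x i) Omega3 := fun i =>
      (EuclideanSpace.proj (𝕜 := ℝ) i : EuclideanSpace ℝ (Fin 3) →L[ℝ] ℝ).contDiff.contDiffOn
    refine (hc j).div ((((hc 0).pow 2).add ((hc 1).pow 2)).sqrt ?_) ?_
    · intro x hx
      exact (omega_s_pos hx).ne'
    · intro x hx
      exact (Real.sqrt_pos.2 (omega_s_pos hx)).ne'
  intro i
  fin_cases i
  · simpa [u0_zero] using h 0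
  · simpa [u0_one] using h 1
  · simpa [u0_two] using contDiffOn_const

lemma u0_norm (x : EuclideanSpace ℝ (Fin 3)) (hx : x ∈ Omega3) : ‖u0 x‖ = 1 := by
  have hs := omega_s_pos hx
  rw [EuclideanSpace.norm_eq, Fin.sum_univ_three, u0_zero, u0_one, u0_two]
  simp only [Real.norm_eq_abs, sq_abs, div_pow, Real.sq_sqrt hs.le]
  rw [← add_div, zero_pow two_ne_zero, add_zero, div_self hs.ne', Real.sqrt_one]

lemma u0_fderiv (x : EuclideanSpace ℝ (Fin 3)) (hx : x ∈ Omega3) (j : Fin 3)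
    (w : EuclideanSpace ℝ (Fin 3)) :
    fderiv ℝ (fun y : EuclideanSpace ℝ (Fin 3) => y j / Real.sqrt (y 0 ^ 2 + y 1 ^ 2)) x w
      = w j / Real.sqrt (x 0 ^ 2 + x 1 ^ 2)
        - x j * (x 0 * w 0 + x 1 * w 1) /
          ((x 0 ^ 2 + x 1 ^ 2) * Real.sqrt (x 0 ^ 2 + x 1 ^ 2)) := by
  have hs := omega_s_pos hx
  have hr := Real.sqrt_pos.2 hs
  have hc : ∀ i : Fin 3, HasFDerivAt (fun y : EuclideanSpace ℝ (Fin 3) => y i)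
      (EuclideanSpace.proj (𝕜 := ℝ) i : EuclideanSpace ℝ (Fin 3) →L[ℝ] ℝ) x := fun i =>
    (EuclideanSpace.proj (𝕜 := ℝ) i : EuclideanSpace ℝ (Fin 3) →L[ℝ] ℝ).hasFDerivAt
  have h1 := (((hc 0).pow 2).add ((hc 1).pow 2)).sqrt hs.ne'
  have h2 := (hc j).mul ((hasDerivAt_inv hr.ne').comp_hasFDerivAt x h1)
  have h3 : (fun y : EuclideanSpace ℝ (Fin 3) => y j / Real.sqrt (y 0 ^ 2 + y 1 ^ 2))
    = ((fun y : EuclideanSpace ℝ (Fin 3) => y j) *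
      (Inv.inv ∘ fun y : EuclideanSpace ℝ (Fin 3) => Real.sqrt (y 0 ^ 2 + y 1 ^ 2))) := by
    funext y
    simp [div_eq_mul_inv]
  rw [h3]
  refine (congrArg (fun L => L w) h2.fderiv).trans ?_
  simp
  rw [Real.sq_sqrt hs.le]
  field_simp
  ring

lemma u0_curl (x : EuclideanSpace ℝ (Fin 3)) (hx : x ∈ Omega3) (i j : Fin 3) :
      fderiv ℝ (fun y => u0 y j) x (EuclideanSpace.single i 1)
        = fderiv ℝ (fun y => u0 y i) x (EuclideanSpace.single j 1) := by
  fin_cases i <;> fin_cases j <;>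
    simp [u0_zero, u0_one, u0_two, u0_fderiv x hx] <;> ring

/-- one-dimensional bump -/
def bmp : ContDiffBump (0 : ℝ) := ⟨1 / 2, 1, by norm_num, by norm_num⟩

lemma bmp_zero {t : ℝ} (h : 1 ≤ |t|) : bmp t = 0 := by
  apply bmp.zero_of_le_dist
  simpa [bmp, Real.dist_eq] using h

lemma bmp_contDiff : ContDiff ℝ (⊤ : ℕ∞) (fun t => bmp t) := bmp.contDiff

lemma bmp_hasDeriv (t : ℝ) : HasDerivAt (fun t => bmp t) (deriv (fun t => bmp t) t) t :=
  (bmp_contDiff.differentiable (by simp) t).hasDerivAt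

lemma bmp_deriv_cont : Continuous (deriv (fun t => bmp t)) :=
  bmp_contDiff.continuous_deriv (by simp)

lemma bmp_deriv_supp : HasCompactSupport (deriv (fun t => bmp t)) :=
  HasCompactSupport.deriv bmp.hasCompactSupport

lemma bmp_deriv_int : Integrable (deriv (fun t => bmp t)) :=
  bmp_deriv_cont.integrable_of_hasCompactSupport bmp_deriv_supp

lemma bmp_int : Integrable (fun t => bmp t) :=
  bmp.continuous.integrable_of_hasCompactSupport bmp.hasCompactSupport

lemma bmp_integral_deriv : ∫ t, deriv (fun t => bmp t) t = 0 :=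
  integral_eq_zero_of_hasDerivAt_of_integrable bmp_hasDeriv bmp_deriv_int bmp_int

lemma bmp_integral_deriv_Ioi : ∫ t in Ioi (0 : ℝ), deriv (fun t => bmp t) t = -1 := by
  have h0 : bmp 0 = 1 := bmp.one_of_mem_closedBall (by simp [bmp])
  have := integral_Ioi_of_hasDerivAt_of_tendsto' (a := (0 : ℝ)) (m := (0 : ℝ))
    (fun t _ => bmp_hasDeriv t) bmp_deriv_int.integrableOn ?_
  · rw [this, h0]; norm_num
  · apply tendsto_const_nhds.congr'
    filter_upwards [eventually_ge_atTop 1] with t ht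
    exact (bmp_zero (ht.trans (le_abs_self t))).symm

/-- the test function -/
def tst (x : EuclideanSpace ℝ (Fin 3)) : ℝ := bmp (x 0) * bmp (x 1 - 3) * bmp (x 2)

lemma tst_contDiff : ContDiff ℝ (⊤ : ℕ∞) tst := by
  have hc : ∀ i : Fin 3, ContDiff ℝ (⊤ : ℕ∞)
      (fun x : EuclideanSpace ℝ (Fin 3) => x i) := fun i =>
    (EuclideanSpace.proj (𝕜 := ℝ) i : EuclideanSpace ℝ (Fin 3) →L[ℝ] ℝ).contDiff
  exact ((bmp_contDiff.comp (hc 0)).mul (bmp_contDiff.comp ((hc 1).sub contDiff_const))).mul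
    (bmp_contDiff.comp (hc 2))

lemma tst_compact : HasCompactSupport tst := by
  have hK : IsCompact ((EuclideanSpace.equiv (Fin 3) ℝ).toHomeomorph ⁻¹'
      (Icc (fun _ => -10) (fun _ => 10))) :=
    (Homeomorph.isCompact_preimage _).2 isCompact_Icc
  refine HasCompactSupport.intro hK ?_
  intro x hx
  by_contra hne
  apply hx
  have h0 : |x 0| < 1 := by
    by_contra h
    exact hne (by simp [tst, bmp_zero (not_lt.1 h)])
  have h1 : |x 1 - 3| < 1 := by
    by_contra h
    exact hne (by simp [tst, bmp_zero (not_lt.1 h)])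
  have h2 : |x 2| < 1 := by
    by_contra h
    exact hne (by simp [tst, bmp_zero (not_lt.1 h)])
  rw [abs_lt] at h0 h1 h2
  simp only [mem_preimage, mem_Icc, Pi.le_def]
  constructor <;> intro i <;> fin_cases i <;> simp <;> linarith

lemma tst_tsupport : tsupport tst ⊆ Omega3 := by
  have : tsupport tst ⊆ {x : EuclideanSpace ℝ (Fin 3) | 2 ≤ x 1} := by
    apply closure_minimal
    · intro x hx
      by_contra h
      apply hx
      have h' : x 1 < 2 := not_le.1 h
      have : bmp (x 1 - 3) = 0 := bmp_zero (by rw [le_abs]; right; linarith)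
      simp [tst, this]
    · exact isClosed_le continuous_const
        (EuclideanSpace.proj (𝕜 := ℝ) 1 : EuclideanSpace ℝ (Fin 3) →L[ℝ] ℝ).continuous
  intro x hx
  have h2 : 2 ≤ x 1 := this hx
  show 1 < x 1
  linarith

lemma tst_grad (x : EuclideanSpace ℝ (Fin 3)) :
    ⟪v3, gradient tst x⟫ = 1 / Real.sqrt 2 *
      (bmp (x 0) * bmp (x 1 - 3) * deriv (fun t => bmp t) (x 2)
        - deriv (fun t => bmp t) (x 0) * bmp (x 1 - 3) * bmp (x 2)) := by
  have hc : ∀ i : Fin 3, HasFDerivAt (fun y : EuclideanSpace ℝ (Fin 3) => y i)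
      (EuclideanSpace.proj (𝕜 := ℝ) i : EuclideanSpace ℝ (Fin 3) →L[ℝ] ℝ) x := fun i =>
    (EuclideanSpace.proj (𝕜 := ℝ) i : EuclideanSpace ℝ (Fin 3) →L[ℝ] ℝ).hasFDerivAt
  have h0 := (bmp_hasDeriv (x 0)).comp_hasFDerivAt x (hc 0)
  have h1 := (bmp_hasDeriv (x 1 - 3)).comp_hasFDerivAt x ((hc 1).sub_const 3)
  have h2 := (bmp_hasDeriv (x 2)).comp_hasFDerivAt x (hc 2)
  have h3 : HasFDerivAt tst _ x := (h0.mul h1).mul h2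
  rw [real_inner_comm, gradient, InnerProductSpace.toDual_symm_apply, h3.fderiv]
  simp [v3]
  ring

lemma chi_eq (x : EuclideanSpace ℝ (Fin 3)) (hx : x ∈ Omega3) :
    chi u0 x xi3 = (Ioi (0 : ℝ)).indicator 1 (x 0) := by
  have hr := Real.sqrt_pos.2 (omega_s_pos hx)
  have h2 : 0 < Real.sqrt 2 := by positivity
  have : ⟪u0 x, xi3⟫ = x 0 / (Real.sqrt (x 0 ^ 2 + x 1 ^ 2) * Real.sqrt 2) := by
    simp [PiLp.inner_apply, Fin.sum_univ_three, u0, xi3]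
    field_simp
  have hpos : (0 < ⟪u0 x, xi3⟫) ↔ 0 < x 0 := by
    rw [this, div_pos_iff_of_pos_right (by positivity)]
  simp only [chi, hpos, Set.indicator, mem_Ioi, Pi.one_apply]

lemma prod_int (f : Fin 3 → ℝ → ℝ) (hf : ∀ i, Integrable (f i)) :
    Integrable (fun x : EuclideanSpace ℝ (Fin 3) => f 0 (x 0) * f 1 (x 1) * f 2 (x 2)) ∧
    ∫ x : EuclideanSpace ℝ (Fin 3), f 0 (x 0) * f 1 (x 1) * f 2 (x 2)
      = (∫ t, f 0 t) * (∫ t, f 1 t) * ∫ t, f 2 t := by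
  have hm := EuclideanSpace.volume_preserving_symm_measurableEquiv_toLp (Fin 3)
  have hi := Integrable.fintype_prod (μ := fun _ => volume) hf
  have he := integral_fintype_prod_volume_eq_prod f
  simp only [Fin.prod_univ_three] at hi he
  constructor
  · exact (hm.integrable_comp_emb (MeasurableEquiv.measurableEmbedding _)).2 hi
  · rw [← he]
    exact hm.integral_comp' (fun y : Fin 3 → ℝ => f 0 (y 0) * f 1 (y 1) * f 2 (y 2))

lemma main_integral :
    ∫ x in Omega3, chi u0 x xi3 * ⟪v3, gradient tst x⟫ ≠ 0 := by
  have hmeas : MeasurableSet Omega3 := by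
    refine (isOpen_lt continuous_const
      (EuclideanSpace.proj (𝕜 := ℝ) 1 : EuclideanSpace ℝ (Fin 3) →L[ℝ] ℝ).continuous).measurableSet
  set F : Fin 3 → ℝ → ℝ := ![(Ioi (0 : ℝ)).indicator (fun t => bmp t), fun t => bmp (t - 3),
    deriv (fun t => bmp t)] with hF
  set G : Fin 3 → ℝ → ℝ := ![(Ioi (0 : ℝ)).indicator (deriv (fun t => bmp t)),
    fun t => bmp (t - 3), fun t => bmp t] with hG
  have hFi : ∀ i, Integrable (F i) := by
    intro i
    fin_cases i
    · exact bmp_int.indicator measurableSet_Ioi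
    · exact bmp_int.comp_sub_right 3
    · exact bmp_deriv_int
  have hGi : ∀ i, Integrable (G i) := by
    intro i
    fin_cases i
    · exact bmp_deriv_int.indicator measurableSet_Ioi
    · exact bmp_int.comp_sub_right 3
    · exact bmp_int
  obtain ⟨iF, eF⟩ := prod_int F hFi
  obtain ⟨iG, eG⟩ := prod_int G hGi
  have h1 : ∫ x in Omega3, chi u0 x xi3 * ⟪v3, gradient tst x⟫
      = ∫ x in Omega3, 1 / Real.sqrt 2 * (F 0 (x 0) * F 1 (x 1) * F 2 (x 2)
        - G 0 (x 0) * G 1 (x 1) * G 2 (x 2)) := by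
    apply setIntegral_congr_fun hmeas
    intro x hx
    simp only [chi_eq x hx, tst_grad]
    simp only [hF, hG, Set.indicator]
    by_cases h : 0 < x 0 <;> simp [h]
  rw [h1, setIntegral_eq_integral_of_forall_compl_eq_zero, integral_const_mul,
    integral_sub iF iG, eF, eG]
  · have hp : 0 < ∫ t, bmp t := bmp.integral_pos
    have e0 : ∫ t, F 2 t = 0 := bmp_integral_deriv
    have e1 : ∫ t, G 0 t = -1 := by
      rw [← bmp_integral_deriv_Ioi]
      exact integral_indicator measurableSet_Ioi
    have e2 : ∫ t, G 1 t = ∫ t, bmp t := integral_sub_right_eq_self (fun t => bmp t) 3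
    have e3 : ∫ t, G 2 t = ∫ t, bmp t := rfl
    rw [e0, e1, e2, e3]
    apply ne_of_gt
    have h2 : 0 < Real.sqrt 2 := by positivity
    have : 0 < 1 / Real.sqrt 2 * ((∫ t, bmp t) * ∫ t, bmp t) := by positivity
    linarith
  · intro x hx
    have h' : x 1 ≤ 1 := not_lt.1 hx
    have : bmp (x 1 - 3) = 0 := bmp_zero (by rw [le_abs]; right; linarith)
    simp [hF, hG, this]


theorem vortex_line_counterexample :
    ContDiffOn ℝ (⊤ : ℕ∞) u0 Omega3 ∧
    (∀ x ∈ Omega3, ‖u0 x‖ = 1) ∧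
    (∀ x ∈ Omega3, ∀ i j : Fin 3,
      fderiv ℝ (fun y => u0 y j) x (EuclideanSpace.single i 1)
        = fderiv ℝ (fun y => u0 y i) x (EuclideanSpace.single j 1)) ∧
    ⟪v3, xi3⟫ = 0 ∧
    ∃ φ : EuclideanSpace ℝ (Fin 3) → ℝ, ContDiff ℝ (⊤ : ℕ∞) φ ∧ HasCompactSupport φ ∧
      tsupport φ ⊆ Omega3 ∧
      ∫ x in Omega3, chi u0 x xi3 * ⟪v3, gradient φ x⟫ ≠ 0 := by


  refine ⟨u0_contDiffOn, u0_norm, u0_curl, ?_, tst, tst_contDiff, tst_compact, tst_tsupport,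
    main_integral⟩
  simp [PiLp.inner_apply, Fin.sum_univ_three, v3, xi3]
end
end

section
/- Let N ≥ 3, Ω ⊆ ℝ^N an open set, and ψ : Ω → ℝ a smooth function such that the gradient field u = ∇ψ satisfies the kinetic formulation. Assume that for some α ∈ ℝ, |∇ψ(x)| ≠ 0 for every x in the level set {x ∈ Ω : ψ(x) = α}, and let S be a connected component of this level set. Then S is locally contained in a sphere or a hyperplane: for every x ∈ S there exists an open neighborhood U of x such that either S ∩ U is contained in some Euclidean sphere {y ∈ ℝ^N : |y − c| = R} (c ∈ ℝ^N, R > 0), or S ∩ U is contained in some affine hyperplane {y ∈ ℝ^N : y·ν = c} (ν ∈ S^{N−1}, c ∈ ℝ). -/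
open MeasureTheory Metric Set Filter
open scoped RealInnerProductSpace ENNReal Topology

noncomputable section

theorem level_const_aux {E F : Type*} [NormedAddCommGroup E] [InnerProductSpace ℝ E] [CompleteSpace E]
    [NormedAddCommGroup F] [NormedSpace ℝ F] (ψ : E → ℝ) (g : E → F) (x : E)
    (hψ : ContDiffAt ℝ 1 ψ x) (e : E) (he : fderiv ℝ ψ x e = 1)
    (hg : ∀ᶠ y in 𝓝 x, DifferentiableAt ℝ g y)
    (h : ∀ᶠ y in 𝓝 x, ψ y = ψ x → ∀ a, fderiv ℝ ψ y a = 0 → fderiv ℝ g y a = 0) :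
    ∀ᶠ y in 𝓝 x, ψ y = ψ x → g y = g x := by
  set l := fderiv ℝ ψ x with hl
  set Φ : E → E := fun y => y + (ψ y - l y) • e with hΦ
  have hlΦ : ∀ y, l (Φ y) = ψ y := by
    intro y; simp [hΦ, he]
  have hΦc : ContDiffAt ℝ 1 Φ x :=
    contDiffAt_id.add ((hψ.sub l.contDiff.contDiffAt).smul contDiffAt_const)
  have hψd : HasFDerivAt ψ l x := (hψ.differentiableAt (by norm_num)).hasFDerivAt
  have hΦd : HasFDerivAt Φ ((ContinuousLinearEquiv.refl ℝ E : E ≃L[ℝ] E) : E →L[ℝ] E) x := by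
    have := (hasFDerivAt_id (𝕜 := ℝ) x).add ((hψd.sub l.hasFDerivAt).smul_const e)
    refine this.congr_fderiv ?_
    ext v; simp
  have hst := hΦc.hasStrictFDerivAt' hΦd (by norm_num)
  set Ψ := hΦc.localInverse hΦd (by norm_num) with hΨ
  have hΨc : ContDiffAt ℝ 1 Ψ (Φ x) := hΦc.to_localInverse hΦd (by norm_num)
  have hr : ∀ᶠ z in 𝓝 (Φ x), Φ (Ψ z) = z := hst.eventually_right_inverse
  have hli : ∀ᶠ y in 𝓝 x, Ψ (Φ y) = y := hst.eventually_left_inverse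
  have ht : Tendsto Ψ (𝓝 (Φ x)) (𝓝 x) := hst.localInverse_tendsto
  have hψe : ∀ᶠ y in 𝓝 x, DifferentiableAt ℝ ψ y :=
    (hψ.eventually (by simp)).mono fun y hy => hy.differentiableAt (by norm_num)
  have hΨe : ∀ᶠ z in 𝓝 (Φ x), DifferentiableAt ℝ Ψ z :=
    (hΨc.eventually (by simp)).mono fun y hy => hy.differentiableAt (by norm_num)
  have hall := hr.and (hΨe.and ((ht.eventually hψe).and ((ht.eventually hg).and (ht.eventually h))))
  obtain ⟨r, hr0, hB⟩ := Metric.eventually_nhds_iff_ball.1 hall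
  have hxl := hli.self_of_nhds
  filter_upwards [hli, hΦd.continuousAt (Metric.ball_mem_nhds _ hr0)] with y hy1 hy2 hy3
  have hy2' : Φ y ∈ ball (Φ x) r := hy2
  set z := Φ y
  set z0 := Φ x
  have hlz : l (z - z0) = 0 := by rw [map_sub, hlΦ, hlΦ, hy3, sub_self]
  have hmem : ∀ t ∈ Icc (0:ℝ) 1, z0 + t • (z - z0) ∈ ball z0 r := by
    intro t ht
    have : ‖z - z0‖ < r := by simpa [dist_eq_norm] using hy2'
    rw [mem_ball, dist_eq_norm, add_sub_cancel_left, norm_smul, Real.norm_of_nonneg ht.1]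
    nlinarith [ht.2, norm_nonneg (z - z0)]
  have hder : ∀ t ∈ Icc (0:ℝ) 1,
      HasDerivAt (fun t : ℝ => g (Ψ (z0 + t • (z - z0)))) 0 t := by
    intro t ht
    obtain ⟨h1, h2, h3, h4, h5⟩ := hB _ (hmem t ht)
    have hp : HasDerivAt (fun t : ℝ => z0 + t • (z - z0)) (z - z0) t := by
      simpa using ((hasDerivAt_id t).smul_const (z - z0)).const_add z0
    have hp2 := h2.hasFDerivAt.comp_hasDerivAt t hp
    have hp3 := h4.hasFDerivAt.comp_hasDerivAt t hp2
    have hp4 := h3.hasFDerivAt.comp _ h2.hasFDerivAt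
    have hp5 : HasFDerivAt (ψ ∘ Ψ) l (z0 + t • (z - z0)) := by
      refine l.hasFDerivAt.congr_of_eventuallyEq ?_
      filter_upwards [isOpen_ball.mem_nhds (hmem t ht)] with w hw
      have := (hB w hw).1
      simp only [Function.comp]
      rw [← hlΦ, this]
    have hp6 := hp4.unique hp5
    have h7 : fderiv ℝ ψ (Ψ (z0 + t • (z - z0)))
        (fderiv ℝ Ψ (z0 + t • (z - z0)) (z - z0)) = 0 := by
      have := DFunLike.congr_fun hp6 (z - z0)
      rw [hlz] at this
      simpa using this
    have h8 : ψ (Ψ (z0 + t • (z - z0))) = ψ x := by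
      rw [← hlΦ, h1, map_add, map_smul, hlz, smul_zero, add_zero, hlΦ]
    have h9 := h5 h8 _ h7
    rw [h9] at hp3
    exact hp3
  have := constant_of_has_deriv_right_zero (f := fun t : ℝ => g (Ψ (z0 + t • (z - z0))))
    (a := 0) (b := 1)
    (fun t ht => (hder t ht).continuousAt.continuousWithinAt)
    (fun t ht => (hder t ⟨ht.1, ht.2.le⟩).hasDerivWithinAt) 1 (by simp)
  simpa [hy1, hxl] using this

theorem hasDerivAt_glue_aux (s : ℝ) :
    HasDerivAt expNegInvGlue ((s⁻¹) ^ 2 * expNegInvGlue s) s := by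
  have := expNegInvGlue.hasDerivAt_polynomial_eval_inv_mul 1 s
  simpa using this

theorem no_jump_aux {N : ℕ} (Ω : Set (EuclideanSpace ℝ (Fin N))) (hΩ : IsOpen Ω)
    (f : EuclideanSpace ℝ (Fin N) → ℝ) (hf : ContinuousOn f Ω)
    (x v : EuclideanSpace ℝ (Fin N)) (hx : x ∈ Ω) (hfx : f x = 0)
    (f' : EuclideanSpace ℝ (Fin N) →L[ℝ] ℝ) (hf' : HasFDerivAt f f' x) (hv : f' v = 1)
    (hint : ∀ φ : EuclideanSpace ℝ (Fin N) → ℝ, ContDiff ℝ (⊤ : ℕ∞) φ → HasCompactSupport φ →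
        tsupport φ ⊆ Ω →
        ∫ y in Ω, (if 0 < f y then (1:ℝ) else 0) * fderiv ℝ φ y v = 0) : False := by
  set M : ℝ := 3 + 4 * ‖v‖ with hM
  have hM0 : 0 < M := by positivity
  have hvM : ‖v‖ ≤ M := by linarith [norm_nonneg v]
  -- first order expansion
  have hexp : ∀ᶠ y in 𝓝 x, ‖f y - f x - f' (y - x)‖ ≤ (1 / (2 * M)) * ‖y - x‖ :=
    hf'.isLittleO.def (by positivity)
  obtain ⟨r, hr0, hB⟩ := Metric.eventually_nhds_iff_ball.1 (hexp.and (hΩ.mem_nhds hx))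
  set δ : ℝ := r / (2 * M) with hδ
  have hδ0 : 0 < δ := by positivity
  have hMδ : M * δ < r := by
    have : M * δ = r / 2 := by rw [hδ]; field_simp
    linarith
  set c := x - δ • v with hc
  set q : EuclideanSpace ℝ (Fin N) → ℝ :=
    fun y => (f' (y - c)) ^ 2 + ‖(y - c) - f' (y - c) • v‖ ^ 2 with hq
  have hqs : ContDiff ℝ (⊤ : ℕ∞) q := by
    have h1 : ContDiff ℝ (⊤ : ℕ∞) (fun y => y - c) := contDiff_id.sub contDiff_const
    have h2 : ContDiff ℝ (⊤ : ℕ∞) (fun y => f' (y - c)) := f'.contDiff.comp h1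
    exact (h2.pow 2).add ((h1.sub (h2.smul contDiff_const)).norm_sq ℝ)
  have hqv : ∀ y, fderiv ℝ q y v = 2 * f' (y - c) := by
    intro y
    have h1 : HasFDerivAt (fun y => y - c) (ContinuousLinearMap.id ℝ _) y :=
      (hasFDerivAt_id y).sub_const c
    have h2 : HasFDerivAt (fun y => f' (y - c)) f' y := by
      have := f'.hasFDerivAt.comp y h1
      rw [ContinuousLinearMap.comp_id] at this
      exact this
    have h3 := (h2.pow 2).add ((h1.sub (h2.smul_const v)).norm_sq)
    have h4 : HasFDerivAt q _ y := h3
    rw [h4.fderiv]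
    simp [hv]
  set φ : EuclideanSpace ℝ (Fin N) → ℝ := fun y => expNegInvGlue (9 * δ ^ 2 - q y) with hφ
  have hφs : ContDiff ℝ (⊤ : ℕ∞) φ := expNegInvGlue.contDiff.comp (contDiff_const.sub hqs)
  have hφv : ∀ y, fderiv ℝ φ y v =
      - (((9 * δ ^ 2 - q y)⁻¹ ^ 2 * expNegInvGlue (9 * δ ^ 2 - q y)) * (2 * f' (y - c))) := by
    intro y
    have h1 : HasFDerivAt (fun y => 9 * δ ^ 2 - q y) (- fderiv ℝ q y) y :=
      ((hqs.differentiable (by simp)) y).hasFDerivAt.const_sub _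
    have h2 := (hasDerivAt_glue_aux (9 * δ ^ 2 - q y)).comp_hasFDerivAt y h1
    have h4 : HasFDerivAt φ _ y := h2
    rw [h4.fderiv]
    simp [hqv]
  have hball : ∀ y, q y ≤ 9 * δ ^ 2 → ‖y - x‖ ≤ M * δ := by
    intro y hy
    have h1 : (f' (y - c)) ^ 2 ≤ (3 * δ) ^ 2 := by
      have := sq_nonneg ‖(y - c) - f' (y - c) • v‖
      simp only [hq] at hy; nlinarith
    have h2 : ‖(y - c) - f' (y - c) • v‖ ^ 2 ≤ (3 * δ) ^ 2 := by
      have := sq_nonneg (f' (y - c))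
      simp only [hq] at hy; nlinarith
    have h1' := abs_le_of_sq_le_sq h1 (by positivity)
    have h2' := (le_abs_self _).trans (abs_le_of_sq_le_sq h2 (by positivity))
    have h3 : y - x = ((y - c) - f' (y - c) • v) + f' (y - c) • v - δ • v := by
      rw [hc]; abel
    calc ‖y - x‖ ≤ ‖(y - c) - f' (y - c) • v‖ + ‖f' (y - c) • v‖ + ‖δ • v‖ := by
          conv_lhs => rw [h3]
          exact (norm_sub_le _ _).trans (by gcongr; exact norm_add_le _ _)
      _ ≤ 3 * δ + 3 * δ * ‖v‖ + δ * ‖v‖ := by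
          rw [norm_smul, norm_smul, Real.norm_eq_abs, Real.norm_of_nonneg hδ0.le]
          gcongr
      _ = M * δ := by rw [hM]; ring
  have hsupp : Function.support φ ⊆ closedBall x (M * δ) := by
    intro y hy
    rw [mem_closedBall, dist_eq_norm]
    apply hball
    by_contra hcon
    exact hy (expNegInvGlue.zero_of_nonpos (by linarith))
  have hcs : HasCompactSupport φ :=
    HasCompactSupport.of_support_subset_isCompact (isCompact_closedBall _ _) hsupp
  have hts : tsupport φ ⊆ Ω := by
    refine (closure_minimal hsupp isClosed_closedBall).trans ?_
    intro y hy
    exact (hB y (lt_of_le_of_lt hy hMδ)).2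
  have h0 := hint φ hφs hcs hts
  -- sign
  have hsign : ∀ y, 0 < f y → q y < 9 * δ ^ 2 → 0 < f' (y - c) := by
    intro y hy hqy
    have h1 := hball y hqy.le
    have h2 := (hB y (by rw [mem_ball, dist_eq_norm]; linarith)).1
    rw [hfx, Real.norm_eq_abs, abs_le] at h2
    have h3 : f' (y - c) = f' (y - x) + δ := by
      rw [hc, show y - (x - δ • v) = (y - x) + δ • v by abel, map_add, map_smul, hv]; simp
    have h4 : (1 / (2 * M)) * ‖y - x‖ ≤ δ / 2 := by
      calc (1 / (2 * M)) * ‖y - x‖ ≤ (1 / (2 * M)) * (M * δ) := by gcongr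
        _ = δ / 2 := by field_simp
    linarith [h2.2]
  have hneg : ∀ y, 0 < f y → q y < 9 * δ ^ 2 → fderiv ℝ φ y v < 0 := by
    intro y hy hqy
    have h1 := hsign y hy hqy
    have h2 : 0 < 9 * δ ^ 2 - q y := by linarith
    have h3 := expNegInvGlue.pos_of_pos h2
    rw [hφv]
    have : 0 < ((9 * δ ^ 2 - q y)⁻¹ ^ 2 * expNegInvGlue (9 * δ ^ 2 - q y)) * (2 * f' (y - c)) := by
      positivity
    linarith
  have hzero : ∀ y, 9 * δ ^ 2 ≤ q y → fderiv ℝ φ y v = 0 := by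
    intro y hqy
    rw [hφv, expNegInvGlue.zero_of_nonpos (by linarith)]; simp
  -- the open set
  set A := Ω ∩ f ⁻¹' (Ioi 0) with hA
  have hAo : IsOpen A := hf.isOpen_inter_preimage hΩ isOpen_Ioi
  have hind : (fun y => (if 0 < f y then (1:ℝ) else 0) * fderiv ℝ φ y v)
      = (f ⁻¹' (Ioi 0)).indicator (fun y => fderiv ℝ φ y v) := by
    ext y; simp [indicator]
  have h0' : ∫ y in A, - fderiv ℝ φ y v = 0 := by
    rw [integral_neg, neg_eq_zero, ← h0, ← integral_indicator hΩ.measurableSet,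
      ← integral_indicator hAo.measurableSet, hind, indicator_indicator]
  have hcont : Continuous (fun y => fderiv ℝ φ y v) :=
    (hφs.continuous_fderiv (by simp)).clm_apply continuous_const
  have hcs' : HasCompactSupport (fun y => fderiv ℝ φ y v) := hcs.fderiv_apply ℝ v
  have hI : Integrable (fun y => - fderiv ℝ φ y v) := (hcont.integrable_of_hasCompactSupport hcs').neg
  have hnn : ∀ y ∈ A, 0 ≤ - fderiv ℝ φ y v := by
    intro y hy
    rcases lt_or_ge (q y) (9 * δ ^ 2) with h | h
    · linarith [hneg y hy.2 h]
    · rw [hzero y h]; simp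
  have hpos := (setIntegral_pos_iff_support_of_nonneg_ae (μ := volume) (s := A)
    (f := fun y => - fderiv ℝ φ y v)
    ((ae_restrict_iff' hAo.measurableSet).2 (Eventually.of_forall hnn)) hI.integrableOn).2 (by
      have hO : IsOpen (A ∩ q ⁻¹' (Iio (9 * δ ^ 2))) :=
        hAo.inter (isOpen_Iio.preimage hqs.continuous)
      have hsub : A ∩ q ⁻¹' (Iio (9 * δ ^ 2)) ⊆ Function.support (fun y => - fderiv ℝ φ y v) ∩ A := by
        intro y hy
        refine ⟨?_, hy.1⟩
        have := hneg y hy.1.2 hy.2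
        simp only [Function.mem_support]
        linarith
      refine lt_of_lt_of_le (hO.measure_pos volume ⟨x + δ • v, ?_⟩) (measure_mono hsub)
      have hn : ‖x + δ • v - x‖ = δ * ‖v‖ := by
        rw [add_sub_cancel_left, norm_smul, Real.norm_of_nonneg hδ0.le]
      have hlt : δ * ‖v‖ < r := by nlinarith
      have hb := hB (x + δ • v) (by rw [mem_ball, dist_eq_norm, hn]; exact hlt)
      refine ⟨⟨hb.2, ?_⟩, ?_⟩
      · have h2 := hb.1
        rw [hn, hfx, add_sub_cancel_left, map_smul, hv, Real.norm_eq_abs, abs_le] at h2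
        have h4 : (1 / (2 * M)) * (δ * ‖v‖) ≤ δ / 2 := by
          calc (1 / (2 * M)) * (δ * ‖v‖) ≤ (1 / (2 * M)) * (δ * M) := by gcongr
            _ = δ / 2 := by field_simp
        have h5 := h2.1
        simp only [smul_eq_mul, mul_one] at h5
        show 0 < f (x + δ • v)
        linarith
      · show q (x + δ • v) < 9 * δ ^ 2
        have : x + δ • v - c = (2 * δ) • v := by rw [hc, two_mul, add_smul]; abel
        simp only [hq]
        rw [this, map_smul, hv]
        simp only [smul_eq_mul, mul_one, sub_self, norm_zero]
        nlinarith)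
  linarith

theorem exists_perp_aux {E : Type*} [NormedAddCommGroup E] [InnerProductSpace ℝ E]
    [FiniteDimensional ℝ E] (hE : 3 ≤ Module.finrank ℝ E) (p q : E) :
    ∃ b : E, b ≠ 0 ∧ ⟪p, b⟫ = 0 ∧ ⟪q, b⟫ = 0 := by
  have hk := LinearMap.ker_ne_bot_of_finrank_lt
    (f := ((innerSL ℝ p : E →L[ℝ] ℝ) : E →ₗ[ℝ] ℝ).prod ((innerSL ℝ q : E →L[ℝ] ℝ) : E →ₗ[ℝ] ℝ))
    (by simp; omega)
  obtain ⟨b, hb, hb0⟩ := (Submodule.ne_bot_iff _).1 hk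
  refine ⟨b, hb0, ?_⟩
  simpa using hb

theorem eigen_aux {E : Type*} [NormedAddCommGroup E] [InnerProductSpace ℝ E]
    [FiniteDimensional ℝ E] (hE : 3 ≤ Module.finrank ℝ E) (p : E) (H : E →L[ℝ] E)
    (hH : ∀ a v : E, ⟪p, a⟫ = 0 → ⟪a, v⟫ = 0 → ⟪H a, v⟫ = 0) :
    ∃ m : ℝ, ∀ a, ⟪p, a⟫ = 0 → H a = m • a := by
  have h1 : ∀ a, ⟪p, a⟫ = 0 → ∃ m : ℝ, H a = m • a := by
    intro a ha
    by_cases ha0 : a = 0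
    · exact ⟨0, by simp [ha0]⟩
    have hn : ⟪a, a⟫ ≠ 0 := by simpa using ha0
    refine ⟨⟪a, H a⟫ / ⟪a, a⟫, ?_⟩
    set m := ⟪a, H a⟫ / ⟪a, a⟫ with hm
    have h2 : ⟪a, H a - m • a⟫ = 0 := by
      rw [inner_sub_right, inner_smul_right, hm]; field_simp; ring
    have h3 := hH a _ ha h2
    have h4 : ⟪H a - m • a, H a - m • a⟫ = 0 := by
      rw [inner_sub_left, h3, inner_smul_left, h2]; simp
    exact sub_eq_zero.1 (inner_self_eq_zero.1 h4)
  obtain ⟨b, hb0, hb, -⟩ := exists_perp_aux hE p p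
  obtain ⟨m, hm⟩ := h1 b hb
  refine ⟨m, fun a ha => ?_⟩
  obtain ⟨k, hk⟩ := h1 a ha
  obtain ⟨j, hj⟩ := h1 (a + b) (by rw [inner_add_right, ha, hb, add_zero])
  rw [map_add, hk, hm] at hj
  have h5 : (k - j) • a = (j - m) • b := by
    rw [sub_smul, sub_smul, sub_eq_sub_iff_add_eq_add, hj.trans (smul_add _ _ _)]
    abel
  by_cases hkj : k = j
  · rw [hkj, sub_self, zero_smul] at h5
    have := (smul_eq_zero.1 h5.symm).resolve_right hb0
    rw [hk, hkj, sub_eq_zero.1 this]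
  · have : a = ((k - j)⁻¹ * (j - m)) • b := by
      rw [mul_smul, ← h5, smul_smul, inv_mul_cancel₀ (sub_ne_zero.2 hkj), one_smul]
    rw [this, map_smul, hm, smul_comm]

section
variable {E : Type*} [NormedAddCommGroup E] [InnerProductSpace ℝ E]
  (u : E → E) (x : E) (lam : E → ℝ)

theorem tangent_field_aux (hu : ContDiffAt ℝ 2 u x) (b : E) (hb : ⟪u x, b⟫ = 0)
    (hl : ∀ a, ⟪u x, a⟫ = 0 → fderiv ℝ u x a = lam x • a) :
    ∃ X' : E →L[ℝ] E, HasFDerivAt (fun y => ‖u y‖ ^ 2 • b - ⟪u y, b⟫ • u y) X' x ∧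
      ∀ a, ⟪u x, a⟫ = 0 → ⟪a, b⟫ = 0 → X' a = 0 := by
  have hd : HasFDerivAt u (fderiv ℝ u x) x := (hu.differentiableAt (by norm_num)).hasFDerivAt
  refine ⟨_, (hd.norm_sq.smul_const b).sub ((hd.inner ℝ (hasFDerivAt_const b x)).smul hd), ?_⟩
  intro a ha hab
  simp [hl a ha, ha, hb, hab, inner_smul_left]

theorem tangent_perp_aux (y b : E) : ⟪u y, ‖u y‖ ^ 2 • b - ⟪u y, b⟫ • u y⟫ = 0 := by
  rw [inner_sub_right, inner_smul_right, inner_smul_right, real_inner_self_eq_norm_sq]; ring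

theorem lam_diff_aux (hu : ContDiffAt ℝ 2 u x) (hux : u x ≠ 0)
    (hl : ∀ᶠ y in 𝓝 x, ∀ a, ⟪u y, a⟫ = 0 → fderiv ℝ u y a = lam y • a)
    (b : E) (hb0 : b ≠ 0) (hb : ⟪u x, b⟫ = 0) : DifferentiableAt ℝ lam x := by
  obtain ⟨X', hX', -⟩ := tangent_field_aux u x lam hu b hb hl.self_of_nhds
  set X : E → E := fun y => ‖u y‖ ^ 2 • b - ⟪u y, b⟫ • u y with hX
  have hXx : X x = ‖u x‖ ^ 2 • b := by simp [hX, hb]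
  have hXx0 : X x ≠ 0 := by
    rw [hXx]; exact smul_ne_zero (by simpa using hux) hb0
  have hH : DifferentiableAt ℝ (fderiv ℝ u) x :=
    (hu.fderiv_right (m := 1) (by norm_num)).differentiableAt (by norm_num)
  have hXd := hX'.differentiableAt
  have hne : ⟪X x, X x⟫ ≠ 0 := by simpa using hXx0
  have hq1 : DifferentiableAt ℝ (fun y => ⟪fderiv ℝ u y (X y), X y⟫) x :=
    (hH.clm_apply hXd).inner ℝ hXd
  have hq2 : DifferentiableAt ℝ (fun y => ⟪X y, X y⟫) x := hXd.inner ℝ hXd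
  have hq : DifferentiableAt ℝ (fun y => ⟪fderiv ℝ u y (X y), X y⟫ / ⟪X y, X y⟫) x := by
    simp only [div_eq_mul_inv]
    exact hq1.fun_mul (hq2.fun_inv hne)
  refine hq.congr_of_eventuallyEq ?_
  filter_upwards [hl, hXd.continuousAt.eventually_ne hXx0] with y hy hy0
  have hyn : ⟪X y, X y⟫ ≠ 0 := by simpa using hy0
  rw [hy (X y) (tangent_perp_aux u y b), inner_smul_left]
  simp only [conj_trivial]
  rw [mul_div_cancel_right₀ _ hyn]

theorem lam_snd_aux (hu : ContDiffAt ℝ 2 u x) (hux : u x ≠ 0)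
    (hl : ∀ᶠ y in 𝓝 x, ∀ a, ⟪u y, a⟫ = 0 → fderiv ℝ u y a = lam y • a)
    (hlam : DifferentiableAt ℝ lam x)
    (a b : E) (ha : ⟪u x, a⟫ = 0) (hb : ⟪u x, b⟫ = 0) (hab : ⟪a, b⟫ = 0) :
    fderiv ℝ (fderiv ℝ u) x a b = fderiv ℝ lam x a • b := by
  obtain ⟨X', hX', hX0⟩ := tangent_field_aux u x lam hu b hb hl.self_of_nhds
  set X : E → E := fun y => ‖u y‖ ^ 2 • b - ⟪u y, b⟫ • u y with hX
  have hXx : X x = ‖u x‖ ^ 2 • b := by simp [hX, hb]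
  have hH : DifferentiableAt ℝ (fderiv ℝ u) x :=
    (hu.fderiv_right (m := 1) (by norm_num)).differentiableAt (by norm_num)
  have h1 := hH.hasFDerivAt.clm_apply hX'
  have h2 := hlam.hasFDerivAt.smul hX'
  have h3 : (fun y => fderiv ℝ u y (X y)) =ᶠ[𝓝 x] fun y => lam y • X y := by
    filter_upwards [hl] with y hy
    exact hy (X y) (tangent_perp_aux u y b)
  have h4 := h1.unique (h2.congr_of_eventuallyEq h3)
  have h5 := DFunLike.congr_fun h4 a
  have h6 := hX0 a ha hab
  simp [h6, hXx] at h5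
  rw [smul_comm] at h5
  exact smul_right_injective E (pow_ne_zero 2 (norm_ne_zero_iff.2 hux)) h5

theorem lam_const_aux [FiniteDimensional ℝ E] (hE : 3 ≤ Module.finrank ℝ E)
    (hu : ContDiffAt ℝ 2 u x) (hux : u x ≠ 0)
    (hl : ∀ᶠ y in 𝓝 x, ∀ a, ⟪u y, a⟫ = 0 → fderiv ℝ u y a = lam y • a) :
    DifferentiableAt ℝ lam x ∧ ∀ a, ⟪u x, a⟫ = 0 → fderiv ℝ lam x a = 0 := by
  have hd : DifferentiableAt ℝ lam x := by
    obtain ⟨b, hb0, hb, -⟩ := exists_perp_aux hE (u x) (u x)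
    exact lam_diff_aux u x lam hu hux hl b hb0 hb
  refine ⟨hd, fun a ha => ?_⟩
  obtain ⟨b, hb0, hb, hab⟩ := exists_perp_aux hE (u x) a
  have h1 := lam_snd_aux u x lam hu hux hl hd a b ha hb hab
  have h2 := lam_snd_aux u x lam hu hux hl hd b a hb ha (by rw [real_inner_comm]; exact hab)
  have h3 : fderiv ℝ (fderiv ℝ u) x a b = fderiv ℝ (fderiv ℝ u) x b a :=
    (hu.isSymmSndFDerivAt (by simp)) a b
  rw [h1, h2] at h3
  have h4 := congrArg (fun w => ⟪w, b⟫) h3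
  simp only [inner_smul_left, hab] at h4
  simpa [hb0] using h4

end

theorem two_le_smooth_aux : (2 : WithTop ℕ∞) ≤ ((⊤ : ℕ∞) : WithTop ℕ∞) := by
  exact WithTop.coe_le_coe.2 (le_top : (2 : ℕ∞) ≤ ⊤)

theorem inner_hess_aux {E : Type*} [NormedAddCommGroup E] [InnerProductSpace ℝ E] [CompleteSpace E]
    (ψ : E → ℝ) (y : E) (hψ : ContDiffAt ℝ (⊤ : ℕ∞) ψ y) :
    ContDiffAt ℝ (⊤ : ℕ∞) (fun z => gradient ψ z) y ∧
    ∀ v w, ⟪fderiv ℝ (fun z => gradient ψ z) y v, w⟫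
      = ⟪fderiv ℝ (fun z => gradient ψ z) y w, v⟫ := by
  have h1 : ContDiffAt ℝ (⊤ : ℕ∞) (fderiv ℝ ψ) y := hψ.fderiv_right (by simp)
  have h2 : ContDiffAt ℝ (⊤ : ℕ∞) (fun z => gradient ψ z) y :=
    ((InnerProductSpace.toDual ℝ E).symm.toContinuousLinearEquiv.contDiff).contDiffAt.comp y h1
  refine ⟨h2, ?_⟩
  have h3 : ∀ v w, ⟪fderiv ℝ (fun z => gradient ψ z) y v, w⟫ = fderiv ℝ (fderiv ℝ ψ) y v w := by
    intro v w
    have e1 := ((h2.differentiableAt (by simp)).hasFDerivAt).inner ℝ (hasFDerivAt_const w y)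
    have e2 := ((h1.differentiableAt (by simp)).hasFDerivAt).clm_apply (hasFDerivAt_const w y)
    have e3 : (fun z => ⟪gradient ψ z, w⟫) = fun z => fderiv ℝ ψ z w := by
      ext z; exact inner_gradient_left
    rw [e3] at e1
    have := DFunLike.congr_fun (e1.unique e2) v
    simpa using this
  intro v w
  rw [h3, h3]
  exact (hψ.isSymmSndFDerivAt (by simpa using two_le_smooth_aux)) v w

theorem level_sets_umbilical (N : ℕ) (hN : 3 ≤ N)
    (Ω : Set (EuclideanSpace ℝ (Fin N))) (hΩ : IsOpen Ω)
    (ψ : EuclideanSpace ℝ (Fin N) → ℝ) (hψ : ContDiffOn ℝ (⊤ : ℕ∞) ψ Ω)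
    (hkin : KineticFormulation Ω (fun x => gradient ψ x))
    (α : ℝ) (hnv : ∀ x ∈ Ω, ψ x = α → gradient ψ x ≠ 0)
    (S : Set (EuclideanSpace ℝ (Fin N))) (x₀ : EuclideanSpace ℝ (Fin N))
    (hx₀ : x₀ ∈ {x ∈ Ω | ψ x = α})
    (hS : S = connectedComponentIn {x ∈ Ω | ψ x = α} x₀) :
    ∀ x ∈ S, ∃ U : Set (EuclideanSpace ℝ (Fin N)), IsOpen U ∧ x ∈ U ∧
      ((∃ c : EuclideanSpace ℝ (Fin N), ∃ R : ℝ, 0 < R ∧ S ∩ U ⊆ Metric.sphere c R) ∨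
       (∃ ν : EuclideanSpace ℝ (Fin N), ‖ν‖ = 1 ∧ ∃ c : ℝ, S ∩ U ⊆ {y | ⟪y, ν⟫ = c})) := by
  intro x hxS
  have hsubS : S ⊆ {x ∈ Ω | ψ x = α} := hS ▸ connectedComponentIn_subset _ _
  obtain ⟨hxΩ, hxα⟩ := hsubS hxS
  have hux := hnv x hxΩ hxα
  have hE : 3 ≤ Module.finrank ℝ (EuclideanSpace ℝ (Fin N)) := by simpa using hN
  have hψc : ∀ y ∈ Ω, ContDiffAt ℝ (⊤ : ℕ∞) ψ y := fun y hy => hψ.contDiffAt (hΩ.mem_nhds hy)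
  set u : EuclideanSpace ℝ (Fin N) → EuclideanSpace ℝ (Fin N) := fun z => gradient ψ z with hu
  have huc : ∀ y ∈ Ω, ContDiffAt ℝ (⊤ : ℕ∞) u y := fun y hy => (inner_hess_aux ψ y (hψc y hy)).1
  have hud : ∀ y ∈ Ω, HasFDerivAt u (fderiv ℝ u y) y := fun y hy =>
    ((huc y hy).differentiableAt (by simp)).hasFDerivAt
  have hsym : ∀ y ∈ Ω, ∀ v w, ⟪fderiv ℝ u y v, w⟫ = ⟪fderiv ℝ u y w, v⟫ :=
    fun y hy => (inner_hess_aux ψ y (hψc y hy)).2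
  have huψ : ∀ y a, ⟪u y, a⟫ = fderiv ℝ ψ y a := fun y a => inner_gradient_left
  -- pointwise eigenvector property
  have hperp : ∀ y ∈ Ω, ∀ a v, ⟪u y, a⟫ = 0 → ⟪a, v⟫ = 0 → ⟪fderiv ℝ u y a, v⟫ = 0 := by
    intro y hy a v ha hav
    by_contra hne
    have ha0 : a ≠ 0 := by
      rintro rfl; simp at hne
    have hna : ‖a‖ ≠ 0 := norm_ne_zero_iff.2 ha0
    set ξ := ‖a‖⁻¹ • a with hξ
    have hξ1 : ‖ξ‖ = 1 := norm_smul_inv_norm ha0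
    have hfd := (hud y hy).inner ℝ (hasFDerivAt_const ξ y)
    set G : ℝ := ⟪fderiv ℝ u y v, ξ⟫ with hG
    have hG0 : G ≠ 0 := by
      rw [hG, hsym y hy, hξ, map_smul, inner_smul_left]
      exact mul_ne_zero (by simpa using ha0) hne
    refine no_jump_aux Ω hΩ (fun z => ⟪u z, ξ⟫) ?_ y (G⁻¹ • v) hy ?_ _ hfd ?_ ?_
    · intro z hz
      exact ((huc z hz).continuousAt.inner continuousAt_const).continuousWithinAt
    · simp only [hξ, inner_smul_right, ha, mul_zero]
    · simp [← hG, hG0]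
    · intro φ h1 h2 h3
      have := hkin ξ hξ1 (G⁻¹ • v) (by
        rw [hξ, inner_smul_left, inner_smul_right, real_inner_comm, hav]; simp) φ h1 h2 h3
      refine Eq.trans ?_ this
      congr 1
      ext z
      rw [inner_gradient_right]
      simp [chi, hu]
  have hex : ∀ y, ∃ m : ℝ, y ∈ Ω → ∀ a, ⟪u y, a⟫ = 0 → fderiv ℝ u y a = m • a := by
    intro y
    by_cases hy : y ∈ Ω
    · obtain ⟨m, hm⟩ := eigen_aux hE (u y) (fderiv ℝ u y) (hperp y hy)
      exact ⟨m, fun _ => hm⟩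
    · exact ⟨0, fun h => absurd h hy⟩
  choose lam hlam using hex
  have hΩx : ∀ᶠ y in 𝓝 x, y ∈ Ω := hΩ.mem_nhds hxΩ
  have hlc : ∀ᶠ y in 𝓝 x, DifferentiableAt ℝ lam y ∧
      ∀ a, ⟪u y, a⟫ = 0 → fderiv ℝ lam y a = 0 := by
    filter_upwards [hΩx, (huc x hxΩ).continuousAt.eventually_ne hux] with y hy hy0
    refine lam_const_aux u y lam hE ((huc y hy).of_le two_le_smooth_aux) hy0 ?_
    filter_upwards [hΩ.mem_nhds hy] with z hz using hlam z hz
  -- the vector `e`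
  have hψ1 : ContDiffAt ℝ 1 ψ x := (hψc x hxΩ).of_le (by exact_mod_cast le_top)
  have he : fderiv ℝ ψ x ((‖u x‖ ^ 2)⁻¹ • u x) = 1 := by
    have : ‖u x‖ ≠ 0 := norm_ne_zero_iff.2 hux
    rw [← huψ, inner_smul_right, real_inner_self_eq_norm_sq]; field_simp
  have hlamc : ∀ᶠ y in 𝓝 x, ψ y = ψ x → lam y = lam x := by
    refine level_const_aux ψ lam x hψ1 _ he (hlc.mono fun y hy => hy.1) ?_
    filter_upwards [hlc] with y hy _ a ha
    exact hy.2 a (by rw [huψ, ha])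
  have hwc : ∀ᶠ y in 𝓝 x, ψ y = ψ x → u y - lam x • y = u x - lam x • x := by
    refine level_const_aux ψ (fun y => u y - lam x • y) x hψ1 _ he ?_ ?_
    · filter_upwards [hΩx] with y hy
      exact (hud y hy).differentiableAt.sub (differentiableAt_id.fun_const_smul (lam x))
    · filter_upwards [hΩx, hlamc] with y hy hly hyx a ha
      have hd : HasFDerivAt (fun y => u y - lam x • y) _ y :=
        (hud y hy).sub ((hasFDerivAt_id y).const_smul (lam x))
      rw [hd.fderiv]
      have := hlam y hy a (by rw [huψ, ha])
      rw [hly hyx] at this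
      simp [this]
  have hnc : ∀ᶠ y in 𝓝 x, ψ y = ψ x → ‖u y‖ ^ 2 = ‖u x‖ ^ 2 := by
    refine level_const_aux ψ (fun y => ‖u y‖ ^ 2) x hψ1 _ he ?_ ?_
    · filter_upwards [hΩx] with y hy
      exact (hud y hy).norm_sq.differentiableAt
    · filter_upwards [hΩx] with y hy _ a ha
      rw [(hud y hy).norm_sq.fderiv]
      have h1 : ⟪u y, a⟫ = 0 := by rw [huψ, ha]
      simp [hlam y hy a h1, h1]
  have hu0 : 0 < ‖u x‖ := norm_pos_iff.2 hux
  by_cases hl0 : lam x = 0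
  · -- hyperplane
    have huc' : ∀ᶠ y in 𝓝 x, ψ y = ψ x → u y = u x := by
      filter_upwards [hwc] with y hy hyx
      simpa [hl0] using hy hyx
    have hpl : ∀ᶠ y in 𝓝 x, ψ y = ψ x → ⟪y, u x⟫ = ⟪x, u x⟫ := by
      refine level_const_aux ψ (fun y => ⟪y, u x⟫) x hψ1 _ he ?_ ?_
      · exact Eventually.of_forall fun y =>
          ((hasFDerivAt_id y).inner ℝ (hasFDerivAt_const (u x) y)).differentiableAt
      · filter_upwards [huc'] with y hy hyx a ha
        have hd : HasFDerivAt (fun y => ⟪y, u x⟫) _ y :=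
          (hasFDerivAt_id y).inner ℝ (hasFDerivAt_const (u x) y)
        rw [hd.fderiv]
        have h1 : ⟪a, u x⟫ = 0 := by rw [real_inner_comm, ← hy hyx, huψ, ha]
        simp [h1]
    obtain ⟨U, hU, hUo, hxU⟩ := _root_.eventually_nhds_iff.1 hpl
    refine ⟨U, hUo, hxU, Or.inr ⟨‖u x‖⁻¹ • u x, norm_smul_inv_norm hux, ‖u x‖⁻¹ * ⟪x, u x⟫, ?_⟩⟩
    rintro y ⟨hyS, hyU⟩
    have := hU y hyU ((hsubS hyS).2.trans hxα.symm)
    rw [mem_setOf_eq, inner_smul_right, this]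
  · -- sphere
    obtain ⟨U, hU, hUo, hxU⟩ := _root_.eventually_nhds_iff.1 (hwc.and hnc)
    refine ⟨U, hUo, hxU, Or.inl ⟨x - (lam x)⁻¹ • u x, |lam x|⁻¹ * ‖u x‖,
      mul_pos (inv_pos.2 (abs_pos.2 hl0)) hu0, ?_⟩⟩
    rintro y ⟨hyS, hyU⟩
    have hyx : ψ y = ψ x := (hsubS hyS).2.trans hxα.symm
    have h1 := (hU y hyU).1 hyx
    have h2 := (hU y hyU).2 hyx
    have h3 : ‖u y‖ = ‖u x‖ := by
      rwa [sq_eq_sq₀ (norm_nonneg _) (norm_nonneg _)] at h2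
    have h4 : y - (x - (lam x)⁻¹ • u x) = (lam x)⁻¹ • u y := by
      have : u y = u x - lam x • x + lam x • y := by rw [← h1]; abel
      rw [this, smul_add, smul_sub, smul_smul, smul_smul, inv_mul_cancel₀ hl0, one_smul, one_smul]
      abel
    rw [mem_sphere, dist_eq_norm, h4, norm_smul, h3, norm_inv, Real.norm_eq_abs]
end
end

section
/- Let N ≥ 2, Ω ⊆ ℝ^N an open set, and ψ : Ω → ℝ a smooth function such that the gradient field u = ∇ψ satisfies the kinetic formulation. Assume that for some α ∈ ℝ, |∇ψ(x)| ≠ 0 for every x in the level set {x ∈ Ω : ψ(x) = α}, and let S be a connected component of this level set. Then |∇ψ| is constant on S: there exists c > 0 with |∇ψ(x)| = c for all x ∈ S. -/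
open MeasureTheory Metric Set Filter
open scoped RealInnerProductSpace ENNReal Topology

noncomputable section

lemma aux_sign {N : ℕ} {Ω : Set (EuclideanSpace ℝ (Fin N))} (hΩ : IsOpen Ω)
    (f : EuclideanSpace ℝ (Fin N) → ℝ) (hf : ContinuousOn f Ω) (v : EuclideanSpace ℝ (Fin N))
    (h : ∀ φ : EuclideanSpace ℝ (Fin N) → ℝ, ContDiff ℝ (⊤ : ℕ∞) φ → HasCompactSupport φ →
        tsupport φ ⊆ Ω →
        ∫ x in Ω, (if 0 < f x then (1 : ℝ) else 0) * ⟪v, gradient φ x⟫ = 0)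
    (x : EuclideanSpace ℝ (Fin N)) (hx : x ∈ Ω) (hfx : f x = 0)
    (f' : EuclideanSpace ℝ (Fin N) →L[ℝ] ℝ) (hf' : HasFDerivAt f f' x) : f' v ≤ 0 := by
  by_contra hpos
  push Not at hpos
  obtain ⟨R, hR, hRΩ⟩ := Metric.isOpen_iff.1 hΩ x hx
  -- the sign along the line
  have hd : HasDerivAt (fun t : ℝ => f (x + t • v)) (f' v) 0 := by
    have h1 : HasDerivAt (fun t : ℝ => x + t • v) v 0 := by
      simpa using ((hasDerivAt_id (0 : ℝ)).smul_const v).const_add x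
    have h2 : HasFDerivAt f f' (x + (0 : ℝ) • v) := by simpa using hf'
    exact h2.comp_hasDerivAt (0 : ℝ) h1
  have hs := (hasDerivAt_iff_tendsto_slope.1 hd).eventually (lt_mem_nhds hpos)
  rw [eventually_nhdsWithin_iff, Metric.eventually_nhds_iff] at hs
  obtain ⟨δ, hδ, hs⟩ := hs
  obtain ⟨t, ht0, htδ, htR⟩ : ∃ t : ℝ, 0 < t ∧ t < δ ∧ t * ‖v‖ < R / 2 := by
    have hv := norm_nonneg v
    refine ⟨min (δ / 2) (R / (4 * (‖v‖ + 1))), by positivity, ?_, ?_⟩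
    · exact (min_le_left _ _).trans_lt (by linarith)
    · calc _ ≤ R / (4 * (‖v‖ + 1)) * (‖v‖ + 1) := by
            gcongr
            · exact min_le_right _ _
            · linarith
        _ = R / 4 := by field_simp
        _ < R / 2 := by linarith
  have hp : 0 < f (x + t • v) := by
    have := hs (y := t) (by simpa [abs_of_pos ht0] using htδ) (by simpa using ht0.ne')
    simp only [slope, vsub_eq_sub, sub_zero, zero_smul, add_zero, hfx, smul_eq_mul] at this
    exact (pos_iff_pos_of_mul_pos this).1 (by positivity)
  have hq : f (x + (-t) • v) < 0 := by
    have := hs (y := -t) (by simpa [abs_of_pos ht0] using htδ) (by simpa using ht0.ne')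
    simp only [slope, vsub_eq_sub, sub_zero, zero_smul, add_zero, hfx, smul_eq_mul] at this
    have h3 : (-t)⁻¹ < 0 := inv_lt_zero.2 (by linarith)
    exact (neg_iff_neg_of_mul_pos this).1 h3
  have hseg : ∀ s ∈ Icc (-t) t, x + s • v ∈ ball x (R / 2) := by
    intro s hs
    simp only [mem_ball, dist_self_add_left, norm_smul, Real.norm_eq_abs]
    exact (mul_le_mul_of_nonneg_right (abs_le.2 hs) (norm_nonneg v)).trans_lt htR
  have hsub : ball x (R / 2) ⊆ Ω := (ball_subset_ball (by linarith)).trans hRΩ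
  have hpΩ := hsub (hseg t ⟨by linarith, le_rfl⟩)
  have hqΩ := hsub (hseg (-t) ⟨le_rfl, by linarith⟩)
  have ep := ((hf.continuousAt (hΩ.mem_nhds hpΩ)).eventually (lt_mem_nhds hp)).and (hΩ.mem_nhds hpΩ)
  have eq := (hf.continuousAt (hΩ.mem_nhds hqΩ)).eventually (gt_mem_nhds hq)
  obtain ⟨r1, hr1, h1⟩ := Metric.eventually_nhds_iff.1 ep
  obtain ⟨r2, hr2, h2⟩ := Metric.eventually_nhds_iff.1 eq
  obtain ⟨r, hr, hrr1, hrr2, hrR⟩ : ∃ r : ℝ, 0 < r ∧ r ≤ r1 ∧ r ≤ r2 ∧ r < R / 2 :=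
    ⟨min (min r1 r2) (R / 4), by positivity, (min_le_left _ _).trans (min_le_left _ _),
      (min_le_left _ _).trans (min_le_right _ _), (min_le_right _ _).trans_lt (by linarith)⟩
  let ρ : ContDiffBump (0 : EuclideanSpace ℝ (Fin N)) := ⟨r / 2, r, by linarith, by linarith⟩
  have hρc : ContDiff ℝ (⊤ : ℕ∞) ρ := ρ.contDiff
  have hρs : HasCompactSupport ρ := ρ.hasCompactSupport
  let U : Set (EuclideanSpace ℝ (Fin N)) := Ω ∩ f ⁻¹' (Ioi 0)
  have hU : IsOpen U := hf.isOpen_inter_preimage hΩ isOpen_Ioi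
  let g : EuclideanSpace ℝ (Fin N) → ℝ := U.indicator 1
  have hg : LocallyIntegrable g volume :=
    (locallyIntegrable_const (1 : ℝ)).indicator hU.measurableSet
  let G : EuclideanSpace ℝ (Fin N) → ℝ :=
    convolution g ρ (ContinuousLinearMap.lsmul ℝ ℝ) volume
  have hG : ∀ z, G z = ∫ y, g y * ρ (z - y) := fun z => rfl
  have hder : ∀ s ∈ Icc (-t) t, HasDerivAt (fun s : ℝ => G (x + s • v)) 0 s := by
    intro s hs
    set z := x + s • v with hz
    have hGd := hρs.hasFDerivAt_convolution_right (ContinuousLinearMap.lsmul ℝ ℝ) hg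
      (hρc.of_le (by exact_mod_cast le_top)) z
    have h3 : HasDerivAt (fun s : ℝ => x + s • v) v s := by
      simpa using ((hasDerivAt_id s).smul_const v).const_add x
    have h4 := hGd.comp_hasDerivAt s h3
    refine h4.congr_deriv ?_
    rw [convolution_precompR_apply _ hg (hρs.fderiv ℝ) (hρc.continuous_fderiv (by simp)),
      convolution_def]
    have h5 := h (fun y => ρ (z - y)) (hρc.comp (contDiff_const.sub contDiff_id))
      (hρs.comp_homeomorph (Homeomorph.subLeft z)) ?_
    · have h6 : ∀ y, gradient (fun y => ρ (z - y)) y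
          = (InnerProductSpace.toDual ℝ _).symm (-(fderiv ℝ ρ (z - y))) := by
        intro y
        rw [gradient]
        congr 1
        have := ((hρc.differentiable (by simp)) (z - y)).hasFDerivAt.comp y
          ((hasFDerivAt_id y).const_sub z)
        refine this.fderiv.trans ?_
        ext w
        simp
      have h7 : ∀ y, ⟪v, gradient (fun y => ρ (z - y)) y⟫ = - (fderiv ℝ ρ (z - y) v) := by
        intro y
        rw [h6, real_inner_comm, InnerProductSpace.toDual_symm_apply]
        simp
      simp only [h7] at h5
      rw [← integral_indicator hΩ.measurableSet] at h5
      rw [← neg_eq_zero, ← integral_neg] at h5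
      refine Eq.trans ?_ h5
      congr 1
      ext y
      by_cases hy : y ∈ Ω <;> by_cases hy' : 0 < f y <;> simp [g, U, hy, hy', indicator]
    · intro y hy
      have hy2 : y ∈ closedBall z r := by
        refine closure_minimal ?_ isClosed_closedBall hy
        intro w hw
        have : z - w ∈ Function.support ρ := hw
        rw [ρ.support_eq] at this
        have h8 : ‖z - w‖ < r := by simpa using this
        rw [mem_closedBall, dist_comm, dist_eq_norm]
        exact h8.le
      apply hRΩ
      have := hseg s hs
      rw [mem_ball] at this ⊢
      rw [mem_closedBall] at hy2
      linarith [dist_triangle y z x]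
  have hconst : G (x + t • v) = G (x + (-t) • v) := by
    have := constant_of_has_deriv_right_zero (f := fun s : ℝ => G (x + s • v)) (a := -t) (b := t)
      (fun s hs => (hder s hs).continuousAt.continuousWithinAt)
      (fun s hs => (hder s ⟨hs.1, hs.2.le⟩).hasDerivWithinAt) t ⟨by linarith, le_rfl⟩
    exact this
  have hρzero : ∀ w, r ≤ ‖w‖ → ρ w = 0 := fun w hw => ρ.zero_of_le_dist (by simpa using hw)
  have hGq : G (x + (-t) • v) = 0 := by
    rw [hG]
    have : (fun y => g y * ρ (x + (-t) • v - y)) = fun _ => (0 : ℝ) := by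
      ext y
      by_cases hy : dist y (x + (-t) • v) < r
      · have := h2 (hy.trans_le hrr2)
        have : y ∉ U := fun hyU => absurd hyU.2 (by simpa using this.le)
        simp [g, this]
      · rw [hρzero _ (by rw [← dist_eq_norm, dist_comm]; linarith), mul_zero]
    rw [this]; simp
  have hGp : 0 < G (x + t • v) := by
    rw [hG]
    have : (fun y => g y * ρ (x + t • v - y)) = fun y => ρ (x + t • v - y) := by
      ext y
      by_cases hy : dist y (x + t • v) < r
      · have := h1 (hy.trans_le hrr1)
        have : y ∈ U := ⟨this.2, this.1⟩
        simp [g, this]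
      · rw [hρzero _ (by rw [← dist_eq_norm, dist_comm]; linarith), mul_zero]
    rw [this, integral_sub_left_eq_self (fun y => ρ y)]
    exact ρ.integral_pos
  linarith

lemma aux_second {N : ℕ} {Ω : Set (EuclideanSpace ℝ (Fin N))} (hΩ : IsOpen Ω)
    (ψ : EuclideanSpace ℝ (Fin N) → ℝ) (hψ : ContDiffOn ℝ (⊤ : ℕ∞) ψ Ω)
    (hkin : KineticFormulation Ω (fun x => gradient ψ x))
    (x : EuclideanSpace ℝ (Fin N)) (hx : x ∈ Ω) (w : EuclideanSpace ℝ (Fin N))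
    (hw : fderiv ℝ ψ x w = 0) : fderiv ℝ (fderiv ℝ ψ) x w (gradient ψ x) = 0 := by
  by_cases hw0 : w = 0
  · simp [hw0]
  have hin : ∀ y z, ⟪gradient ψ y, z⟫ = fderiv ℝ ψ y z := by
    intro y z
    rw [gradient, InnerProductSpace.toDual_symm_apply]
  have hwn : ‖w‖ ≠ 0 := norm_ne_zero_iff.2 hw0
  set ξ := ‖w‖⁻¹ • w with hξ
  have hξ1 : ‖ξ‖ = 1 := by rw [hξ, norm_smul]; simp [hwn]
  have hξ0 : fderiv ℝ ψ x ξ = 0 := by simp [hξ, hw]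
  have hat : ContDiffAt ℝ (⊤ : ℕ∞) ψ x := hψ.contDiffAt (hΩ.mem_nhds hx)
  have hsym : IsSymmSndFDerivAt ℝ ψ x := hat.isSymmSndFDerivAt (by
    rw [minSmoothness_of_isRCLikeNormedField]
    exact WithTop.coe_le_coe.2 (le_top : (2 : ℕ∞) ≤ ⊤))
  have hD : ContDiffOn ℝ 1 (fderiv ℝ ψ) Ω := hψ.fderiv_of_isOpen hΩ
    (WithTop.coe_le_coe.2 (le_top : (1 + 1 : ℕ∞) ≤ ⊤))
  have hDx : HasFDerivAt (fderiv ℝ ψ) (fderiv ℝ (fderiv ℝ ψ) x) x :=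
    ((hD.contDiffAt (hΩ.mem_nhds hx)).differentiableAt (by simp)).hasFDerivAt
  have hfx := hDx.clm_apply (hasFDerivAt_const ξ x)
  have hfc : ContinuousOn (fun y => fderiv ℝ ψ y ξ) Ω :=
    hD.continuousOn.clm_apply continuousOn_const
  have key : ∀ v : EuclideanSpace ℝ (Fin N), ⟪v, ξ⟫ = 0 →
      fderiv ℝ (fderiv ℝ ψ) x v ξ ≤ 0 := by
    intro v hv
    have := aux_sign hΩ (fun y => fderiv ℝ ψ y ξ) hfc v (fun φ h1 h2 h3 => by
      have := hkin ξ hξ1 v hv φ h1 h2 h3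
      simpa only [chi, hin] using this) x hx hξ0 _ hfx
    simpa using this
  have k1 := key (gradient ψ x) (by rw [hin, hξ0])
  have k2 := key (-gradient ψ x) (by rw [inner_neg_left, hin, hξ0, neg_zero])
  have k3 : fderiv ℝ (fderiv ℝ ψ) x (gradient ψ x) ξ = 0 := by
    refine le_antisymm k1 ?_
    simpa using k2
  rw [hsym.eq, hξ, map_smul] at k3 
  simpa [hwn] using k3

lemma aux_local {N : ℕ} {Ω : Set (EuclideanSpace ℝ (Fin N))} (hΩ : IsOpen Ω)
    (ψ : EuclideanSpace ℝ (Fin N) → ℝ) (hψ : ContDiffOn ℝ (⊤ : ℕ∞) ψ Ω)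
    (g : EuclideanSpace ℝ (Fin N) → ℝ) (hg : DifferentiableOn ℝ g Ω)
    (hk : ∀ x ∈ Ω, ∀ w, fderiv ℝ ψ x w = 0 → fderiv ℝ g x w = 0)
    (p : EuclideanSpace ℝ (Fin N)) (hp : p ∈ Ω) (hne : gradient ψ p ≠ 0) :
    ∀ᶠ x in 𝓝 p, ψ x = ψ p → g x = g p := by
  set u := gradient ψ p with hu
  have hin : ∀ z, ⟪u, z⟫ = fderiv ℝ ψ p z := by
    intro z
    rw [hu, gradient, InnerProductSpace.toDual_symm_apply]
  have huu : ⟪u, u⟫ ≠ 0 := inner_self_ne_zero.2 hne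
  let Φ : EuclideanSpace ℝ (Fin N) → EuclideanSpace ℝ (Fin N) :=
    fun x => x + ((ψ x - ⟪u, x⟫) * (⟪u, u⟫)⁻¹) • u
  have hat : ContDiffAt ℝ (⊤ : ℕ∞) ψ p := hψ.contDiffAt (hΩ.mem_nhds hp)
  have hΦu : ∀ x, ⟪u, Φ x⟫ = ψ x := by
    intro x
    simp only [Φ, inner_add_right, inner_smul_right]
    rw [mul_assoc, inv_mul_cancel₀ huu]; ring
  have hΦ : ContDiffAt ℝ (⊤ : ℕ∞) Φ p := by
    refine contDiffAt_id.add (((hat.sub ?_).mul contDiffAt_const).smul contDiffAt_const)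
    exact contDiffAt_const.inner ℝ contDiffAt_id
  have hψd : HasFDerivAt ψ (fderiv ℝ ψ p) p := (hat.differentiableAt (by simp)).hasFDerivAt
  have hΦ' : HasFDerivAt Φ
      ((ContinuousLinearEquiv.refl ℝ (EuclideanSpace ℝ (Fin N)) : _ ≃L[ℝ] _) :
        EuclideanSpace ℝ (Fin N) →L[ℝ] EuclideanSpace ℝ (Fin N)) p := by
    have h1 : HasFDerivAt (fun x => ⟪u, x⟫) (innerSL ℝ u) p := (innerSL ℝ u).hasFDerivAt
    have h2 := (hasFDerivAt_id p).add
      (((hψd.sub h1).mul_const (⟪u, u⟫)⁻¹).smul_const u)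
    refine h2.congr_fderiv ?_
    ext1 z
    simp [hin]
  have hn : ((⊤ : ℕ∞) : WithTop ℕ∞) ≠ 0 := by simp
  let Ψ := hΦ.localInverse hΦ' hn
  have hΨp : Ψ (Φ p) = p := hΦ.localInverse_apply_image hΦ' hn
  have hΨ : ContDiffAt ℝ (⊤ : ℕ∞) Ψ (Φ p) := hΦ.to_localInverse hΦ' hn
  have hl : ∀ᶠ x in 𝓝 p, Ψ (Φ x) = x := (hΦ.hasStrictFDerivAt' hΦ' hn).eventually_left_inverse
  have hr : ∀ᶠ z in 𝓝 (Φ p), Φ (Ψ z) = z :=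
    (hΦ.hasStrictFDerivAt' hΦ' hn).eventually_right_inverse
  have hdiff : ∀ᶠ z in 𝓝 (Φ p), DifferentiableAt ℝ Ψ z := by
    have h1 : ContDiffAt ℝ 1 Ψ (Φ p) := hΨ.of_le (by exact_mod_cast le_top)
    filter_upwards [h1.eventually (by simp)] with z hz using hz.differentiableAt (by simp)
  have hin2 : ∀ᶠ z in 𝓝 (Φ p), Ψ z ∈ Ω :=
    hΨ.continuousAt.eventually (by rw [hΨp]; exact hΩ.mem_nhds hp)
  obtain ⟨ε, hε, hB⟩ := Metric.eventually_nhds_iff_ball.1 (hr.and (hdiff.and hin2))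
  have hΦB : ∀ᶠ x in 𝓝 p, Φ x ∈ ball (Φ p) ε := hΦ.continuousAt.eventually (ball_mem_nhds _ hε)
  filter_upwards [hl, hΦB] with x hx1 hx2 hx3
  set w := Φ x - Φ p with hw
  have huw : ⟪u, w⟫ = 0 := by rw [hw, inner_sub_right, hΦu, hΦu, hx3, sub_self]
  have hmem : ∀ s ∈ Icc (0 : ℝ) 1, Φ p + s • w ∈ ball (Φ p) ε := by
    intro s hs
    have h1 : ‖w‖ < ε := by rwa [mem_ball, dist_eq_norm] at hx2
    simp only [mem_ball, dist_self_add_left, norm_smul, Real.norm_eq_abs, abs_of_nonneg hs.1]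
    nlinarith [norm_nonneg w, hs.2]
  have hder : ∀ s ∈ Icc (0 : ℝ) 1, HasDerivAt (fun s : ℝ => g (Ψ (Φ p + s • w))) 0 s := by
    intro s hs
    obtain ⟨-, h2, h3⟩ := hB _ (hmem s hs)
    have h4 : HasDerivAt (fun s : ℝ => Φ p + s • w) w s := by
      simpa using ((hasDerivAt_id s).smul_const w).const_add (Φ p)
    have h5 := h2.hasFDerivAt.comp_hasDerivAt s h4
    have h6 := (hg.differentiableAt (hΩ.mem_nhds h3)).hasFDerivAt.comp_hasDerivAt s h5
    have h7 := (((hψ.contDiffAt (hΩ.mem_nhds h3)).differentiableAt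
      (by simp)).hasFDerivAt).comp_hasDerivAt s h5
    have h8 : HasDerivAt (fun _ : ℝ => ψ p) 0 s := hasDerivAt_const _ _
    have h9 : (fun _ : ℝ => ψ p) =ᶠ[𝓝 s] (ψ ∘ Ψ ∘ fun s : ℝ => Φ p + s • w) := by
      have : ∀ᶠ s' in 𝓝 s, Φ p + s' • w ∈ ball (Φ p) ε :=
        h4.continuousAt.eventually (isOpen_ball.mem_nhds (hmem s hs))
      filter_upwards [this] with s' hs'
      have h10 := (hB _ hs').1
      simp only [Function.comp]
      rw [← hΦu (Ψ _), h10, inner_add_right, inner_smul_right, huw, hΦu]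
      simp
    have h11 := (h7.congr_of_eventuallyEq h9).unique h8
    have h12 := hk _ h3 _ h11
    rw [h12] at h6
    exact h6
  have := constant_of_has_deriv_right_zero (f := fun s : ℝ => g (Ψ (Φ p + s • w)))
    (a := 0) (b := 1)
    (fun s hs => (hder s hs).continuousAt.continuousWithinAt)
    (fun s hs => (hder s ⟨hs.1, hs.2.le⟩).hasDerivWithinAt) 1 ⟨by simp, le_rfl⟩
  simpa [hw, hx1, hΨp] using this

theorem gradient_norm_constant_on_level_set (N : ℕ) (hN : 2 ≤ N)
    (Ω : Set (EuclideanSpace ℝ (Fin N))) (hΩ : IsOpen Ω)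
    (ψ : EuclideanSpace ℝ (Fin N) → ℝ) (hψ : ContDiffOn ℝ (⊤ : ℕ∞) ψ Ω)
    (hkin : KineticFormulation Ω (fun x => gradient ψ x))
    (α : ℝ) (hnv : ∀ x ∈ Ω, ψ x = α → gradient ψ x ≠ 0)
    (S : Set (EuclideanSpace ℝ (Fin N))) (x₀ : EuclideanSpace ℝ (Fin N))
    (hx₀ : x₀ ∈ {x ∈ Ω | ψ x = α})
    (hS : S = connectedComponentIn {x ∈ Ω | ψ x = α} x₀) :
    ∃ c : ℝ, 0 < c ∧ ∀ x ∈ S, ‖gradient ψ x‖ = c := by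
  set L := {x ∈ Ω | ψ x = α} with hL
  have hSL : S ⊆ L := hS ▸ connectedComponentIn_subset _ _
  have hSc : IsPreconnected S := hS ▸ isPreconnected_connectedComponentIn
  have hxS : x₀ ∈ S := hS ▸ mem_connectedComponentIn hx₀
  have hD : ContDiffOn ℝ 1 (fderiv ℝ ψ) Ω := hψ.fderiv_of_isOpen hΩ
    (WithTop.coe_le_coe.2 (le_top : (1 + 1 : ℕ∞) ≤ ⊤))
  let g : EuclideanSpace ℝ (Fin N) → ℝ := fun x => ⟪gradient ψ x, gradient ψ x⟫
  let T : (EuclideanSpace ℝ (Fin N) →L[ℝ] ℝ) →L[ℝ] EuclideanSpace ℝ (Fin N) :=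
    LinearMap.mkContinuous
      { toFun := fun l => (InnerProductSpace.toDual ℝ (EuclideanSpace ℝ (Fin N))).symm l
        map_add' := fun a b => map_add _ a b
        map_smul' := fun c a => by simp } 1 (fun l => by simp)
  have hT : ∀ l, T l = (InnerProductSpace.toDual ℝ (EuclideanSpace ℝ (Fin N))).symm l :=
    fun l => rfl
  have hgd : ∀ x ∈ Ω, HasFDerivAt (fun x => gradient ψ x)
      (T.comp (fderiv ℝ (fderiv ℝ ψ) x)) x := by
    intro x hx
    have hDx : HasFDerivAt (fderiv ℝ ψ) (fderiv ℝ (fderiv ℝ ψ) x) x :=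
      ((hD.contDiffAt (hΩ.mem_nhds hx)).differentiableAt (by simp)).hasFDerivAt
    exact (ContinuousLinearMap.hasFDerivAt
      T).comp x hDx
  have hg' : ∀ x ∈ Ω, ∃ g' : EuclideanSpace ℝ (Fin N) →L[ℝ] ℝ, HasFDerivAt g g' x ∧
      ∀ w, fderiv ℝ ψ x w = 0 → g' w = 0 := by
    intro x hx
    refine ⟨_, (hgd x hx).inner ℝ (hgd x hx), ?_⟩
    intro w hw
    have h1 := aux_second hΩ ψ hψ hkin x hx w hw
    have h2 : ⟪(InnerProductSpace.toDual ℝ (EuclideanSpace ℝ (Fin N))).symm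
        (fderiv ℝ (fderiv ℝ ψ) x w), gradient ψ x⟫ = 0 := by
      rw [InnerProductSpace.toDual_symm_apply, h1]
    have h3 := h2
    rw [real_inner_comm] at h3
    simp [hT, h2, h3]
  have hloc : ∀ p ∈ L, ∀ᶠ x in 𝓝 p, x ∈ L → g x = g p := by
    intro p hp
    have := aux_local hΩ ψ hψ g
      (fun x hx => by
        obtain ⟨g', h1, -⟩ := hg' x hx
        exact h1.differentiableAt.differentiableWithinAt)
      (fun x hx w hw => by
        obtain ⟨g', h1, h2⟩ := hg' x hx
        rw [h1.fderiv]
        exact h2 w hw) p hp.1 (hnv p hp.1 hp.2)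
    filter_upwards [this] with x hx hxL
    exact hx (hxL.2.trans hp.2.symm)
  have hcon : ∀ x ∈ S, g x = g x₀ := by
    intro x hx
    haveI : PreconnectedSpace S := isPreconnected_iff_preconnectedSpace.1 hSc
    have hlc : IsLocallyConstant (fun y : S => g y) := by
      rw [IsLocallyConstant.iff_eventually_eq]
      intro y
      have := continuous_subtype_val.continuousAt.eventually (hloc y (hSL y.2))
      filter_upwards [this] with z hz using hz (hSL z.2)
    exact hlc.apply_eq_of_preconnectedSpace ⟨x, hx⟩ ⟨x₀, hxS⟩
  refine ⟨‖gradient ψ x₀‖, norm_pos_iff.2 (hnv x₀ hx₀.1 hx₀.2), fun x hx => ?_⟩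
  have := hcon x hx
  simp only [g, real_inner_self_eq_norm_sq] at this
  exact (sq_eq_sq₀ (norm_nonneg _) (norm_nonneg _)).1 this
end
end

section
/- Let N ≥ 3, Ω ⊆ ℝ^N an open set, and ψ : Ω → ℝ a smooth function such that the gradient field u = ∇ψ satisfies the kinetic formulation. Assume that for some α ∈ ℝ, |∇ψ(x)| ≠ 0 for every x in the level set {x ∈ Ω : ψ(x) = α}, and let S be a connected component of this level set. Then every point x ∈ S is an umbilical point of the hypersurface S: there exists λ = λ(x) ∈ ℝ such that for every tangent vector w ∈ ℝ^N with w·∇ψ(x) = 0, the derivative at x of the Gauss map v = ∇ψ/|∇ψ| satisfies Dv(x) w = λ w. -/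
open MeasureTheory Metric Set Filter
open scoped RealInnerProductSpace ENNReal Topology

noncomputable section

lemma key1 {N : ℕ} {Ω : Set (EuclideanSpace ℝ (Fin N))} (hΩ : IsOpen Ω)
    {p : EuclideanSpace ℝ (Fin N) → ℝ} (hpc : ContinuousOn p Ω)
    {x : EuclideanSpace ℝ (Fin N)} (hx : x ∈ Ω) (px : p x = 0)
    {p' : EuclideanSpace ℝ (Fin N) →L[ℝ] ℝ} (hp : HasStrictFDerivAt p p' x)
    {v : EuclideanSpace ℝ (Fin N)} (hv : 0 < p' v)
    (H : ∀ φ : EuclideanSpace ℝ (Fin N) → ℝ, ContDiff ℝ (⊤ : ℕ∞) φ → HasCompactSupport φ →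
        tsupport φ ⊆ Ω →
        ∫ y in Ω, (if 0 < p y then (1 : ℝ) else 0) * fderiv ℝ φ y v = 0) : False := by
  have hA : IsOpen (Ω ∩ p ⁻¹' Ioi 0) := hpc.isOpen_inter_preimage hΩ isOpen_Ioi
  set A := Ω ∩ p ⁻¹' Ioi 0 with hAdef
  set f : EuclideanSpace ℝ (Fin N) → ℝ := A.indicator (fun _ => 1) with hf
  have hv0 : v ≠ 0 := by rintro rfl; simp at hv
  have hvn : 0 < ‖v‖ := norm_pos_iff.2 hv0
  have hc : 0 < p' v / (2 * ‖v‖) := by positivity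
  have h1 := hp.isLittleO.def hc
  have h2 : ∀ᶠ q in 𝓝 x, q ∈ Ω := hΩ.mem_nhds hx
  obtain ⟨δ1, hδ1, h1⟩ := Metric.eventually_nhds_iff_ball.1 h1
  obtain ⟨δ2, hδ2, h2⟩ := Metric.eventually_nhds_iff_ball.1 h2
  obtain ⟨δ, hδ, hδ1', hδ2'⟩ : ∃ δ > 0, δ ≤ δ1 ∧ δ ≤ δ2 :=
    ⟨min δ1 δ2, lt_min hδ1 hδ2, min_le_left _ _, min_le_right _ _⟩
  have hball : ball x δ ⊆ Ω := fun y hy => h2 y (ball_subset_ball hδ2' hy)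
  have mono : ∀ a ∈ ball x δ, ∀ s : ℝ, 0 < s → a + s • v ∈ ball x δ → p a < p (a + s • v) := by
    intro a ha s hs ha'
    have := h1 (a + s • v, a) (by
      rw [← ball_prod_same]
      exact ⟨ball_subset_ball hδ1' ha', ball_subset_ball hδ1' ha⟩)
    simp only [add_sub_cancel_left, map_smul, smul_eq_mul, norm_smul, Real.norm_eq_abs,
      abs_of_pos hs] at this
    have e : p' v / (2 * ‖v‖) * (s * ‖v‖) = s * p' v / 2 := by field_simp
    rw [e] at this
    have h3 := (abs_le.1 this).1
    have h4 : 0 < s * p' v := by positivity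
    linarith
  obtain ⟨s, hs, hsv⟩ : ∃ s : ℝ, 0 < s ∧ s * ‖v‖ = δ / 8 :=
    ⟨δ / (8 * ‖v‖), by positivity, by field_simp⟩
  let η : ContDiffBump (0 : EuclideanSpace ℝ (Fin N)) :=
    ⟨δ / 8, δ / 4, by positivity, by linarith⟩
  have hfm : Measurable f := measurable_const.indicator hA.measurableSet
  have hfl : LocallyIntegrable f volume :=
    (locallyIntegrable_const (1 : ℝ)).indicator hA.measurableSet
  have hηc : HasCompactSupport η := η.hasCompactSupport
  have hη : ∀ n : ℕ∞, ContDiff ℝ n η := fun n => η.contDiff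
  set L := ContinuousLinearMap.mul ℝ ℝ
  have hin : ∀ t : ℝ, |t| ≤ s → ∀ y, ‖y‖ ≤ δ / 4 → x + t • v - y ∈ ball x δ := by
    intro t ht y hy
    rw [mem_ball_iff_norm]
    calc ‖x + t • v - y - x‖ = ‖t • v - y‖ := by congr 1; abel
      _ ≤ ‖t • v‖ + ‖y‖ := norm_sub_le _ _
      _ ≤ s * ‖v‖ + δ / 4 := by
        rw [norm_smul, Real.norm_eq_abs]; gcongr
      _ < δ := by linarith
  -- derivative of the convolution along `v` vanishes
  have hder : ∀ t : ℝ, |t| ≤ s →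
      HasDerivAt (fun t : ℝ => (convolution f η L volume) (x + t • v)) 0 t := by
    intro t ht
    have d1 := hηc.hasFDerivAt_convolution_right L hfl (hη 1) (x + t • v)
    have d2 : HasDerivAt (fun t : ℝ => x + t • v) v t := by
      simpa using ((hasDerivAt_id t).smul_const v).const_add x
    have d3 := d1.comp_hasDerivAt t d2
    refine HasDerivAt.congr_deriv (f := fun t : ℝ => (convolution f η L volume) (x + t • v)) d3 ?_
    rw [convolution_precompR_apply L hfl (hηc.fderiv ℝ)
      ((hη 1).continuous_fderiv (by simp))]
    have hH := H (fun y => η (x + t • v - y))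
      ((hη ⊤).comp (contDiff_const.sub contDiff_id)) ?_ ?_
    · rw [← integral_indicator hΩ.measurableSet] at hH
      rw [convolution_def]
      refine Eq.trans ?_ (neg_eq_zero.2 hH)
      rw [← integral_neg]
      congr 1
      ext y
      have e1 : fderiv ℝ (fun y => η (x + t • v - y)) y v = - fderiv ℝ η (x + t • v - y) v := by
        have g1 : HasFDerivAt η (fderiv ℝ η (x + t • v - y)) (x + t • v - y) :=
          ((hη 1).differentiable (by simp) _).hasFDerivAt
        have g2 : HasFDerivAt (fun y => x + t • v - y)
          (-ContinuousLinearMap.id ℝ (EuclideanSpace ℝ (Fin N))) y :=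
          (hasFDerivAt_id y).const_sub _
        have := (g1.comp y g2).fderiv
        change fderiv ℝ (η ∘ fun y => x + t • v - y) y v = _
        rw [this]
        simp
      by_cases hy : y ∈ Ω <;> by_cases hy' : 0 < p y <;>
        simp [hf, hAdef, indicator, hy, hy', e1, L]
    · apply HasCompactSupport.of_support_subset_isCompact (isCompact_closedBall (x + t • v) (δ / 4))
      intro y hy
      have : x + t • v - y ∈ Function.support η := hy
      rw [η.support_eq] at this
      rw [mem_closedBall, dist_comm, dist_eq_norm]
      rw [mem_ball_zero_iff] at this
      exact this.le
    · have : tsupport (fun y => η (x + t • v - y)) ⊆ closedBall (x + t • v) (δ / 4) := by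
        apply closure_minimal _ isClosed_closedBall
        intro y hy
        have : x + t • v - y ∈ Function.support η := hy
        rw [η.support_eq] at this
        rw [mem_closedBall, dist_comm, dist_eq_norm]
        rw [mem_ball_zero_iff] at this
        exact this.le
      refine this.trans fun y hy => hball ?_
      rw [mem_closedBall, dist_comm, dist_eq_norm] at hy
      have := hin t ht (x + t • v - y) hy
      simpa using this
  have hconst : (convolution f η L volume) (x + s • v) =
      (convolution f η L volume) (x + (-s) • v) := by
    have := (convex_Icc (-s) s).is_const_of_fderivWithin_eq_zero (𝕜 := ℝ)
      (f := fun t : ℝ => (convolution f η L volume) (x + t • v)) (x := s) (y := -s)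
      (fun t ht => (hder t (abs_le.2 ht)).differentiableAt.differentiableWithinAt)
      (fun t ht => by
        have h0 := (hder t (abs_le.2 ht)).hasFDerivAt.hasFDerivWithinAt (s := Icc (-s) s)
        rw [h0.fderivWithin ((uniqueDiffOn_Icc (by linarith)) t ht)]
        ext; simp)
      ⟨by linarith, le_rfl⟩ ⟨le_rfl, by linarith⟩
    exact this
  have hint : ∀ z, Integrable (fun y => f (z - y) * η y) := by
    intro z
    have := hηc.convolutionExists_right L hfl (hη 0).continuous z
    exact this.integrable_swap
  rw [convolution_eq_swap, convolution_eq_swap, ← sub_eq_zero] at hconst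
  change (∫ y, f (x + s • v - y) * η y) - (∫ y, f (x + (-s) • v - y) * η y) = 0 at hconst
  rw [← integral_sub (hint _) (hint _)] at hconst
  have hnn : ∀ y, 0 ≤ f (x + s • v - y) * η y - f (x + (-s) • v - y) * η y := by
    intro y
    by_cases hy : ‖y‖ ≤ δ / 4
    · have i1 := hin s (by rw [abs_of_pos hs]) y hy
      have i2 := hin (-s) (by rw [abs_neg, abs_of_pos hs]) y hy
      have e : x + (-s) • v - y + (2 * s) • v = x + s • v - y := by module
      have m := mono _ i2 (2 * s) (by positivity) (by rw [e]; exact i1)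
      rw [e] at m
      have hle : f (x + (-s) • v - y) ≤ f (x + s • v - y) := by
        by_cases h : x + (-s) • v - y ∈ A
        · have h' : x + s • v - y ∈ A := ⟨hball i1, lt_trans h.2 m⟩
          simp only [hf, indicator_of_mem h, indicator_of_mem h', le_refl]
        · simp only [hf, indicator_of_notMem h]
          exact indicator_nonneg (fun _ _ => zero_le_one) _
      have := mul_le_mul_of_nonneg_right hle (η.nonneg' y)
      linarith
    · have : η y = 0 := η.zero_of_le_dist (by
        rw [dist_zero_right]; exact (not_le.1 hy).le)
      simp [this]
  rw [integral_eq_zero_iff_of_nonneg hnn ((hint _).sub (hint _))] at hconst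
  have i1 := hin s (by rw [abs_of_pos hs]) 0 (by simp; positivity)
  have i2 := hin (-s) (by rw [abs_neg, abs_of_pos hs]) 0 (by simp; positivity)
  rw [sub_zero] at i1 i2
  have m1 : 0 < p (x + s • v) := px ▸ mono x (mem_ball_self hδ) s hs i1
  have m2 : p (x + (-s) • v) < 0 := by
    have := mono _ i2 s hs (by
      have e : x + (-s) • v + s • v = x := by module
      rw [e]; exact mem_ball_self hδ)
    simpa [px] using this
  have c1 : ∀ᶠ y in 𝓝 (0 : EuclideanSpace ℝ (Fin N)), x + s • v - y ∈ A := by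
    have : Tendsto (fun y => x + s • v - y) (𝓝 0) (𝓝 (x + s • v)) := by
      have : ContinuousAt (fun y => x + s • v - y) 0 := by fun_prop
      simpa [ContinuousAt] using this
    exact this (hA.mem_nhds ⟨hball i1, m1⟩)
  have c2 : ∀ᶠ y in 𝓝 (0 : EuclideanSpace ℝ (Fin N)), p (x + (-s) • v - y) < 0 := by
    have : Tendsto (fun y => x + (-s) • v - y) (𝓝 0) (𝓝 (x + (-s) • v)) := by
      have : ContinuousAt (fun y => x + (-s) • v - y) 0 := by fun_prop
      simpa [ContinuousAt] using this
    exact this ((hpc.continuousAt (hΩ.mem_nhds (hball i2))).eventually_lt_const m2)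
  have c3 : ∀ᶠ y in 𝓝 (0 : EuclideanSpace ℝ (Fin N)), η y = 1 := η.eventuallyEq_one
  have c4 := c1.and (c2.and c3)
  have hpos := Measure.measure_pos_of_mem_nhds (volume : Measure (EuclideanSpace ℝ (Fin N))) c4
  refine hpos.ne' (measure_mono_null ?_ (ae_iff.1 hconst))
  rintro y ⟨k1, k2, k3⟩
  have k4 : x + (-s) • v - y ∉ A := fun h => lt_asymm k2 h.2
  change ¬ (f (x + s • v - y) * η y - f (x + (-s) • v - y) * η y = 0)
  rw [k3]
  simp only [hf, indicator_of_mem k1, indicator_of_notMem k4]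
  norm_num

/-- A linear map on which every vector of `u^⊥` is an eigenvector is scalar on `u^⊥`. -/
lemma key2 {N : ℕ} (U : EuclideanSpace ℝ (Fin N) →L[ℝ] EuclideanSpace ℝ (Fin N))
    (u : EuclideanSpace ℝ (Fin N))
    (h : ∀ ξ, ‖ξ‖ = 1 → ⟪ξ, u⟫ = 0 → ∀ v, ⟪v, ξ⟫ = 0 → ⟪U ξ, v⟫ = 0) :
    ∃ μ : ℝ, ∀ w, ⟪w, u⟫ = 0 → U w = μ • w := by
  have h' : ∀ w, ⟪w, u⟫ = 0 → ∀ v, ⟪v, w⟫ = 0 → ⟪U w, v⟫ = 0 := by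
    intro w hw v hv
    by_cases h0 : w = 0
    · simp [h0]
    have hn : ‖w‖ ≠ 0 := norm_ne_zero_iff.2 h0
    have := h (‖w‖⁻¹ • w) (by rw [norm_smul, norm_inv, norm_norm, inv_mul_cancel₀ hn])
      (by rw [real_inner_smul_left, hw, mul_zero]) v (by rw [real_inner_smul_right, hv, mul_zero])
    rw [map_smul, real_inner_smul_left] at this
    exact (mul_eq_zero.1 this).resolve_left (inv_ne_zero hn)
  -- each vector is an eigenvector
  have he : ∀ w, ⟪w, u⟫ = 0 → ∃ c : ℝ, U w = c • w := by
    intro w hw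
    by_cases h0 : w = 0
    · exact ⟨0, by simp [h0]⟩
    have hn : ⟪w, w⟫ ≠ 0 := inner_self_ne_zero.2 h0
    refine ⟨⟪U w, w⟫ / ⟪w, w⟫, ?_⟩
    set c := ⟪U w, w⟫ / ⟪w, w⟫ with hc
    have o : ⟪U w - c • w, w⟫ = 0 := by
      rw [inner_sub_left, real_inner_smul_left, hc, div_mul_cancel₀ _ hn, sub_self]
    have o2 := h' w hw _ o
    have : ⟪U w - c • w, U w - c • w⟫ = 0 := by
      rw [inner_sub_left, o2, real_inner_smul_left, real_inner_comm, o]; simp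
    exact sub_eq_zero.1 (inner_self_eq_zero.1 this)
  by_cases hex : ∃ w0, ⟪w0, u⟫ = 0 ∧ w0 ≠ 0
  · obtain ⟨w0, hw0, hne⟩ := hex
    obtain ⟨μ, hμ⟩ := he w0 hw0
    refine ⟨μ, fun w hw => ?_⟩
    have hn : ⟪w0, w0⟫ ≠ 0 := inner_self_ne_zero.2 hne
    set a := ⟪w, w0⟫ / ⟪w0, w0⟫ with ha
    obtain ⟨z, hz⟩ : ∃ z, z = w - a • w0 := ⟨_, rfl⟩
    have hzu : ⟪z, u⟫ = 0 := by rw [hz, inner_sub_left, real_inner_smul_left, hw, hw0]; simp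
    have hzo : ⟪z, w0⟫ = 0 := by
      rw [hz, inner_sub_left, real_inner_smul_left, ha, div_mul_cancel₀ _ hn, sub_self]
    have hwz : w = a • w0 + z := by rw [hz]; abel
    obtain ⟨c, hc⟩ := he z hzu
    obtain ⟨d, hd⟩ := he (w0 + z) (by rw [inner_add_left, hw0, hzu, add_zero])
    rw [map_add, hμ, hc] at hd
    have e1 : d = μ := by
      have := congrArg (fun y => ⟪y, w0⟫) hd
      simp only [inner_add_left, real_inner_smul_left, hzo, mul_zero, add_zero] at this
      exact (mul_right_cancel₀ hn this).symm
    have e2 : c • z = μ • z := by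
      rw [e1, smul_add] at hd
      exact add_left_cancel hd
    rw [hwz, map_add, map_smul, hμ, hc, e2, smul_add, smul_comm]
  · push Not at hex
    exact ⟨0, fun w hw => by simp [hex w hw]⟩

theorem level_sets_umbilical_points (N : ℕ) (hN : 3 ≤ N)
    (Ω : Set (EuclideanSpace ℝ (Fin N))) (hΩ : IsOpen Ω)
    (ψ : EuclideanSpace ℝ (Fin N) → ℝ) (hψ : ContDiffOn ℝ (⊤ : ℕ∞) ψ Ω)
    (hkin : KineticFormulation Ω (fun x => gradient ψ x))
    (α : ℝ) (hnv : ∀ x ∈ Ω, ψ x = α → gradient ψ x ≠ 0)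
    (S : Set (EuclideanSpace ℝ (Fin N))) (x₀ : EuclideanSpace ℝ (Fin N))
    (hx₀ : x₀ ∈ {x ∈ Ω | ψ x = α})
    (hS : S = connectedComponentIn {x ∈ Ω | ψ x = α} x₀) :
    ∀ x ∈ S, ∃ lam : ℝ, ∀ w : EuclideanSpace ℝ (Fin N), ⟪w, gradient ψ x⟫ = 0 →
      fderiv ℝ (fun y => ‖gradient ψ y‖⁻¹ • gradient ψ y) x w = lam • w := by
  intro x hxS
  have hx : x ∈ {x ∈ Ω | ψ x = α} := by
    rw [hS] at hxS
    exact connectedComponentIn_subset _ _ hxS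
  obtain ⟨hxΩ, hxα⟩ := hx
  have hu0 : gradient ψ x ≠ 0 := hnv x hxΩ hxα
  have hfd : ContDiffOn ℝ 1 (fderiv ℝ ψ) Ω := hψ.fderiv_of_isOpen hΩ (by norm_cast)
  have hfdx : ContDiffAt ℝ 1 (fderiv ℝ ψ) x := hfd.contDiffAt (hΩ.mem_nhds hxΩ)
  have hst := hfdx.hasStrictFDerivAt (by simp)
  set D := fderiv ℝ (fderiv ℝ ψ) x with hD
  have hsym : IsSymmSndFDerivAt ℝ ψ x :=
    (hψ.contDiffAt (hΩ.mem_nhds hxΩ)).isSymmSndFDerivAt (by simp; norm_cast)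
  have hin : ∀ (φ : EuclideanSpace ℝ (Fin N) → ℝ) y ξ, ⟪gradient φ y, ξ⟫ = fderiv ℝ φ y ξ := by
    intro φ y ξ
    simp [gradient]
  let T := (InnerProductSpace.toDual ℝ (EuclideanSpace ℝ (Fin N))).symm.toContinuousLinearEquiv.toContinuousLinearMap
  let U : EuclideanSpace ℝ (Fin N) →L[ℝ] EuclideanSpace ℝ (Fin N) := T.comp D
  have hU : HasFDerivAt (gradient ψ) U x :=
    T.hasFDerivAt.comp x hst.hasFDerivAt
  have hUin : ∀ a b, ⟪U a, b⟫ = D a b := by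
    intro a b
    simp [U, T]
  have hmain : ∀ ξ, ‖ξ‖ = 1 → ⟪ξ, gradient ψ x⟫ = 0 → ∀ v, ⟪v, ξ⟫ = 0 → ⟪U ξ, v⟫ = 0 := by
    intro ξ hξ hξu
    have hpos : ∀ v, ⟪v, ξ⟫ = 0 → ¬ 0 < D ξ v := by
      intro v hv hlt
      have hp : HasStrictFDerivAt (fun y => fderiv ℝ ψ y ξ) (D.flip ξ) x :=
        ((ContinuousLinearMap.apply ℝ ℝ ξ).hasStrictFDerivAt).comp x hst
      refine key1 hΩ (p := fun y => fderiv ℝ ψ y ξ)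
        (hfd.continuousOn.clm_apply continuousOn_const) hxΩ ?_ hp (v := v) ?_ ?_
      · rw [← hin, real_inner_comm, hξu]
      · rw [ContinuousLinearMap.flip_apply, hsym.eq]; exact hlt
      · intro φ h1 h2 h3
        have := hkin ξ hξ v hv φ h1 h2 h3
        simp only [chi, hin] at this
        simp only [← hin φ, real_inner_comm]
        exact this
    intro v hv
    rw [hUin]
    apply le_antisymm (not_lt.1 (hpos v hv))
    have := not_lt.1 (hpos (-v) (by rw [inner_neg_left, hv, neg_zero]))
    rw [map_neg] at this
    linarith
  obtain ⟨μ, hμ⟩ := key2 U (gradient ψ x) hmain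
  refine ⟨‖gradient ψ x‖⁻¹ * μ, fun w hw => ?_⟩
  have hn : ‖gradient ψ x‖ ≠ 0 := norm_ne_zero_iff.2 hu0
  have hsq := hU.norm_sq
  have hs : HasDerivAt (fun t : ℝ => (√t)⁻¹) (deriv (fun t : ℝ => (√t)⁻¹) (‖gradient ψ x‖ ^ 2))
      (‖gradient ψ x‖ ^ 2) := by
    apply DifferentiableAt.hasDerivAt
    have : ‖gradient ψ x‖ ^ 2 ≠ 0 := pow_ne_zero _ hn
    exact (Real.hasDerivAt_sqrt this).differentiableAt.inv (by
      rw [Real.sqrt_sq (norm_nonneg _)]; exact hn)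
  have hg := hs.comp_hasFDerivAt x hsq
  have hge : ((fun t : ℝ => (√t)⁻¹) ∘ fun y => ‖gradient ψ y‖ ^ 2) =
      fun y => ‖gradient ψ y‖⁻¹ := by
    ext y
    simp [Real.sqrt_sq (norm_nonneg _)]
  rw [hge] at hg
  have hfin := (hg.smul hU).fderiv
  have hfin' : fderiv ℝ (fun y => ‖gradient ψ y‖⁻¹ • gradient ψ y) x = _ := hfin
  rw [hfin']
  have h0 : ⟪gradient ψ x, U w⟫ = 0 := by
    rw [hμ w hw, real_inner_smul_right, real_inner_comm, hw, mul_zero]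
  have hw' : fderiv ℝ ψ x w = 0 := by rw [← hin, real_inner_comm, hw]
  simp [hw', hμ w hw, smul_smul]
end
end

section
/- Let N ≥ 3, Ω ⊆ ℝ^N an open set, and ψ : Ω → ℝ a smooth function such that the gradient field u = ∇ψ satisfies the kinetic formulation. Assume that for some α ∈ ℝ, |∇ψ(x)| ≠ 0 for every x in the level set {x ∈ Ω : ψ(x) = α}, and let S be a connected component of this level set. Then there exist an open neighborhood ω ⊆ Ω of S, an open interval I ⊆ ℝ, and a smooth function F : I → ℝ with F′ ≠ 0 on I, such that either there is a point P ∈ ℝ^N with ψ(x) = F(|x − P|) for every x ∈ ω, or there is a vector ξ ∈ S^{N−1} with ψ(x) = F(x·ξ) for every x ∈ ω. -/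
open MeasureTheory Metric Set Filter
open scoped RealInnerProductSpace ENNReal Topology

noncomputable section

lemma kin_sign {N : ℕ} {Ω : Set (EuclideanSpace ℝ (Fin N))} (hΩ : IsOpen Ω)
    {u : EuclideanSpace ℝ (Fin N) → EuclideanSpace ℝ (Fin N)} (hu : ContinuousOn u Ω)
    (hk : KineticFormulation Ω u) {B : Set (EuclideanSpace ℝ (Fin N))} (hB : IsOpen B)
    (hBc : Convex ℝ B) (hBΩ : B ⊆ Ω) {y z ξ : EuclideanSpace ℝ (Fin N)} (hy : y ∈ B)
    (hz : z ∈ B) (hξ : ‖ξ‖ = 1) (hort : ⟪z - y, ξ⟫ = 0) (h1 : 0 < ⟪u y, ξ⟫) :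
    0 ≤ ⟪u z, ξ⟫ := by
  by_contra h2
  push Not at h2
  have hf : ContinuousOn (fun x => ⟪u x, ξ⟫) Ω := hu.inner continuousOn_const
  set A : Set (EuclideanSpace ℝ (Fin N)) := Ω ∩ (fun x => ⟪u x, ξ⟫) ⁻¹' (Ioi 0) with hA
  have hAo : IsOpen A := hf.isOpen_inter_preimage hΩ isOpen_Ioi
  set A' : Set (EuclideanSpace ℝ (Fin N)) := Ω ∩ (fun x => ⟪u x, ξ⟫) ⁻¹' (Iio 0) with hA'
  have hAo' : IsOpen A' := hf.isOpen_inter_preimage hΩ isOpen_Iio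
  obtain ⟨ε₁, hε₁, hb₁⟩ := Metric.isOpen_iff.1 (hAo.inter hB) y ⟨⟨hBΩ hy, h1⟩, hy⟩
  obtain ⟨ε₂, hε₂, hb₂⟩ := Metric.isOpen_iff.1 (hAo'.inter hB) z ⟨⟨hBΩ hz, h2⟩, hz⟩
  set ε := min ε₁ ε₂ with hε
  have hε0 : 0 < ε := lt_min hε₁ hε₂
  have hby : ball y ε ⊆ A ∩ B := (ball_subset_ball (min_le_left _ _)).trans hb₁
  have hbz : ball z ε ⊆ A' ∩ B := (ball_subset_ball (min_le_right _ _)).trans hb₂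
  let ρ : ContDiffBump (0 : EuclideanSpace ℝ (Fin N)) :=
    ⟨ε / 4, ε / 2, by positivity, by linarith⟩
  have hρ : ContDiff ℝ (⊤ : ℕ∞) ρ := ρ.contDiff
  have hρd : Differentiable ℝ ρ := hρ.differentiable (by simp)
  have hρz : ∀ x, ε ≤ ‖x‖ → ρ x = 0 := by
    intro x hx
    apply ρ.zero_of_le_dist
    change ε / 2 ≤ dist x 0
    rw [dist_zero_right]; linarith
  set v := z - y with hv
  set g : ℝ → ℝ := fun t => ∫ x in A, ρ (x - (y + t • v)) with hg
  have hcs : HasCompactSupport (fderiv ℝ ρ) := ρ.hasCompactSupport.fderiv ℝ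
  have hcont : Continuous (fderiv ℝ ρ) := hρ.continuous_fderiv (by simp)
  obtain ⟨C, hC⟩ := hcs.exists_bound_of_continuous hcont
  have hC0 : 0 ≤ C := (norm_nonneg _).trans (hC 0)
  -- compact support of translates
  have htr : ∀ t : ℝ, HasCompactSupport (fun x => ρ (x - (y + t • v))) := fun t =>
    ρ.hasCompactSupport.comp_homeomorph (Homeomorph.subRight (y + t • v))
  have hder : ∀ t : ℝ, HasDerivAt g (∫ x in A, - (fderiv ℝ ρ (x - (y + t • v)) v)) t := by
    intro t
    have hint : Integrable (fun x => ρ (x - (y + t • v))) (volume.restrict A) :=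
      ((hρ.continuous.comp (by fun_prop)).integrable_of_hasCompactSupport (htr t)).restrict
    refine (hasDerivAt_integral_of_dominated_loc_of_deriv_le
      (s := ball t 1) (F := fun t x => ρ (x - (y + t • v)))
      (bound := (closedBall y (ε + (|t| + 1) * ‖v‖)).indicator (fun _ => C * ‖v‖))
      (F' := fun t x => - (fderiv ℝ ρ (x - (y + t • v)) v)) (ball_mem_nhds t one_pos)
      ?_ hint ?_ ?_ ?_ ?_).2
    · exact Eventually.of_forall fun s =>
        ((hρ.continuous.comp (by fun_prop) : Continuous
          (fun x => ρ (x - (y + s • v))))).aestronglyMeasurable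
    · have : Continuous (fun x => - (fderiv ℝ ρ (x - (y + t • v)) v)) := by fun_prop
      exact this.aestronglyMeasurable
    · refine Eventually.of_forall fun x s hs => ?_
      by_cases hx : x ∈ closedBall y (ε + (|t| + 1) * ‖v‖)
      · rw [indicator_of_mem hx, norm_neg]
        exact (ContinuousLinearMap.le_opNorm _ _).trans
          (mul_le_mul_of_nonneg_right (hC _) (norm_nonneg _))
      · rw [indicator_of_notMem hx]
        have hs' : |s| ≤ |t| + 1 := by
          rw [mem_ball, Real.dist_eq] at hs
          have := abs_sub_abs_le_abs_sub s t
          linarith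
        have hxn : ε < ‖x - (y + s • v)‖ := by
          rw [mem_closedBall, dist_eq_norm] at hx
          push Not at hx
          have h3 : ‖x - y‖ ≤ ‖x - (y + s • v)‖ + ‖s • v‖ := by
            have : x - y = (x - (y + s • v)) + s • v := by abel
            rw [this]; exact norm_add_le _ _
          rw [norm_smul, Real.norm_eq_abs] at h3
          have := mul_le_mul_of_nonneg_right hs' (norm_nonneg v)
          linarith
        have : x - (y + s • v) ∉ tsupport ρ := by
          rw [ρ.tsupport_eq, mem_closedBall, dist_zero_right]
          change ¬ _ ≤ ε / 2
          linarith
        have h0 : fderiv ℝ ρ (x - (y + s • v)) = 0 := by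
          by_contra hne
          exact this (support_fderiv_subset ℝ hne)
        rw [h0]; simp
    · refine Integrable.restrict ?_
      rw [integrable_indicator_iff measurableSet_closedBall]
      exact integrableOn_const (measure_closedBall_lt_top.ne)
    · refine Eventually.of_forall fun x s _ => ?_
      have h4 : HasDerivAt (fun s : ℝ => x - (y + s • v)) (-v) s := by
        have := (((hasDerivAt_id s).smul_const v).const_add y).const_sub x
        simpa using this
      have := (hρd (x - (y + s • v))).hasFDerivAt.comp_hasDerivAt s h4
      rw [map_neg] at this
      exact this
  have hzero : ∀ t ∈ Ico (0 : ℝ) 1, HasDerivWithinAt g 0 (Ici t) t := by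
    intro t ht
    have hk' := hk ξ hξ v hort (fun x => ρ (x - (y + t • v)))
      (hρ.comp (contDiff_id.sub contDiff_const)) (htr t) ?_
    · have h5 : ∀ x, ⟪v, gradient (fun x => ρ (x - (y + t • v))) x⟫
          = fderiv ℝ ρ (x - (y + t • v)) v := by
        intro x
        rw [real_inner_comm, inner_gradient_left]
        rw [fderiv_comp_sub]
      have h6 : ∫ x in A, (fderiv ℝ ρ (x - (y + t • v)) v) = 0 := by
        rw [← hk']
        have : A = Ω ∩ A := by rw [hA, ← inter_assoc, inter_self]
        rw [this, ← setIntegral_indicator hAo.measurableSet]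
        refine setIntegral_congr_fun hΩ.measurableSet fun x hx => ?_
        simp only [h5, chi]
        by_cases hxA : 0 < ⟪u x, ξ⟫
        · rw [indicator_of_mem (show x ∈ A from ⟨hx, hxA⟩), if_pos hxA, one_mul]
        · rw [indicator_of_notMem (fun h : x ∈ A => hxA h.2), if_neg hxA, zero_mul]
      have := hder t
      rw [integral_neg, h6, neg_zero] at this
      exact this.hasDerivWithinAt
    · refine (closure_minimal (t := closedBall (y + t • v) (ε / 2)) ?_ isClosed_closedBall).trans ?_
      · intro x hx
        have : x - (y + t • v) ∈ tsupport ρ := subset_tsupport _ hx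
        rw [ρ.tsupport_eq, mem_closedBall, dist_zero_right] at this
        rwa [mem_closedBall, dist_eq_norm]
      · intro x hx
        apply hBΩ
        rw [mem_closedBall, dist_eq_norm] at hx
        set w := x - (y + t • v) with hw
        have hyw : y + w ∈ B := (hby (by rw [mem_ball, dist_eq_norm]; simp; linarith)).2
        have hzw : z + w ∈ B := (hbz (by rw [mem_ball, dist_eq_norm]; simp; linarith)).2
        have : x = (1 - t) • (y + w) + t • (z + w) := by
          rw [hw, hv]; module
        rw [this]
        exact hBc hyw hzw (by linarith [ht.2]) ht.1 (by ring)
  have hgc : ContinuousOn g (Icc 0 1) := fun t _ => (hder t).continuousAt.continuousWithinAt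
  have hconst := constant_of_has_deriv_right_zero hgc hzero 1 (by simp)
  have hg0 : g 0 = ∫ x, ρ x := by
    simp only [hg, zero_smul, add_zero]
    rw [setIntegral_eq_integral_of_forall_compl_eq_zero]
    · exact integral_sub_right_eq_self (fun x => ρ x) y
    · intro x hx
      apply hρz
      by_contra hlt
      exact hx (hby (by rw [mem_ball, dist_eq_norm]; linarith)).1
  have hg1 : g 1 = 0 := by
    simp only [hg, one_smul, hv, add_sub_cancel]
    refine setIntegral_eq_zero_of_forall_eq_zero fun x hx => ?_
    apply hρz
    by_contra hlt
    have h7 := (hbz (show x ∈ ball z ε by rw [mem_ball, dist_eq_norm]; linarith)).1.2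
    exact lt_asymm (mem_Ioi.1 hx.2) (show ⟪u x, ξ⟫ < 0 from h7)
  have hpos : 0 < ∫ x, ρ x := ρ.integral_pos
  rw [hg0, hg1] at hconst
  linarith

lemma kin_cop {N : ℕ} {Ω : Set (EuclideanSpace ℝ (Fin N))} (hΩ : IsOpen Ω)
    {u : EuclideanSpace ℝ (Fin N) → EuclideanSpace ℝ (Fin N)} (hu : ContinuousOn u Ω)
    (hk : KineticFormulation Ω u) {B : Set (EuclideanSpace ℝ (Fin N))} (hB : IsOpen B)
    (hBc : Convex ℝ B) (hBΩ : B ⊆ Ω) {y z : EuclideanSpace ℝ (Fin N)} (hy : y ∈ B)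
    (hz : z ∈ B) :
    u y ∈ Submodule.span ℝ {z - y} ∨ u z ∈ Submodule.span ℝ {u y, z - y} := by
  set v := z - y with hv
  set c : ℝ := ⟪v, u y⟫ / ‖v‖ ^ 2 with hc
  set p := u y - c • v with hp
  have hvp : ⟪v, p⟫ = 0 := by
    rw [hp, inner_sub_right, inner_smul_right, real_inner_self_eq_norm_sq, hc]
    by_cases h : v = 0
    · simp [h]
    · have : ‖v‖ ≠ 0 := norm_ne_zero_iff.2 h
      field_simp; ring
  have hup : ⟪u y, p⟫ = ‖p‖ ^ 2 := by
    have : u y = p + c • v := by rw [hp]; abel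
    rw [this, inner_add_left, inner_smul_left, hvp, real_inner_self_eq_norm_sq]; simp
  by_cases hp0 : p = 0
  · left
    rw [Submodule.mem_span_singleton]
    exact ⟨c, (sub_eq_zero.1 hp0).symm⟩
  right
  have hpp : 0 < ‖p‖ ^ 2 := by have := norm_pos_iff.2 hp0; positivity
  have key : ∀ ξ, ⟪u y, ξ⟫ = 0 → ⟪v, ξ⟫ = 0 → 0 ≤ ⟪u z, ξ⟫ := by
    intro ξ h1 h2
    have h3 : ∀ ε : ℝ, 0 < ε → 0 ≤ ⟪u z, ξ⟫ + ε * ⟪u z, p⟫ := by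
      intro ε hε
      set ζ := ξ + ε • p with hζ
      have hyζ : 0 < ⟪u y, ζ⟫ := by
        rw [hζ, inner_add_right, inner_smul_right, h1, hup]; positivity
      have hvζ : ⟪v, ζ⟫ = 0 := by
        rw [hζ, inner_add_right, inner_smul_right, h2, hvp]; simp
      have hζ0 : ζ ≠ 0 := by rintro h; rw [h] at hyζ; simp at hyζ
      have hn : 0 < ‖ζ‖ := norm_pos_iff.2 hζ0
      have := kin_sign hΩ hu hk hB hBc hBΩ hy hz (ξ := ‖ζ‖⁻¹ • ζ)
        (by rw [norm_smul, norm_inv, norm_norm, inv_mul_cancel₀ hn.ne'])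
        (by rw [inner_smul_right, hvζ, mul_zero])
        (by rw [inner_smul_right]; positivity)
      rw [inner_smul_right] at this
      have h4 := nonneg_of_mul_nonneg_right this (inv_pos.2 hn)
      rwa [hζ, inner_add_right, inner_smul_right] at h4
    have ht : Tendsto (fun ε : ℝ => ⟪u z, ξ⟫ + ε * ⟪u z, p⟫) (𝓝[>] 0)
        (𝓝 (⟪u z, ξ⟫ + 0 * ⟪u z, p⟫)) := by
      refine Tendsto.mono_left ?_ nhdsWithin_le_nhds
      exact (by fun_prop : Continuous (fun ε : ℝ => ⟪u z, ξ⟫ + ε * ⟪u z, p⟫)).tendsto 0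
    rw [zero_mul, add_zero] at ht
    exact ge_of_tendsto ht (eventually_nhdsWithin_of_forall fun ε hε => h3 ε hε)
  rw [← Submodule.orthogonal_orthogonal (Submodule.span ℝ {u y, v}), Submodule.mem_orthogonal]
  intro ξ hξ
  rw [Submodule.mem_orthogonal] at hξ
  have h1 := hξ (u y) (Submodule.subset_span (by simp))
  have h2 := hξ v (Submodule.subset_span (by simp))
  have h3 := key ξ h1 h2
  have h4 := key (-ξ) (by rw [inner_neg_right, h1, neg_zero]) (by rw [inner_neg_right, h2, neg_zero])
  rw [inner_neg_right] at h4
  rw [real_inner_comm]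
  linarith

/-- pairwise coplanarity of the lines `x + ℝ u(x)` -/
def Cop {N : ℕ} (u : EuclideanSpace ℝ (Fin N) → EuclideanSpace ℝ (Fin N))
    (B : Set (EuclideanSpace ℝ (Fin N))) : Prop :=
  ∀ y ∈ B, ∀ z ∈ B, u y ∈ Submodule.span ℝ {z - y} ∨ u z ∈ Submodule.span ℝ {u y, z - y}

/-- `u` is parallel to `x ↦ ε x + b` at `z`. -/
def Dir {N : ℕ} (u : EuclideanSpace ℝ (Fin N) → EuclideanSpace ℝ (Fin N))
    (ε : ℝ) (b z : EuclideanSpace ℝ (Fin N)) : Prop :=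
  ε • z + b ≠ 0 → u z ∈ Submodule.span ℝ {ε • z + b}

lemma exists_avoid {N : ℕ} {W : Submodule ℝ (EuclideanSpace ℝ (Fin N))} (hW : W ≠ ⊤)
    {V : Set (EuclideanSpace ℝ (Fin N))} (hV : IsOpen V) (hne : V.Nonempty)
    (p : EuclideanSpace ℝ (Fin N)) : ∃ y ∈ V, p - y ∉ W := by
  by_contra! h
  obtain ⟨y, hy⟩ := hne
  obtain ⟨e, he⟩ : ∃ e, e ∉ W := by
    by_contra! h'
    exact hW (Submodule.eq_top_iff'.2 h')
  have hc : Tendsto (fun t : ℝ => y + t • e) (𝓝[≠] 0) (𝓝 y) := by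
    refine Tendsto.mono_left ?_ nhdsWithin_le_nhds
    simpa using (by fun_prop : Continuous (fun t : ℝ => y + t • e)).tendsto 0
  have h1 := (hc.eventually (hV.mem_nhds hy)).and self_mem_nhdsWithin
  obtain ⟨t, ht, ht0⟩ := h1.exists
  have h2 := W.sub_mem (h y hy) (h _ ht)
  have h3 : p - y - (p - (y + t • e)) = t • e := by abel
  rw [h3] at h2
  exact he ((W.smul_mem_iff ht0).1 h2)

lemma span_pair_ne_top {N : ℕ} (hN : 3 ≤ N) (a b : EuclideanSpace ℝ (Fin N)) :
    Submodule.span ℝ {a, b} ≠ ⊤ := by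
  intro h
  have h1 := finrank_span_finset_le_card (R := ℝ) ({a, b} : Finset (EuclideanSpace ℝ (Fin N)))
  have h2 : ({a, b} : Finset (EuclideanSpace ℝ (Fin N))).card ≤ 2 := Finset.card_le_two
  rw [Set.finrank, Finset.coe_pair, h, finrank_top, finrank_euclideanSpace_fin] at h1
  omega

lemma span_inter {N : ℕ} {x w a b : EuclideanSpace ℝ (Fin N)}
    (h1 : x ∈ Submodule.span ℝ {w, a}) (h2 : x ∈ Submodule.span ℝ {w, b})
    (h3 : b ∉ Submodule.span ℝ {w, a}) : x ∈ Submodule.span ℝ {w} := by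
  obtain ⟨s, t, rfl⟩ := Submodule.mem_span_pair.1 h2
  by_cases ht : t = 0
  · subst ht
    simpa using Submodule.smul_mem _ s (Submodule.mem_span_singleton_self w)
  · exfalso
    apply h3
    have hw : s • w ∈ Submodule.span ℝ {w, a} :=
      Submodule.smul_mem _ _ (Submodule.subset_span (by simp))
    have := (Submodule.add_mem_iff_right _ hw).1 h1
    exact (Submodule.smul_mem_iff _ ht).1 this

lemma dir_propagate {N : ℕ} (hN : 3 ≤ N)
    {u : EuclideanSpace ℝ (Fin N) → EuclideanSpace ℝ (Fin N)}
    {B V : Set (EuclideanSpace ℝ (Fin N))} (hcop : Cop u B) (hu0 : ∀ x ∈ B, u x ≠ 0)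
    (hV : IsOpen V) (hVB : V ⊆ B) (hVne : V.Nonempty) {ε : ℝ} {b : EuclideanSpace ℝ (Fin N)}
    (hdir : ∀ y ∈ V, Dir u ε b y) : ∀ z ∈ B, Dir u ε b z := by
  intro z hz hw0
  set w := ε • z + b with hw
  have key : ∀ y ∈ V, z - y ∉ Submodule.span ℝ {w} → u z ∈ Submodule.span ℝ {w, z - y} := by
    intro y hy hn
    have hdy : ε • y + b = w - ε • (z - y) := by rw [hw]; module
    have hne : ε • y + b ≠ 0 := by
      intro h0
      rw [h0] at hdy
      have h1 : w = ε • (z - y) := by rw [eq_comm, sub_eq_zero] at hdy; exact hdy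
      have hε : ε ≠ 0 := by rintro rfl; rw [zero_smul] at h1; exact hw0 h1
      apply hn
      rw [← Submodule.smul_mem_iff _ hε, ← h1]
      exact Submodule.mem_span_singleton_self w
    obtain ⟨c, hc⟩ := Submodule.mem_span_singleton.1 (hdir y hy hne)
    have hc0 : c ≠ 0 := by rintro rfl; rw [zero_smul] at hc; exact hu0 y (hVB hy) hc.symm
    rcases hcop y (hVB hy) z hz with h | h
    · exfalso
      obtain ⟨s, hs⟩ := Submodule.mem_span_singleton.1 h
      rw [← hc, hdy] at hs
      -- c w = (s + c ε) (z - y)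
      have h2 : c • w = (s + c * ε) • (z - y) := by
        rw [add_smul, hs]; module
      have h3 : s + c * ε ≠ 0 := by
        intro h0; rw [h0, zero_smul] at h2
        exact (smul_ne_zero hc0 hw0) h2
      apply hn
      rw [← Submodule.smul_mem_iff _ h3, ← h2]
      exact Submodule.smul_mem _ _ (Submodule.mem_span_singleton_self w)
    · refine Submodule.span_le.2 ?_ h
      rintro q (rfl | rfl)
      · rw [← hc, hdy]
        refine Submodule.smul_mem _ _ (Submodule.sub_mem _ ?_ (Submodule.smul_mem _ _ ?_))
        · exact Submodule.subset_span (by simp)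
        · exact Submodule.subset_span (by simp)
      · exact Submodule.subset_span (by simp)
  obtain ⟨y₁, hy₁, h₁⟩ := exists_avoid (span_pair_ne_top hN w w) hV hVne z
  rw [Set.pair_eq_singleton] at h₁
  obtain ⟨y₂, hy₂, h₂⟩ := exists_avoid (span_pair_ne_top hN w (z - y₁)) hV hVne z
  refine span_inter (key y₁ hy₁ h₁) (key y₂ hy₂ ?_) h₂
  exact fun h => h₂ (Submodule.span_mono (by simp) h)

lemma lines {N : ℕ} (hN : 3 ≤ N)
    {u : EuclideanSpace ℝ (Fin N) → EuclideanSpace ℝ (Fin N)}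
    {B : Set (EuclideanSpace ℝ (Fin N))} (hB : IsOpen B) (hBne : B.Nonempty) (hcop : Cop u B)
    (hu0 : ∀ x ∈ B, u x ≠ 0) :
    ∃ (ε : ℝ) (b : EuclideanSpace ℝ (Fin N)), (ε ≠ 0 ∨ b ≠ 0) ∧ ∀ z ∈ B, Dir u ε b z := by
  obtain ⟨y₁, hy₁⟩ := hBne
  by_cases hall : ∀ z ∈ B, u z ∈ Submodule.span ℝ {u y₁}
  · refine ⟨0, u y₁, Or.inr (hu0 _ hy₁), fun z hz _ => ?_⟩
    simpa using hall z hz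
  push Not at hall
  obtain ⟨y₂, hy₂, h21⟩ := hall
  have h1 := hu0 _ hy₁
  obtain ⟨P, α₁, α₂, hP1, hP2⟩ : ∃ (P : EuclideanSpace ℝ (Fin N)) (α₁ α₂ : ℝ),
      P = y₁ + α₁ • u y₁ ∧ P = y₂ + α₂ • u y₂ := by
    rcases hcop y₁ hy₁ y₂ hy₂ with h | h
    · obtain ⟨s, hs⟩ := Submodule.mem_span_singleton.1 h
      have hs0 : s ≠ 0 := by rintro rfl; rw [zero_smul] at hs; exact h1 hs.symm
      refine ⟨y₂, s⁻¹, 0, ?_, by simp⟩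
      rw [← hs, smul_smul, inv_mul_cancel₀ hs0]; module
    · obtain ⟨s, t, hst⟩ := Submodule.mem_span_pair.1 h
      have ht0 : t ≠ 0 := by
        rintro rfl
        apply h21
        rw [← hst, zero_smul, add_zero]
        exact Submodule.smul_mem _ _ (Submodule.mem_span_singleton_self _)
      refine ⟨y₁ + (-(t⁻¹ * s)) • u y₁, -(t⁻¹ * s), -t⁻¹, rfl, ?_⟩
      rw [← hst, smul_add, neg_smul t⁻¹ (t • _), smul_smul, smul_smul, inv_mul_cancel₀ ht0]
      module
  set W := Submodule.span ℝ {u y₁, u y₂} with hWdef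
  have hWt : W ≠ ⊤ := span_pair_ne_top hN _ _
  set V := B ∩ {z | P - z ∉ W} with hVdef
  have hVo : IsOpen V := by
    refine hB.inter ?_
    have hcl : IsClosed (W : Set (EuclideanSpace ℝ (Fin N))) := W.closed_of_finiteDimensional
    exact hcl.isOpen_compl.preimage (by fun_prop : Continuous fun z => P - z)
  have hVne : V.Nonempty := by
    obtain ⟨y, hy, h⟩ := exists_avoid hWt hB ⟨y₁, hy₁⟩ P
    exact ⟨y, hy, h⟩
  refine ⟨1, -P, Or.inl one_ne_zero, ?_⟩
  refine dir_propagate hN hcop hu0 hVo inter_subset_left hVne ?_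
  rintro z ⟨hz, hzW⟩ -
  have hd : (1 : ℝ) • z + -P = z - P := by module
  rw [hd]
  have hw : z - P ∉ W := by
    intro h
    apply hzW
    have := W.neg_mem h
    rwa [neg_sub] at this
  have key : ∀ y ∈ B, ∀ α : ℝ, P = y + α • u y → u y ∈ W →
      u z ∈ Submodule.span ℝ {z - P, u y} := by
    intro y hy α hα hyW
    have hzy : z - y = (z - P) + α • u y := by rw [hα]; module
    rcases hcop y hy z hz with h | h
    · exfalso
      obtain ⟨s, hs⟩ := Submodule.mem_span_singleton.1 h
      have hs0 : s ≠ 0 := by rintro rfl; rw [zero_smul] at hs; exact hu0 y hy hs.symm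
      apply hw
      have h5 : z - y ∈ W := by
        rw [← Submodule.smul_mem_iff _ hs0, hs]; exact hyW
      rw [hzy] at h5
      exact (Submodule.add_mem_iff_left _ (W.smul_mem _ hyW)).1 h5
    · refine Submodule.span_le.2 ?_ h
      rintro q (rfl | rfl)
      · exact Submodule.subset_span (by simp)
      · rw [hzy]
        refine Submodule.add_mem _ (Submodule.subset_span (by simp))
          (Submodule.smul_mem _ _ (Submodule.subset_span (by simp)))
  refine span_inter (key y₁ hy₁ α₁ hP1 (Submodule.subset_span (by simp)))
    (key y₂ hy₂ α₂ hP2 (Submodule.subset_span (by simp))) ?_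
  intro h
  obtain ⟨s, t, hst⟩ := Submodule.mem_span_pair.1 h
  by_cases hs : s = 0
  · subst hs
    apply h21
    rw [← hst, zero_smul, zero_add]
    exact Submodule.smul_mem _ _ (Submodule.mem_span_singleton_self _)
  · apply hw
    rw [← Submodule.smul_mem_iff _ hs]
    have : s • (z - P) = u y₂ - t • u y₁ := by rw [← hst]; abel
    rw [this]
    exact W.sub_mem (Submodule.subset_span (by simp))
      (W.smul_mem _ (Submodule.subset_span (by simp)))

lemma dir_ne_zero {N : ℕ} (hN : 3 ≤ N)
    {u : EuclideanSpace ℝ (Fin N) → EuclideanSpace ℝ (Fin N)} {x b : EuclideanSpace ℝ (Fin N)}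
    {ε : ℝ} (hu : ContinuousAt u x) (hux : u x ≠ 0) (hεb : ε ≠ 0 ∨ b ≠ 0)
    (hdir : ∀ᶠ z in 𝓝 x, Dir u ε b z) : ε • x + b ≠ 0 := by
  intro h0
  have hε : ε ≠ 0 := by
    rintro rfl
    rw [zero_smul, zero_add] at h0
    simp [h0] at hεb
  obtain ⟨w, hwne, hw⟩ : ∃ w : EuclideanSpace ℝ (Fin N), w ≠ 0 ∧ ⟪w, u x⟫ = 0 := by
    by_contra! h
    have h1 : (Submodule.span ℝ {u x})ᗮ = ⊥ := by
      rw [Submodule.eq_bot_iff]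
      intro w hw
      by_contra hne
      apply h w hne
      rw [Submodule.mem_orthogonal] at hw
      rw [real_inner_comm]
      exact hw _ (Submodule.mem_span_singleton_self _)
    rw [Submodule.orthogonal_eq_bot_iff] at h1
    apply span_pair_ne_top hN (u x) (u x)
    rwa [Set.pair_eq_singleton]
  have hc : Tendsto (fun t : ℝ => x + t • w) (𝓝[≠] 0) (𝓝 x) := by
    refine Tendsto.mono_left ?_ nhdsWithin_le_nhds
    simpa using (by fun_prop : Continuous (fun t : ℝ => x + t • w)).tendsto 0
  have h2 : ∀ᶠ t : ℝ in 𝓝[≠] 0, ⟪u (x + t • w), u x⟫ = 0 := by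
    filter_upwards [hc.eventually hdir, self_mem_nhdsWithin] with t ht ht0
    have hd : ε • (x + t • w) + b = (ε * t) • w := by
      have : ε • (x + t • w) + b = (ε • x + b) + (ε * t) • w := by module
      rw [this, h0, zero_add]
    unfold Dir at ht
    rw [hd] at ht
    obtain ⟨c, hc⟩ := Submodule.mem_span_singleton.1
      (ht (smul_ne_zero (mul_ne_zero hε ht0) hwne))
    rw [← hc, inner_smul_left, inner_smul_left, hw]; simp
  have h3 : Tendsto (fun t : ℝ => ⟪u (x + t • w), u x⟫) (𝓝[≠] 0) (𝓝 ⟪u x, u x⟫) :=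
    (hu.tendsto.comp hc).inner tendsto_const_nhds
  have h4 : ⟪u x, u x⟫ = 0 :=
    tendsto_nhds_unique (h3.congr' h2) tendsto_const_nhds
  exact hux (inner_self_eq_zero.1 h4)

lemma local_profile {N : ℕ} {Ω : Set (EuclideanSpace ℝ (Fin N))} (hΩ : IsOpen Ω)
    {ψ : EuclideanSpace ℝ (Fin N) → ℝ} (hψ : ContDiffOn ℝ (⊤ : ℕ∞) ψ Ω)
    {x e : EuclideanSpace ℝ (Fin N)} (hx : x ∈ Ω) (h : EuclideanSpace ℝ (Fin N) → ℝ)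
    (he : ⟪gradient ψ x, e⟫ ≠ 0)
    (hloc : ∀ᶠ z in 𝓝 x, ψ z = ψ (x + (h z - h x) • e)) :
    ∃ (I : Set ℝ) (F : ℝ → ℝ), IsOpen I ∧ I.OrdConnected ∧ h x ∈ I ∧
      ContDiffOn ℝ (⊤ : ℕ∞) F I ∧ (∀ t ∈ I, deriv F t ≠ 0) ∧ ∀ᶠ z in 𝓝 x, ψ z = F (h z) := by
  set a := h x with ha
  set ℓ : ℝ → EuclideanSpace ℝ (Fin N) := fun t => x + (t - a) • e with hℓ
  have hℓc : ContDiff ℝ (⊤ : ℕ∞) ℓ := by rw [hℓ]; fun_prop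
  set J := ℓ ⁻¹' Ω with hJ
  have hJo : IsOpen J := hΩ.preimage hℓc.continuous
  have hℓa : ℓ a = x := by simp [hℓ]
  have haJ : a ∈ J := by rw [hJ, mem_preimage, hℓa]; exact hx
  set F : ℝ → ℝ := fun t => ψ (ℓ t) with hF
  have hFc : ContDiffOn ℝ (⊤ : ℕ∞) F J := hψ.comp hℓc.contDiffOn (fun t ht => ht)
  have hFd : ContinuousOn (deriv F) J := hFc.continuousOn_deriv_of_isOpen hJo (by simp)
  have hda : deriv F a = ⟪gradient ψ x, e⟫ := by
    have h1 : HasDerivAt ℓ e a := by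
      have := (((hasDerivAt_id a).sub_const a).smul_const e).const_add x
      rw [one_smul] at this
      exact this
    have h2 : DifferentiableAt ℝ ψ (ℓ a) := by
      rw [hℓa]
      exact (hψ.contDiffAt (hΩ.mem_nhds hx)).differentiableAt (by simp)
    have h3 := h2.hasFDerivAt.comp_hasDerivAt a h1
    rw [inner_gradient_left, ← hℓa]
    exact h3.deriv
  have h4 : ∀ᶠ t in 𝓝 a, deriv F t ≠ 0 :=
    (hFd.continuousAt (hJo.mem_nhds haJ)).eventually_ne (by rw [hda]; exact he)
  obtain ⟨δ, hδ, hb⟩ := Metric.eventually_nhds_iff_ball.1 (h4.and (hJo.mem_nhds haJ))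
  refine ⟨ball a δ, F, isOpen_ball, (convex_ball a δ).ordConnected, mem_ball_self hδ,
    hFc.mono fun t ht => (hb t ht).2, fun t ht => (hb t ht).1, hloc⟩

lemma const_curve {N : ℕ} {Ω : Set (EuclideanSpace ℝ (Fin N))} (hΩ : IsOpen Ω)
    {ψ : EuclideanSpace ℝ (Fin N) → ℝ} (hψ : ContDiffOn ℝ (⊤ : ℕ∞) ψ Ω)
    {γ : ℝ → EuclideanSpace ℝ (Fin N)} (h1 : ∀ t ∈ Icc (0 : ℝ) 1, γ t ∈ Ω)
    (h2 : ∀ t ∈ Icc (0 : ℝ) 1, DifferentiableAt ℝ γ t)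
    (h3 : ∀ t ∈ Icc (0 : ℝ) 1, ⟪gradient ψ (γ t), deriv γ t⟫ = 0) : ψ (γ 0) = ψ (γ 1) := by
  have hd : ∀ t ∈ Icc (0 : ℝ) 1, HasDerivAt (fun t => ψ (γ t)) 0 t := by
    intro t ht
    have h4 : DifferentiableAt ℝ ψ (γ t) :=
      (hψ.contDiffAt (hΩ.mem_nhds (h1 t ht))).differentiableAt (by simp)
    have h5 := h4.hasFDerivAt.comp_hasDerivAt t (h2 t ht).hasDerivAt
    rw [← inner_gradient_left, h3 t ht] at h5
    exact h5
  exact (constant_of_has_deriv_right_zero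
    (fun t ht => (hd t ht).continuousAt.continuousWithinAt)
    (fun t ht => (hd t (Ico_subset_Icc_self ht)).hasDerivWithinAt) 1 (by simp)).symm

lemma local_affine {N : ℕ} {Ω : Set (EuclideanSpace ℝ (Fin N))} (hΩ : IsOpen Ω)
    {ψ : EuclideanSpace ℝ (Fin N) → ℝ} (hψ : ContDiffOn ℝ (⊤ : ℕ∞) ψ Ω)
    {x ξ : EuclideanSpace ℝ (Fin N)} (hx : x ∈ Ω) (hξ : ‖ξ‖ = 1)
    (hdir : ∀ᶠ z in 𝓝 x, gradient ψ z ∈ Submodule.span ℝ {ξ}) :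
    ∀ᶠ z in 𝓝 x, ψ z = ψ (x + (⟪z, ξ⟫ - ⟪x, ξ⟫) • ξ) := by
  obtain ⟨δ, hδ, hb⟩ := Metric.eventually_nhds_iff_ball.1 (hdir.and (hΩ.mem_nhds hx))
  have hc : Continuous fun z : EuclideanSpace ℝ (Fin N) => x + (⟪z, ξ⟫ - ⟪x, ξ⟫) • ξ := by
    fun_prop
  have h1 : ∀ᶠ z in 𝓝 x, x + (⟪z, ξ⟫ - ⟪x, ξ⟫) • ξ ∈ ball x δ := by
    apply hc.continuousAt.eventually_mem
    simpa using ball_mem_nhds x hδ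
  filter_upwards [h1, ball_mem_nhds x hδ] with z hz' hz
  set z' := x + (⟪z, ξ⟫ - ⟪x, ξ⟫) • ξ with hzdef
  have hort : ⟪ξ, z' - z⟫ = 0 := by
    rw [hzdef, inner_sub_right, inner_add_right, inner_smul_right, real_inner_self_eq_norm_sq, hξ,
      real_inner_comm ξ z, real_inner_comm ξ x]
    ring
  set γ : ℝ → EuclideanSpace ℝ (Fin N) := fun t => z + t • (z' - z) with hγ
  have hγd : ∀ t, HasDerivAt γ (z' - z) t := by
    intro t
    have := ((hasDerivAt_id t).smul_const (z' - z)).const_add z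
    rw [one_smul] at this
    exact this
  have hmem : ∀ t ∈ Icc (0 : ℝ) 1, γ t ∈ ball x δ := fun t ht =>
    (convex_ball x δ).add_smul_sub_mem hz hz' ht
  have := const_curve hΩ hψ (γ := γ) (fun t ht => (hb _ (hmem t ht)).2)
    (fun t _ => (hγd t).differentiableAt) (fun t ht => by
      obtain ⟨c, hc⟩ := Submodule.mem_span_singleton.1 (hb _ (hmem t ht)).1
      rw [(hγd t).deriv, ← hc, inner_smul_left, hort, mul_zero])
  simpa [hγ] using this

lemma local_radial {N : ℕ} {Ω : Set (EuclideanSpace ℝ (Fin N))} (hΩ : IsOpen Ω)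
    {ψ : EuclideanSpace ℝ (Fin N) → ℝ} (hψ : ContDiffOn ℝ (⊤ : ℕ∞) ψ Ω)
    {x P : EuclideanSpace ℝ (Fin N)} (hx : x ∈ Ω) (hxP : x - P ≠ 0)
    (hdir : ∀ᶠ z in 𝓝 x, gradient ψ z ∈ Submodule.span ℝ {z - P}) :
    ∀ᶠ z in 𝓝 x, ψ z = ψ (x + (dist z P - dist x P) • (‖x - P‖⁻¹ • (x - P))) := by
  set r := ‖x - P‖ with hr
  have hr0 : 0 < r := norm_pos_iff.2 hxP
  set e := r⁻¹ • (x - P) with he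
  have hre : r • e = x - P := by rw [he, smul_smul, mul_inv_cancel₀ hr0.ne', one_smul]
  have hen : ‖e‖ = 1 := by
    rw [he, norm_smul, norm_inv, Real.norm_of_nonneg hr0.le, ← hr, inv_mul_cancel₀ hr0.ne']
  set G : ℝ × EuclideanSpace ℝ (Fin N) → EuclideanSpace ℝ (Fin N) :=
    fun q => P + q.1 • (‖q.2‖⁻¹ • q.2) with hG
  have hGx : G (r, x - P) = x := by
    simp only [hG]
    rw [← hr, ← he, hre]; abel
  have hGc : ContinuousAt G (r, x - P) := by
    have : ContinuousAt (fun q : ℝ × EuclideanSpace ℝ (Fin N) => ‖q.2‖⁻¹) (r, x - P) :=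
      (continuous_snd.norm.continuousAt).inv₀ (norm_ne_zero_iff.2 hxP)
    exact continuousAt_const.add (continuousAt_fst.smul (this.smul continuousAt_snd))
  have h1 : ∀ᶠ q in 𝓝 (r, x - P), G q ∈ Ω ∧ gradient ψ (G q) ∈ Submodule.span ℝ {G q - P} ∧
      q.2 ≠ 0 := by
    have h2 : ∀ᶠ z in 𝓝 (G (r, x - P)), z ∈ Ω ∧ gradient ψ z ∈ Submodule.span ℝ {z - P} := by
      rw [hGx]
      exact (hΩ.eventually_mem hx).and hdir
    have h3 : ∀ᶠ q : ℝ × EuclideanSpace ℝ (Fin N) in 𝓝 (r, x - P), q.2 ≠ 0 :=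
      continuousAt_snd.eventually_ne hxP
    filter_upwards [hGc.eventually h2, h3] with q h4 h5 using ⟨h4.1, h4.2, h5⟩
  obtain ⟨δ, hδ, hb⟩ := Metric.eventually_nhds_iff_ball.1 h1
  have hdx : dist x P = r := by rw [dist_eq_norm]
  have e1 : ∀ᶠ z in 𝓝 x, dist z P ∈ ball r δ := by
    apply (by fun_prop : Continuous fun z => dist z P).continuousAt.eventually_mem
    rw [hdx]; exact ball_mem_nhds r hδ
  have e2 : ∀ᶠ z in 𝓝 x, z - P ∈ ball (x - P) δ := by
    apply (by fun_prop : Continuous fun z => z - P).continuousAt.eventually_mem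
    exact ball_mem_nhds _ hδ
  have e3 : ∀ᶠ z in 𝓝 x, dist z P • e ∈ ball (x - P) δ := by
    apply (by fun_prop : Continuous fun z => dist z P • e).continuousAt.eventually_mem
    rw [hdx, hre]; exact ball_mem_nhds _ hδ
  filter_upwards [e1, e2, e3] with z hz1 hz2 hz3
  set s := dist z P with hs
  set y : ℝ → EuclideanSpace ℝ (Fin N) := fun t => (z - P) + t • (s • e - (z - P)) with hy
  have hyb : ∀ t ∈ Icc (0 : ℝ) 1, y t ∈ ball (x - P) δ := fun t ht =>
    (convex_ball _ δ).add_smul_sub_mem hz2 hz3 ht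
  have hq : ∀ t ∈ Icc (0 : ℝ) 1, (s, y t) ∈ ball (r, x - P) δ := by
    intro t ht
    rw [← ball_prod_same]
    exact ⟨hz1, hyb t ht⟩
  have hyd : ∀ t, DifferentiableAt ℝ y t := by intro t; rw [hy]; fun_prop
  set γ : ℝ → EuclideanSpace ℝ (Fin N) := fun t => G (s, y t) with hγ
  have hγd : ∀ t ∈ Icc (0 : ℝ) 1, DifferentiableAt ℝ γ t := by
    intro t ht
    have hne : y t ≠ 0 := (hb _ (hq t ht)).2.2
    have hn : DifferentiableAt ℝ (fun t => ‖y t‖⁻¹) t :=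
      ((hyd t).norm ℝ hne).inv (norm_ne_zero_iff.2 hne)
    exact ((hn.smul (hyd t)).const_smul s).const_add P
  have hγo : ∀ t ∈ Icc (0 : ℝ) 1, ⟪γ t - P, deriv γ t⟫ = 0 := by
    intro t ht
    have hne : y t ≠ 0 := (hb _ (hq t ht)).2.2
    have h6 : ∀ᶠ t' in 𝓝 t, ‖γ t' - P‖ ^ 2 = s ^ 2 := by
      filter_upwards [(hyd t).continuousAt.eventually_ne hne] with t' ht'
      have : γ t' - P = s • (‖y t'‖⁻¹ • y t') := by simp [hγ, hG]
      rw [this, norm_smul, norm_smul, norm_inv, norm_norm,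
        inv_mul_cancel₀ (norm_ne_zero_iff.2 ht'), mul_one, Real.norm_eq_abs, sq_abs]
    have h7 : HasDerivAt (fun t' => ‖γ t' - P‖ ^ 2) (2 * ⟪γ t - P, deriv γ t⟫) t :=
      ((hγd t ht).hasDerivAt.sub_const P).norm_sq
    have h8 : HasDerivAt (fun t' => ‖γ t' - P‖ ^ 2) 0 t :=
      (hasDerivAt_const t (s ^ 2)).congr_of_eventuallyEq h6
    have := h7.unique h8
    linarith
  have := const_curve hΩ hψ (γ := γ) (fun t ht => (hb _ (hq t ht)).1) hγd (fun t ht => by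
      obtain ⟨c, hc⟩ := Submodule.mem_span_singleton.1 (hb _ (hq t ht)).2.1
      change c • (γ t - P) = gradient ψ (γ t) at hc
      rw [← hc, inner_smul_left, hγo t ht, mul_zero])
  have hs0 : 0 < ‖z - P‖ := by
    have := (hb _ (hq 0 (by simp))).2.2
    simp only [hy, zero_smul, add_zero] at this
    exact norm_pos_iff.2 this
  have hsz : s = ‖z - P‖ := by rw [hs, dist_eq_norm]
  have hγ0 : γ 0 = z := by
    simp only [hγ, hG, hy, zero_smul, add_zero]
    rw [smul_smul, hsz, mul_inv_cancel₀ hs0.ne']; module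
  have hγ1 : γ 1 = x + (s - dist x P) • e := by
    simp only [hγ, hG, hy, one_smul, add_sub_cancel]
    rw [norm_smul, hen, mul_one, Real.norm_of_nonneg (hsz ▸ hs0.le), smul_smul (s⁻¹),
      inv_mul_cancel₀ (hsz ▸ hs0.ne'), one_smul, hdx, sub_smul, hre]
    abel
  rw [hγ0, hγ1] at this
  exact this

/-- local representation `ψ = F ∘ h` near `x` -/
def LocRep {N : ℕ} (ψ h : EuclideanSpace ℝ (Fin N) → ℝ) (x : EuclideanSpace ℝ (Fin N))
    (I : Set ℝ) (F : ℝ → ℝ) : Prop :=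
  IsOpen I ∧ I.OrdConnected ∧ h x ∈ I ∧
      ContDiffOn ℝ (⊤ : ℕ∞) F I ∧ (∀ t ∈ I, deriv F t ≠ 0) ∧ ∀ᶠ z in 𝓝 x, ψ z = F (h z)

lemma inj_of_deriv {I : Set ℝ} {F : ℝ → ℝ} (ho : I.OrdConnected)
    (hF : ContDiffOn ℝ (⊤ : ℕ∞) F I) (hd : ∀ t ∈ I, deriv F t ≠ 0) : InjOn F I := by
  have key : ∀ a ∈ I, ∀ b ∈ I, a < b → F a ≠ F b := by
    intro a ha b hb hab heq
    have hsub : Icc a b ⊆ I := ho.out ha hb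
    obtain ⟨c, hc, h0⟩ := exists_deriv_eq_zero hab (hF.continuousOn.mono hsub) heq
    exact hd c (hsub (Ioo_subset_Icc_self hc)) h0
  intro a ha b hb heq
  rcases lt_trichotomy a b with h | h | h
  · exact absurd heq (key a ha b hb h)
  · exact h
  · exact absurd heq.symm (key b hb a ha h)

lemma glue {N : ℕ} {Ω S : Set (EuclideanSpace ℝ (Fin N))} (hΩ : IsOpen Ω)
    {ψ h : EuclideanSpace ℝ (Fin N) → ℝ} (hh : Continuous h) {α : ℝ}
    (hS : IsPreconnected S) {x₀ : EuclideanSpace ℝ (Fin N)} (hx₀ : x₀ ∈ S)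
    (hSΩ : ∀ x ∈ S, x ∈ Ω ∧ ψ x = α)
    (hray : ∀ x ∈ S, ∃ e, ∀ᶠ t : ℝ in 𝓝 0, h (x + t • e) = h x + t)
    (hrep : ∀ x ∈ S, ∃ I F, LocRep ψ h x I F) :
    ∃ ω : Set (EuclideanSpace ℝ (Fin N)), IsOpen ω ∧ S ⊆ ω ∧ ω ⊆ Ω ∧
      ∃ I : Set ℝ, IsOpen I ∧ I.OrdConnected ∧
        ∃ F : ℝ → ℝ, ContDiffOn ℝ (⊤ : ℕ∞) F I ∧ (∀ t ∈ I, deriv F t ≠ 0) ∧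
          ∀ x ∈ ω, h x ∈ I ∧ ψ x = F (h x) := by
  choose! I F hIF using hrep
  have hloc : ∀ x ∈ S, ∀ᶠ y in 𝓝[S] x, h x = h y := by
    intro x hx
    obtain ⟨hIo, hIc, hxI, hF, hd, hev⟩ := hIF x hx
    have h1 : ∀ᶠ y in 𝓝[S] x, h y ∈ I x ∧ ψ y = F x (h y) :=
      nhdsWithin_le_nhds ((hh.continuousAt.eventually_mem (hIo.mem_nhds hxI)).and hev)
    filter_upwards [h1, self_mem_nhdsWithin] with y hy hyS
    apply inj_of_deriv hIc hF hd hxI hy.1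
    rw [← hy.2, ← hev.self_of_nhds, (hSΩ x hx).2, (hSΩ y hyS).2]
  have hconst : ∀ x ∈ S, h x = h x₀ := by
    intro x hx
    exact hS.induction₂ (fun x y => h x = h y) hloc (fun _ _ _ _ _ _ h1 h2 => h1.trans h2)
      (fun _ _ _ _ h1 => h1.symm) hx hx₀
  have hgerm : ∀ x ∈ S, ∀ᶠ t in 𝓝 (h x₀), F x₀ t = F x t := by
    intro x hx
    refine hS.induction₂ (fun x y => ∀ᶠ t in 𝓝 (h x₀), F x t = F y t) ?_
      (fun _ _ _ _ _ _ h1 h2 => Filter.EventuallyEq.trans h1 h2)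
      (fun _ _ _ _ h1 => Filter.EventuallyEq.symm h1) hx₀ hx
    intro x hx
    obtain ⟨-, -, -, -, -, hev⟩ := hIF x hx
    have h1 : ∀ᶠ y in 𝓝[S] x, ∀ᶠ z in 𝓝 y, ψ z = F x (h z) :=
      nhdsWithin_le_nhds hev.eventually_nhds
    filter_upwards [h1, self_mem_nhdsWithin] with y hy hyS
    obtain ⟨-, -, -, -, -, hev'⟩ := hIF y hyS
    obtain ⟨e, he⟩ := hray y hyS
    have hc : Tendsto (fun t : ℝ => y + t • e) (𝓝 0) (𝓝 y) := by
      simpa using (by fun_prop : Continuous (fun t : ℝ => y + t • e)).tendsto 0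
    have h2 : ∀ᶠ t : ℝ in 𝓝 0, F x (h x₀ + t) = F y (h x₀ + t) := by
      filter_upwards [hc.eventually hy, hc.eventually hev', he] with t a1 a2 a3
      rw [a3, hconst y hyS] at a1 a2
      rw [← a1, ← a2]
    have hc2 : Tendsto (fun t : ℝ => t - h x₀) (𝓝 (h x₀)) (𝓝 0) := by
      simpa using (by fun_prop : Continuous (fun t : ℝ => t - h x₀)).tendsto (h x₀)
    filter_upwards [hc2.eventually h2] with t ht
    simpa using ht
  obtain ⟨hIo, hIc, hxI, hF, hd, -⟩ := hIF x₀ hx₀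
  refine ⟨Ω ∩ {x | ∀ᶠ z in 𝓝 x, h z ∈ I x₀ ∧ ψ z = F x₀ (h z)},
    hΩ.inter isOpen_setOfPred_eventually_nhds, ?_, inter_subset_left, I x₀, hIo, hIc, F x₀, hF, hd,
    fun x hx => hx.2.self_of_nhds⟩
  intro x hx
  refine ⟨(hSΩ x hx).1, ?_⟩
  obtain ⟨-, -, -, -, -, hev⟩ := hIF x hx
  have a1 : ∀ᶠ z in 𝓝 x, h z ∈ I x₀ := by
    apply hh.continuousAt.eventually_mem
    rw [hconst x hx]; exact hIo.mem_nhds hxI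
  have a2 : ∀ᶠ z in 𝓝 x, F x₀ (h z) = F x (h z) := by
    have := hh.tendsto x
    rw [hconst x hx] at this
    exact this.eventually (hgerm x hx)
  filter_upwards [a1, a2, hev] with z b1 b2 b3
  exact ⟨b1, by rw [b2, b3]⟩

theorem stream_function_radial_or_affine (N : ℕ) (hN : 3 ≤ N)
    (Ω : Set (EuclideanSpace ℝ (Fin N))) (hΩ : IsOpen Ω)
    (ψ : EuclideanSpace ℝ (Fin N) → ℝ) (hψ : ContDiffOn ℝ (⊤ : ℕ∞) ψ Ω)
    (hkin : KineticFormulation Ω (fun x => gradient ψ x))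
    (α : ℝ) (hnv : ∀ x ∈ Ω, ψ x = α → gradient ψ x ≠ 0)
    (S : Set (EuclideanSpace ℝ (Fin N))) (x₀ : EuclideanSpace ℝ (Fin N))
    (hx₀ : x₀ ∈ {x ∈ Ω | ψ x = α})
    (hS : S = connectedComponentIn {x ∈ Ω | ψ x = α} x₀) :
    ∃ ω : Set (EuclideanSpace ℝ (Fin N)), IsOpen ω ∧ S ⊆ ω ∧ ω ⊆ Ω ∧
      ∃ I : Set ℝ, IsOpen I ∧ I.OrdConnected ∧
        ∃ F : ℝ → ℝ, ContDiffOn ℝ (⊤ : ℕ∞) F I ∧ (∀ t ∈ I, deriv F t ≠ 0) ∧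
          ((∃ P : EuclideanSpace ℝ (Fin N),
              ∀ x ∈ ω, dist x P ∈ I ∧ ψ x = F (dist x P)) ∨
           (∃ ξ : EuclideanSpace ℝ (Fin N), ‖ξ‖ = 1 ∧
              ∀ x ∈ ω, ⟪x, ξ⟫ ∈ I ∧ ψ x = F ⟪x, ξ⟫)) := by
  have hgc : ContinuousOn (fun x => gradient ψ x) Ω := by
    have h1 : ContinuousOn (fderiv ℝ ψ) Ω := hψ.continuousOn_fderiv_of_isOpen hΩ (by simp)
    exact (InnerProductSpace.toDual ℝ (EuclideanSpace ℝ (Fin N))).symm.continuous.comp_continuousOn h1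
  have hgca : ∀ x ∈ Ω, ContinuousAt (fun x => gradient ψ x) x := fun x hx =>
    hgc.continuousAt (hΩ.mem_nhds hx)
  have hSsub : S ⊆ {x ∈ Ω | ψ x = α} := hS ▸ connectedComponentIn_subset _ _
  have hSpre : IsPreconnected S := hS ▸ isPreconnected_connectedComponentIn
  have hxS : x₀ ∈ S := hS ▸ mem_connectedComponentIn hx₀
  -- good balls
  have hball : ∀ x ∈ S, ∃ δ > 0, ball x δ ⊆ Ω ∧ Cop (fun x => gradient ψ x) (ball x δ) ∧
      ∀ z ∈ ball x δ, gradient ψ z ≠ 0 := by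
    intro x hx
    have hxΩ := (hSsub hx).1
    have h1 : ∀ᶠ z in 𝓝 x, z ∈ Ω ∧ gradient ψ z ≠ 0 :=
      (hΩ.eventually_mem hxΩ).and ((hgca x hxΩ).eventually_ne (hnv x hxΩ (hSsub hx).2))
    obtain ⟨δ, hδ, hb⟩ := Metric.eventually_nhds_iff_ball.1 h1
    have hsub : ball x δ ⊆ Ω := fun z hz => (hb z hz).1
    exact ⟨δ, hδ, hsub, fun y hy z hz => kin_cop hΩ hgc hkin isOpen_ball (convex_ball x δ) hsub hy hz,
      fun z hz => (hb z hz).2⟩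
  obtain ⟨ε, b, hεb, hdirS⟩ : ∃ (ε : ℝ) (b : EuclideanSpace ℝ (Fin N)), (ε ≠ 0 ∨ b ≠ 0) ∧
      ∀ x ∈ S, ∀ᶠ z in 𝓝 x, Dir (fun x => gradient ψ x) ε b z := by
    obtain ⟨δ, hδ, hsub, hcop, hne⟩ := hball x₀ hxS
    obtain ⟨ε, b, hεb, hdir⟩ := lines hN isOpen_ball ⟨x₀, mem_ball_self hδ⟩ hcop hne
    refine ⟨ε, b, hεb, ?_⟩
    have hU : IsOpen {x | ∀ᶠ z in 𝓝 x, Dir (fun x => gradient ψ x) ε b z} :=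
      isOpen_setOfPred_eventually_nhds
    refine hSpre.subset_of_closure_inter_subset hU ⟨x₀, hxS, ?_⟩ ?_
    · filter_upwards [ball_mem_nhds x₀ hδ] with z hz using hdir z hz
    · rintro x ⟨hxc, hx⟩
      obtain ⟨δ', hδ', hsub', hcop', hne'⟩ := hball x hx
      obtain ⟨y, hy, hyU⟩ := mem_closure_iff.1 hxc _ isOpen_ball (mem_ball_self hδ')
      have := dir_propagate hN hcop' hne' (isOpen_ball.inter hU) inter_subset_left ⟨y, hy, hyU⟩
        (fun z hz => hz.2.self_of_nhds)
      filter_upwards [ball_mem_nhds x hδ'] with z hz using this z hz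
  have hdne : ∀ x ∈ S, ε • x + b ≠ 0 := fun x hx =>
    dir_ne_zero hN (hgca x (hSsub hx).1) (hnv x (hSsub hx).1 (hSsub hx).2) hεb (hdirS x hx)
  have hspan : ∀ x ∈ S, ∀ᶠ z in 𝓝 x, gradient ψ z ∈ Submodule.span ℝ {ε • z + b} := by
    intro x hx
    have hc : Continuous fun z : EuclideanSpace ℝ (Fin N) => ε • z + b := by fun_prop
    filter_upwards [hdirS x hx, hc.continuousAt.eventually_ne (hdne x hx)] with z h1 h2 using h1 h2
  by_cases hε : ε = 0
  · -- affine case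
    subst hε
    have hb : b ≠ 0 := by simpa using hεb
    have hbn : 0 < ‖b‖ := norm_pos_iff.2 hb
    set ξ := ‖b‖⁻¹ • b with hξ
    have hξ1 : ‖ξ‖ = 1 := by rw [hξ, norm_smul, norm_inv, norm_norm, inv_mul_cancel₀ hbn.ne']
    have hbξ : b = ‖b‖ • ξ := by rw [hξ, smul_smul, mul_inv_cancel₀ hbn.ne', one_smul]
    have hsp : ∀ x ∈ S, ∀ᶠ z in 𝓝 x, gradient ψ z ∈ Submodule.span ℝ {ξ} := by
      intro x hx
      filter_upwards [hspan x hx] with z hz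
      rw [zero_smul, zero_add, hbξ] at hz
      exact Submodule.span_singleton_smul_le ℝ _ _ hz
    obtain ⟨ω, h1, h2, h3, I, h4, h5, F, h6, h7, h8⟩ := glue (h := fun z => ⟪z, ξ⟫) hΩ
      (by fun_prop) hSpre hxS hSsub
      (fun x _ => ⟨ξ, Eventually.of_forall fun t => by
        rw [inner_add_left, inner_smul_left, real_inner_self_eq_norm_sq, hξ1]; simp⟩)
      (fun x hx => by
        refine local_profile hΩ hψ (hSsub hx).1 _ (e := ξ) ?_
          (local_affine hΩ hψ (hSsub hx).1 hξ1 (hsp x hx))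
        obtain ⟨c, hc⟩ := Submodule.mem_span_singleton.1 (hsp x hx).self_of_nhds
        have hg := hnv x (hSsub hx).1 (hSsub hx).2
        rw [← hc, inner_smul_left, real_inner_self_eq_norm_sq, hξ1]
        rintro h0
        apply hg
        have : c = 0 := by simpa using h0
        rw [← hc, this, zero_smul])
    exact ⟨ω, h1, h2, h3, I, h4, h5, F, h6, h7, Or.inr ⟨ξ, hξ1, h8⟩⟩
  · -- radial case
    set P := -(ε⁻¹ • b) with hP
    have hdP : ∀ z, ε • z + b = ε • (z - P) := by
      intro z
      rw [hP, sub_neg_eq_add, smul_add, smul_smul, mul_inv_cancel₀ hε, one_smul]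
    have hsp : ∀ x ∈ S, ∀ᶠ z in 𝓝 x, gradient ψ z ∈ Submodule.span ℝ {z - P} := by
      intro x hx
      filter_upwards [hspan x hx] with z hz
      rw [hdP] at hz
      exact Submodule.span_singleton_smul_le ℝ _ _ hz
    have hxP : ∀ x ∈ S, x - P ≠ 0 := by
      intro x hx h0
      apply hdne x hx
      rw [hdP, h0, smul_zero]
    obtain ⟨ω, h1, h2, h3, I, h4, h5, F, h6, h7, h8⟩ := glue (h := fun z => dist z P) hΩ
      (by fun_prop) hSpre hxS hSsub
      (fun x hx => by
        have hr : 0 < ‖x - P‖ := norm_pos_iff.2 (hxP x hx)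
        refine ⟨‖x - P‖⁻¹ • (x - P), ?_⟩
        filter_upwards [lt_mem_nhds (show -‖x - P‖ < 0 by linarith)] with t ht
        have : x + t • (‖x - P‖⁻¹ • (x - P)) - P = ((‖x - P‖ + t) * ‖x - P‖⁻¹) • (x - P) := by
          rw [add_mul, mul_inv_cancel₀ hr.ne']; module
        rw [dist_eq_norm, dist_eq_norm, this, norm_smul, Real.norm_of_nonneg
          (mul_nonneg (by linarith) (inv_nonneg.2 hr.le)), mul_assoc, inv_mul_cancel₀ hr.ne',
          mul_one])
      (fun x hx => by
        refine local_profile hΩ hψ (hSsub hx).1 _ (e := ‖x - P‖⁻¹ • (x - P)) ?_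
          (local_radial hΩ hψ (hSsub hx).1 (hxP x hx) (hsp x hx))
        have hr : 0 < ‖x - P‖ := norm_pos_iff.2 (hxP x hx)
        obtain ⟨c, hc⟩ := Submodule.mem_span_singleton.1 (hsp x hx).self_of_nhds
        have hg := hnv x (hSsub hx).1 (hSsub hx).2
        have hc0 : c ≠ 0 := by
          rintro rfl
          apply hg
          rw [← hc, zero_smul]
        rw [← hc, inner_smul_left, inner_smul_right, real_inner_self_eq_norm_sq]
        simp [hc0, hr.ne'])
    exact ⟨ω, h1, h2, h3, I, h4, h5, F, h6, h7, Or.inl ⟨P, h8⟩⟩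
end
end

section
/- Let N ≥ 2, Ω ⊆ ℝ^N an open set, and u ∈ L¹_loc(Ω, ℝ^N) satisfy the kinetic formulation. Let y, z ∈ Ω be two distinct Lebesgue points of u, with values u(y) and u(z) respectively, such that the closed segment [y, z] is contained in Ω, and let ξ ∈ S^{N−1} satisfy ξ·(z − y) = 0. Then: if u(y)·ξ > 0 then u(z)·ξ ≥ 0, and if u(y)·ξ < 0 then u(z)·ξ ≤ 0; moreover, in either case, y and z are Lebesgue points of χ(·, ξ) and the corresponding values satisfy χ(y, ξ) = χ(z, ξ). -/
open MeasureTheory Metric Set Filter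
open scoped RealInnerProductSpace ENNReal Topology

noncomputable section

lemma chi_nonneg {N : ℕ} (u : EuclideanSpace ℝ (Fin N) → EuclideanSpace ℝ (Fin N))
    (x ξ : EuclideanSpace ℝ (Fin N)) : 0 ≤ chi u x ξ := by
  unfold chi; split_ifs <;> norm_num

lemma chi_le_one {N : ℕ} (u : EuclideanSpace ℝ (Fin N) → EuclideanSpace ℝ (Fin N))
    (x ξ : EuclideanSpace ℝ (Fin N)) : chi u x ξ ≤ 1 := by
  unfold chi; split_ifs <;> norm_num

lemma chi_aesm {N : ℕ} {Ω : Set (EuclideanSpace ℝ (Fin N))}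
    {u : EuclideanSpace ℝ (Fin N) → EuclideanSpace ℝ (Fin N)}
    (hloc : LocallyIntegrableOn u Ω volume) (ξ : EuclideanSpace ℝ (Fin N)) :
    AEStronglyMeasurable (fun x => chi u x ξ) (volume.restrict Ω) := by
  have h1 : AEMeasurable u (volume.restrict Ω) := hloc.aestronglyMeasurable.aemeasurable
  have hm : Measurable (fun w : EuclideanSpace ℝ (Fin N) =>
      if 0 < ⟪w, ξ⟫ then (1 : ℝ) else 0) := by
    refine Measurable.ite ?_ measurable_const measurable_const
    exact measurableSet_lt measurable_const (by fun_prop)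
  exact (hm.comp_aemeasurable h1).aestronglyMeasurable

/-- Chebyshev step. -/
lemma lebesgue_chi {N : ℕ} {Ω : Set (EuclideanSpace ℝ (Fin N))} (hΩ : IsOpen Ω)
    {u : EuclideanSpace ℝ (Fin N) → EuclideanSpace ℝ (Fin N)}
    (hloc : LocallyIntegrableOn u Ω volume) {y : EuclideanSpace ℝ (Fin N)} (hyΩ : y ∈ Ω)
    {uy ξ : EuclideanSpace ℝ (Fin N)} (hy : IsLebesguePoint u y uy) (hξ : ‖ξ‖ = 1)
    (hne : ⟪uy, ξ⟫ ≠ 0) :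
    IsLebesguePoint (fun x => chi u x ξ) y (if 0 < ⟪uy, ξ⟫ then 1 else 0) := by
  obtain ⟨δ, hδ, hball⟩ := Metric.nhds_basis_closedBall.mem_iff.1 (hΩ.mem_nhds hyΩ)
  have hpos : 0 < |⟪uy, ξ⟫| := abs_pos.2 hne
  have key : ∀ x, ‖chi u x ξ - (if 0 < ⟪uy, ξ⟫ then 1 else 0)‖ ≤
      |⟪uy, ξ⟫|⁻¹ * ‖u x - uy‖ := by
    intro x
    have h1 : |⟪u x, ξ⟫ - ⟪uy, ξ⟫| ≤ ‖u x - uy‖ := by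
      have := abs_real_inner_le_norm (u x - uy) ξ
      rwa [hξ, mul_one, inner_sub_left] at this
    have h0 : 0 ≤ |⟪uy, ξ⟫|⁻¹ * ‖u x - uy‖ := by positivity
    have h2 : |⟪uy, ξ⟫| ≤ |⟪u x, ξ⟫ - ⟪uy, ξ⟫| → 1 ≤ |⟪uy, ξ⟫|⁻¹ * ‖u x - uy‖ := by
      intro h
      rw [inv_mul_eq_div, le_div_iff₀ hpos]
      linarith
    unfold chi
    split_ifs with ha hb hb
    · simpa using h0
    · have hb' : ⟪uy, ξ⟫ ≤ 0 := not_lt.1 hb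
      simpa using h2 (by rw [abs_of_nonpos hb', abs_of_nonneg (by linarith)]; linarith)
    · simpa using h2 (by
        have ha' := not_lt.1 ha
        rw [abs_of_pos hb, abs_of_nonpos (by linarith)]; linarith)
    · simpa using h0
  have hint : ∀ r, r < δ → IntegrableOn (fun x => ‖u x - uy‖) (ball y r) volume := by
    intro r hr
    have : IntegrableOn u (ball y r) volume :=
      (hloc.integrableOn_compact_subset hball (isCompact_closedBall y δ)).mono_set
        (ball_subset_closedBall.trans (closedBall_subset_closedBall hr.le))
    exact (this.sub (integrableOn_const (measure_ball_lt_top.ne))).norm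
  unfold IsLebesguePoint at hy ⊢
  have hlim := hy.const_mul (|⟪uy, ξ⟫|⁻¹)
  rw [mul_zero] at hlim
  refine squeeze_zero' (Eventually.of_forall fun r => ?_) ?_ hlim
  · rw [setAverage_eq]
    exact smul_nonneg (by positivity) (integral_nonneg fun x => norm_nonneg _)
  · filter_upwards [nhdsWithin_le_nhds (Iio_mem_nhds hδ)] with r hr
    rw [setAverage_eq, setAverage_eq, smul_eq_mul, smul_eq_mul, mul_left_comm]
    refine mul_le_mul_of_nonneg_left ?_ (by positivity)
    rw [← integral_const_mul]
    exact integral_mono_of_nonneg (Eventually.of_forall fun x => norm_nonneg _)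
      ((hint r hr).const_mul _) (Eventually.of_forall key)

lemma lebesgue_chi_unique {N : ℕ} {Ω : Set (EuclideanSpace ℝ (Fin N))} (hΩ : IsOpen Ω)
    {u : EuclideanSpace ℝ (Fin N) → EuclideanSpace ℝ (Fin N)}
    (hloc : LocallyIntegrableOn u Ω volume) {y : EuclideanSpace ℝ (Fin N)} (hyΩ : y ∈ Ω)
    {ξ : EuclideanSpace ℝ (Fin N)}
    (h1 : IsLebesguePoint (fun x => chi u x ξ) y 1)
    (h0 : IsLebesguePoint (fun x => chi u x ξ) y 0) : False := by
  obtain ⟨δ, hδ, hball⟩ := Metric.isOpen_iff.1 hΩ y hyΩ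
  unfold IsLebesguePoint at h1 h0
  have h := h1.add h0
  rw [add_zero] at h
  have h' : Tendsto (fun _ : ℝ => (1 : ℝ)) (𝓝[>] 0) (𝓝 0) := by
    refine h.congr' ?_
    filter_upwards [nhdsWithin_le_nhds (Iio_mem_nhds hδ), self_mem_nhdsWithin] with r hr hr0
    have hr0 : 0 < r := hr0
    have hi : IntegrableOn (fun x => chi u x ξ) (ball y r) volume := by
      refine Integrable.mono' (g := fun _ => (1:ℝ)) (integrableOn_const measure_ball_lt_top.ne)
        ((chi_aesm hloc ξ).mono_measure (Measure.restrict_mono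
          ((ball_subset_ball hr.le).trans hball) le_rfl)) ?_
      exact Eventually.of_forall fun x => by
        rw [Real.norm_eq_abs, abs_of_nonneg (chi_nonneg u x ξ)]; exact chi_le_one u x ξ
    have hc : ∀ c : ℝ, IntegrableOn (fun x => ‖chi u x ξ - c‖) (ball y r) volume := fun c =>
      (hi.sub (integrableOn_const (measure_ball_lt_top.ne))).norm
    rw [setAverage_eq, setAverage_eq, ← smul_add, ← integral_add (hc 1) (hc 0)]
    have : ∀ x, ‖chi u x ξ - 1‖ + ‖chi u x ξ - 0‖ = 1 := by
      intro x; unfold chi; split_ifs <;> simp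
    simp only [this]
    have hv : volume.real (ball y r) ≠ 0 := by
      have := measure_ball_pos volume y hr0
      exact (ENNReal.toReal_pos this.ne' measure_ball_lt_top.ne).ne'
    simp [hv]
  exact one_ne_zero (tendsto_nhds_unique tendsto_const_nhds h')

lemma chi_transl {N : ℕ} {Ω : Set (EuclideanSpace ℝ (Fin N))} (hΩ : IsOpen Ω)
    {u : EuclideanSpace ℝ (Fin N) → EuclideanSpace ℝ (Fin N)}
    (hloc : LocallyIntegrableOn u Ω volume) (hkin : KineticFormulation Ω u)
    {z v ξ : EuclideanSpace ℝ (Fin N)} (hξ : ‖ξ‖ = 1) (hv : ⟪v, ξ⟫ = 0) {δ : ℝ}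
    (hδ : ∀ t ∈ Icc (0:ℝ) 1, ball (z - t • v) δ ⊆ Ω)
    (φ : EuclideanSpace ℝ (Fin N) → ℝ) (hφ : ContDiff ℝ (⊤ : ℕ∞) φ) (hc : HasCompactSupport φ)
    (hs : tsupport φ ⊆ ball z δ) :
    ∫ x in Ω, chi u x ξ * φ (x + v) = ∫ x in Ω, chi u x ξ * φ x := by
  have hφ1 : Differentiable ℝ φ := hφ.differentiable (by simp)
  have hdc : Continuous (fderiv ℝ φ) := hφ.continuous_fderiv (by simp)
  have hdcs : HasCompactSupport (fderiv ℝ φ) := hc.fderiv ℝ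
  obtain ⟨C, hC⟩ := hdc.bounded_above_of_compact_support hdcs
  have hchi := chi_aesm hloc ξ
  have hgrad : ∀ (t : ℝ) x, HasFDerivAt (fun x => φ (x + t • v)) (fderiv ℝ φ (x + t • v)) x := by
    intro t x
    have := (hφ1 (x + t • v)).hasFDerivAt.comp x ((hasFDerivAt_id x).add_const (t • v))
    simpa [Function.comp_def] using this
  set K : Set (EuclideanSpace ℝ (Fin N)) := closedBall z (δ + 3 * ‖v‖) with hK
  have hout : ∀ t ∈ ball (0:ℝ) 3, ∀ x, x ∉ K → x + t • v ∉ tsupport φ := by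
    intro t ht x hx hmem
    apply hx
    have h1 := hs hmem
    rw [mem_ball, dist_eq_norm] at h1
    rw [mem_ball_zero_iff, Real.norm_eq_abs] at ht
    rw [hK, mem_closedBall, dist_eq_norm]
    have h2 : x - z = (x + t • v - z) - t • v := by abel
    have h3 : ‖t • v‖ ≤ 3 * ‖v‖ := by
      rw [norm_smul, Real.norm_eq_abs]
      exact mul_le_mul_of_nonneg_right ht.le (norm_nonneg _)
    rw [h2]
    linarith [norm_sub_le (x + t • v - z) (t • v)]
  have hbint : Integrable (K.indicator fun _ => C * ‖v‖) (volume.restrict Ω) := by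
    refine Integrable.restrict ?_
    rw [integrable_indicator_iff measurableSet_closedBall]
    exact integrableOn_const measure_closedBall_lt_top.ne
  have hmeas : ∀ t : ℝ, AEStronglyMeasurable (fun x => chi u x ξ * φ (x + t • v))
      (volume.restrict Ω) := fun t =>
    hchi.mul (Continuous.aestronglyMeasurable (hφ.continuous.comp (by fun_prop)))
  have habs : ∀ x, |chi u x ξ| ≤ 1 := fun x => by
    rw [abs_of_nonneg (chi_nonneg u x ξ)]; exact chi_le_one u x ξ
  have hder : ∀ t ∈ Icc (0:ℝ) 1, HasDerivAt
      (fun t : ℝ => ∫ x in Ω, chi u x ξ * φ (x + t • v)) 0 t := by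
    intro t ht
    have hz : ∫ x in Ω, chi u x ξ * fderiv ℝ φ (x + t • v) v = 0 := by
      have := hkin ξ hξ v hv (fun x => φ (x + t • v))
        (hφ.comp (contDiff_id.add contDiff_const))
        (hc.comp_homeomorph (Homeomorph.addRight (t • v))) ?_
      · rw [← this]
        refine integral_congr_ae (Eventually.of_forall fun x => ?_)
        simp only
        rw [real_inner_comm, inner_gradient_left, (hgrad t x).fderiv]
      · intro x hx
        have hx' : x + t • v ∈ tsupport φ := by
          have h := tsupport_comp_subset_preimage φ (f := fun x => x + t • v) (by fun_prop)
          exact h hx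
        have := hs hx'
        apply hδ t ht
        rw [mem_ball, dist_eq_norm] at this ⊢
        convert this using 2
        abel
    rw [← hz]
    have ht3 : ball (0:ℝ) 3 ∈ 𝓝 t := isOpen_ball.mem_nhds (by
      rw [mem_ball_zero_iff, Real.norm_eq_abs, abs_of_nonneg ht.1]; linarith [ht.2])
    refine (hasDerivAt_integral_of_dominated_loc_of_deriv_le
      (F' := fun t x => chi u x ξ * fderiv ℝ φ (x + t • v) v)
      (bound := K.indicator fun _ => C * ‖v‖) ht3 (Eventually.of_forall hmeas) ?_ ?_ ?_ hbint ?_).2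
    · have hi : Integrable (fun x => φ (x + t • v)) (volume.restrict Ω) :=
        (Continuous.integrable_of_hasCompactSupport (hφ.continuous.comp (by fun_prop))
          (hc.comp_homeomorph (Homeomorph.addRight (t • v)))).restrict
      exact hi.bdd_mul (c := 1) hchi (Eventually.of_forall fun x => habs x)
    · exact hchi.mul (Continuous.aestronglyMeasurable
        ((hdc.comp (by fun_prop)).clm_apply continuous_const))
    · refine Eventually.of_forall fun x s hs' => ?_
      by_cases hx : x ∈ K
      · rw [indicator_of_mem hx, norm_mul]
        calc ‖chi u x ξ‖ * ‖fderiv ℝ φ (x + s • v) v‖ ≤ 1 * (C * ‖v‖) := by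
              gcongr
              · exact habs x
              · exact (ContinuousLinearMap.le_opNorm _ _).trans (by gcongr; exact hC _)
          _ = _ := one_mul _
      · rw [indicator_of_notMem hx]
        have : fderiv ℝ φ (x + s • v) = 0 := by
          by_contra hne
          exact hout s hs' x hx (support_fderiv_subset ℝ hne)
        simp [this]
    · refine Eventually.of_forall fun x s hs' => ?_
      refine HasDerivAt.const_mul _ ?_
      have h1 : HasDerivAt (fun s : ℝ => x + s • v) v s := by
        simpa using ((hasDerivAt_id s).smul_const v).const_add x
      exact (hφ1 (x + s • v)).hasFDerivAt.comp_hasDerivAt s h1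
  have := constant_of_has_deriv_right_zero
    (f := fun t : ℝ => ∫ x in Ω, chi u x ξ * φ (x + t • v)) (a := 0) (b := 1)
    (fun t ht => (hder t ht).continuousAt.continuousWithinAt)
    (fun t ht => (hder t ⟨ht.1, ht.2.le⟩).hasDerivWithinAt) 1 (by simp)
  simpa using this

lemma chi_ae {N : ℕ} {Ω : Set (EuclideanSpace ℝ (Fin N))} (hΩ : IsOpen Ω)
    {u : EuclideanSpace ℝ (Fin N) → EuclideanSpace ℝ (Fin N)}
    (hloc : LocallyIntegrableOn u Ω volume) (hkin : KineticFormulation Ω u)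
    {z v ξ : EuclideanSpace ℝ (Fin N)} (hξ : ‖ξ‖ = 1) (hv : ⟪v, ξ⟫ = 0) {δ : ℝ}
    (hδ : ∀ t ∈ Icc (0:ℝ) 1, ball (z - t • v) δ ⊆ Ω) :
    ∀ᵐ x, x ∈ ball z δ → chi u x ξ = chi u (x - v) ξ := by
  set g : EuclideanSpace ℝ (Fin N) → ℝ := Ω.indicator fun x => chi u x ξ with hg
  have hgm : AEStronglyMeasurable g volume :=
    (aestronglyMeasurable_indicator_iff hΩ.measurableSet).2 (chi_aesm hloc ξ)
  have hgb : ∀ x, ‖g x‖ ≤ 1 := fun x => by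
    refine (norm_indicator_le_norm_self _ x).trans ?_
    rw [Real.norm_eq_abs, abs_of_nonneg (chi_nonneg u x ξ)]; exact chi_le_one u x ξ
  have hgm' : AEStronglyMeasurable (fun x => g (x - v)) volume :=
    hgm.comp_measurePreserving (measurePreserving_sub_right volume v)
  have hli : LocallyIntegrable g volume := by
    refine (locallyIntegrable_const (1:ℝ)).mono hgm (Eventually.of_forall fun x => ?_)
    simpa using hgb x
  have hli' : LocallyIntegrable (fun x => g (x - v)) volume := by
    refine (locallyIntegrable_const (1:ℝ)).mono hgm' (Eventually.of_forall fun x => ?_)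
    simpa using hgb (x - v)
  have := isOpen_ball.ae_eq_zero_of_integral_contDiff_smul_eq_zero (U := ball z δ) (μ := volume)
    (f := fun x => g x - g (x - v)) ((hli.sub hli').locallyIntegrableOn _) ?_
  · filter_upwards [this] with x hx hxb
    have h := hx hxb
    have h0 : x ∈ Ω := hδ 0 (by simp) (by simpa using hxb)
    have h1 : x - v ∈ Ω := hδ 1 (by simp) (by
      rw [mem_ball, dist_eq_norm] at hxb ⊢
      convert hxb using 2
      rw [one_smul]; abel)
    rw [hg, indicator_of_mem h0, indicator_of_mem h1] at h
    linarith
  · intro φ hφ hc hs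
    have key := chi_transl hΩ hloc hkin hξ hv hδ φ hφ hc hs
    rw [← integral_indicator hΩ.measurableSet, ← integral_indicator hΩ.measurableSet] at key
    have e1 : ∀ ψ : EuclideanSpace ℝ (Fin N) → ℝ, (Ω.indicator fun x => chi u x ξ * ψ x)
        = fun x => g x * ψ x := by
      intro ψ; ext x; by_cases h : x ∈ Ω <;> simp [hg, h]
    rw [e1 (fun x => φ (x + v)), e1 φ] at key
    have hφi : Integrable φ volume := hφ.continuous.integrable_of_hasCompactSupport hc
    have i1 : Integrable (fun x => g x * φ x) volume :=
      hφi.bdd_mul (c := 1) hgm (Eventually.of_forall hgb)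
    have i2 : Integrable (fun x => g (x - v) * φ x) volume :=
      hφi.bdd_mul (c := 1) hgm' (Eventually.of_forall fun x => hgb _)
    have e2 := integral_sub_right_eq_self (μ := volume) (fun x => g x * φ (x + v)) v
    simp only [sub_add_cancel] at e2
    calc ∫ x, φ x • (g x - g (x - v)) = ∫ x, (g x * φ x - g (x - v) * φ x) := by
          congr 1; ext x; simp only [smul_eq_mul]; ring
      _ = 0 := by rw [integral_sub i1 i2, e2, key, sub_self]

lemma transfer {N : ℕ} {f : EuclideanSpace ℝ (Fin N) → ℝ}
    {y z : EuclideanSpace ℝ (Fin N)} {δ : ℝ} (hδ : 0 < δ)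
    (h : ∀ᵐ x, x ∈ ball z δ → f x = f (x - (z - y))) {a : ℝ} (hy : IsLebesguePoint f y a) :
    IsLebesguePoint f z a := by
  unfold IsLebesguePoint at hy ⊢
  refine hy.congr' ?_
  filter_upwards [nhdsWithin_le_nhds (Iio_mem_nhds hδ)] with r hr
  rw [setAverage_eq, setAverage_eq]
  congr 1
  · simp only [Measure.real]
    rw [Measure.addHaar_ball_center, Measure.addHaar_ball_center volume z]
  · rw [← integral_indicator measurableSet_ball, ← integral_indicator measurableSet_ball,
      ← integral_sub_right_eq_self (μ := volume) _ (z - y)]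
    refine integral_congr_ae ?_
    filter_upwards [h] with x hx
    have hiff : x - (z - y) ∈ ball y r ↔ x ∈ ball z r := by
      rw [mem_ball, mem_ball, dist_eq_norm, dist_eq_norm,
        show x - (z - y) - y = x - z by abel]
    by_cases hb : x ∈ ball z r
    · rw [indicator_of_mem (hiff.2 hb), indicator_of_mem hb,
        hx (ball_subset_ball (le_of_lt hr) hb)]
    · rw [indicator_of_notMem (fun h => hb (hiff.1 h)), indicator_of_notMem hb]

theorem ordering_of_level_sets (N : ℕ) (hN : 2 ≤ N)
    (Ω : Set (EuclideanSpace ℝ (Fin N))) (hΩ : IsOpen Ω)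
    (u : EuclideanSpace ℝ (Fin N) → EuclideanSpace ℝ (Fin N))
    (hloc : LocallyIntegrableOn u Ω volume)
    (hkin : KineticFormulation Ω u)
    (y z : EuclideanSpace ℝ (Fin N)) (hyz : y ≠ z) (hseg : segment ℝ y z ⊆ Ω)
    (uy uz : EuclideanSpace ℝ (Fin N))
    (hy : IsLebesguePoint u y uy) (hz : IsLebesguePoint u z uz)
    (ξ : EuclideanSpace ℝ (Fin N)) (hξ : ‖ξ‖ = 1) (hperp : ⟪ξ, z - y⟫ = 0) :
    (0 < ⟪uy, ξ⟫ → 0 ≤ ⟪uz, ξ⟫) ∧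
    (⟪uy, ξ⟫ < 0 → ⟪uz, ξ⟫ ≤ 0) ∧
    (⟪uy, ξ⟫ ≠ 0 → ∃ a : ℝ, IsLebesguePoint (fun x => chi u x ξ) y a ∧
      IsLebesguePoint (fun x => chi u x ξ) z a) := by
  have hyΩ : y ∈ Ω := hseg (left_mem_segment ℝ y z)
  have hzΩ : z ∈ Ω := hseg (right_mem_segment ℝ y z)
  have hv : ⟪z - y, ξ⟫ = 0 := by rw [real_inner_comm]; exact hperp
  have hcomp : IsCompact (segment ℝ y z) := by
    rw [segment_eq_image_lineMap]
    exact isCompact_Icc.image AffineMap.lineMap_continuous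
  obtain ⟨δ, hδ, hth⟩ := hcomp.exists_thickening_subset_open hΩ hseg
  have hball : ∀ t ∈ Icc (0:ℝ) 1, ball (z - t • (z - y)) δ ⊆ Ω := by
    intro t ht
    refine (ball_subset_thickening ?_ δ).trans hth
    refine ⟨t, 1 - t, ht.1, by linarith [ht.2], by ring, ?_⟩
    rw [sub_smul, one_smul, smul_sub]; abel
  have hae := chi_ae hΩ hloc hkin hξ hv hball
  have hmain : ⟪uy, ξ⟫ ≠ 0 →
      IsLebesguePoint (fun x => chi u x ξ) z (if 0 < ⟪uy, ξ⟫ then 1 else 0) := fun hne =>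
    transfer hδ hae (lebesgue_chi hΩ hloc hyΩ hy hξ hne)
  refine ⟨fun hp => ?_, fun hn => ?_, fun hne => ⟨_, lebesgue_chi hΩ hloc hyΩ hy hξ hne, hmain hne⟩⟩
  · by_contra! hlt
    have h1 := hmain hp.ne'
    have h0 := lebesgue_chi hΩ hloc hzΩ hz hξ hlt.ne
    rw [if_pos hp] at h1
    rw [if_neg hlt.not_gt] at h0
    exact lebesgue_chi_unique hΩ hloc hzΩ h1 h0
  · by_contra! hlt
    have h0 := hmain hn.ne
    have h1 := lebesgue_chi hΩ hloc hzΩ hz hξ hlt.ne'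
    rw [if_neg hn.not_gt] at h0
    rw [if_pos hlt] at h1
    exact lebesgue_chi_unique hΩ hloc hzΩ h1 h0
end
end
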